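/- arXiv:1910.00173 — 3 statements merged into one kernel-verified Lean document; each statement's English description precedes it below -/
import Mathlib

section
/- There is an absolute constant C such that for every α ∈ (0, 1/1000] and all twice continuously differentiable Ω, ξ with compact support contained in (0,∞)×(0,π/2): ⟨L₃(Ω,ξ), ξ ψ₁⟩ ≤ (−1/3 + Cα) ‖ξ ψ₁^{1/2}‖₂² + Cα (L₁₂(Ω)(0)² + ‖L̃₁₂(Ω)/R‖²_{L²(R)}), and ⟨D_β L₃(Ω,ξ), (D_β ξ) ψ₂⟩ ≤ (−1/3 + Cα) ‖(D_β ξ) ψ₂^{1/2}‖₂² + Cα (L₁₂(Ω)(0)² + ‖L̃₁₂(Ω)/R‖²_{L²(R)}). -/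
open Real MeasureTheory Set

noncomputable section

namespace Paper

/-- The domain `(0,∞) × (0,π/2)` in the `(R,β)` variables. -/
def Qdom : Set (ℝ × ℝ) := Set.Ioi (0:ℝ) ×ˢ Set.Ioo (0:ℝ) (Real.pi/2)

/-- Inner product `⟨f,g⟩ = ∫₀^∞ ∫₀^{π/2} f g dβ dR`. -/
def inner2 (f g : ℝ → ℝ → ℝ) : ℝ :=
  ∫ R in Set.Ioi (0:ℝ), ∫ β in Set.Ioo (0:ℝ) (Real.pi/2), f R β * g R β

/-- The `L²` norm `‖f‖₂`. -/
def norm2 (f : ℝ → ℝ → ℝ) : ℝ := Real.sqrt (inner2 f f)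

/-- `‖h‖_{L²(R)}` for functions of `R` alone. -/
def normR (h : ℝ → ℝ) : ℝ := Real.sqrt (∫ R in Set.Ioi (0:ℝ), (h R)^2)

/-- `D_R = R ∂_R`. -/
def DR (f : ℝ → ℝ → ℝ) : ℝ → ℝ → ℝ := fun R β => R * deriv (fun r => f r β) R

/-- `D_R` for functions of `R` alone. -/
def DR1 (h : ℝ → ℝ) : ℝ → ℝ := fun R => R * deriv h R

/-- `D_β = sin(2β) ∂_β`. -/
def Dbeta (f : ℝ → ℝ → ℝ) : ℝ → ℝ → ℝ :=
  fun R β => Real.sin (2*β) * deriv (fun b => f R b) β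

/-- `L₁₂(Ω)(R) = ∫_R^∞ ∫₀^{π/2} Ω(s,β) sin(2β) s⁻¹ dβ ds`. -/
def L12 (Ω : ℝ → ℝ → ℝ) (R : ℝ) : ℝ :=
  ∫ s in Set.Ioi R, ∫ β in Set.Ioo (0:ℝ) (Real.pi/2), Ω s β * Real.sin (2*β) / s

/-- `L̃₁₂(Ω)(R) = L₁₂(Ω)(R) − L₁₂(Ω)(0)`. -/
def tL12 (Ω : ℝ → ℝ → ℝ) (R : ℝ) : ℝ := L12 Ω R - L12 Ω 0

/-- Compact support contained in the open domain `(0,∞)×(0,π/2)`. -/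
def suppIn (f : ℝ → ℝ → ℝ) : Prop :=
  ∃ K : Set (ℝ × ℝ), IsCompact K ∧ K ⊆ Qdom ∧ ∀ x y : ℝ, (x, y) ∉ K → f x y = 0

/-- Integrability over the domain. -/
def Integrable2 (f : ℝ → ℝ → ℝ) : Prop :=
  MeasureTheory.IntegrableOn (Function.uncurry f) Qdom

/-- `Γ(β) = (cos β)^α`. -/
def Γf (α : ℝ) (β : ℝ) : ℝ := Real.cos β ^ α

/-- The normalizing constant `c = (2/π)∫₀^{π/2} Γ(β) sin(2β) dβ`. -/
def cst (α : ℝ) : ℝ :=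
  (2/Real.pi) * ∫ β in Set.Ioo (0:ℝ) (Real.pi/2), Γf α β * Real.sin (2*β)

/-- The approximate profile `Ω̄`. -/
def Ωbar (α : ℝ) : ℝ → ℝ → ℝ := fun R β => (α / cst α) * Γf α β * (3*R/(1+R)^2)

/-- The approximate profile `η̄`. -/
def ηbar (α : ℝ) : ℝ → ℝ → ℝ := fun R β => (α / cst α) * Γf α β * (6*R/(1+R)^3)

/-- The singular weight `φ₁ = (1+R)⁴R⁻⁴ sin(2β)^{-σ}`, `σ = 99/100`. -/
def phi1 : ℝ → ℝ → ℝ := fun R β => (1+R)^4 / R^4 * Real.sin (2*β) ^ (-(99/100 : ℝ))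

/-- The singular weight `φ₂ = (1+R)⁴R⁻⁴ sin(2β)^{-γ}`, `γ = 1 + α/10`. -/
def phi2 (α : ℝ) : ℝ → ℝ → ℝ := fun R β => (1+R)^4 / R^4 * Real.sin (2*β) ^ (-(1 + α/10))

/-- The singular weight `ψ₁ = (1+R)⁴R⁻⁴ (sin β cos β)^{-σ}`. -/
def psi1 : ℝ → ℝ → ℝ := fun R β =>
  (1+R)^4 / R^4 * (Real.sin β * Real.cos β) ^ (-(99/100 : ℝ))

/-- The singular weight `ψ₂ = (1+R)⁴R⁻⁴ (sin β)^{-σ}(cos β)^{-γ}`. -/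
def psi2 (α : ℝ) : ℝ → ℝ → ℝ := fun R β =>
  (1+R)^4 / R^4 * Real.sin β ^ (-(99/100 : ℝ)) * Real.cos β ^ (-(1 + α/10))

/-- `c_ω = −(2/(πα)) L₁₂(Ω)(0)`. -/
def cω (α : ℝ) (Ω : ℝ → ℝ → ℝ) : ℝ := -(2/(Real.pi*α)) * L12 Ω 0

/-- The linearized operator `L₁`. -/
def opL1 (α : ℝ) (Ω η : ℝ → ℝ → ℝ) : ℝ → ℝ → ℝ := fun R β =>
  - DR Ω R β - (3/(1+R)) * Dbeta Ω R β - Ω R β + η R β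
  + cω α Ω * (Ωbar α R β - DR (Ωbar α) R β)

/-- The linearized operator `L₂`. -/
def opL2 (α : ℝ) (Ω η : ℝ → ℝ → ℝ) : ℝ → ℝ → ℝ := fun R β =>
  - DR η R β - (3/(1+R)) * Dbeta η R β + (-2 + 3/(1+R)) * η R β
  + (2/(Real.pi*α)) * tL12 Ω R * ηbar α R β
  + cω α Ω * (ηbar α R β - DR (ηbar α) R β)

/-- `ξ̄` in Cartesian variables. -/
def ξbarC (α : ℝ) (x y : ℝ) : ℝ :=
  -(18*α^2 / cst α) * ∫ z in Set.Ioo (0:ℝ) x,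
      (y/(y^2+z^2)) * (z ^ α * (z^2+y^2) ^ (α/2) / (1 + (z^2+y^2) ^ (α/2))^4)

/-- `ξ̄` in the `(R,β)` variables, via `x = R^{1/α} cos β`, `y = R^{1/α} sin β`. -/
def ξbar (α : ℝ) : ℝ → ℝ → ℝ := fun R β =>
  ξbarC α (R ^ (1/α) * Real.cos β) (R ^ (1/α) * Real.sin β)

/-- The linearized operator `L₃`. -/
def opL3 (α : ℝ) (Ω ξ : ℝ → ℝ → ℝ) : ℝ → ℝ → ℝ := fun R β =>
  - DR ξ R β - (3/(1+R)) * Dbeta ξ R β + (-2 - 3/(1+R)) * ξ R β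
  - (2/(Real.pi*α)) * tL12 Ω R * ξbar α R β
  + cω α Ω * (3 * ξbar α R β - DR (ξbar α) R β)

/-- Weighted Sobolev norm `H^m` with radial weight `w1` and angular weight `w2`:
`‖f‖ = Σ_{0≤k≤m} ‖(D_R^k f)√w1‖₂ + Σ_{i+j≤m−1} ‖(D_R^i D_β^{j+1} f)√w2‖₂`. -/
def Hnorm (m : ℕ) (w1 w2 : ℝ → ℝ → ℝ) (f : ℝ → ℝ → ℝ) : ℝ :=
  (∑ k ∈ Finset.range (m+1),
    norm2 (fun R β => DR^[k] f R β * Real.sqrt (w1 R β)))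
  + ∑ p ∈ (Finset.range (m+1) ×ˢ Finset.range (m+1)).filter
      (fun p => p.1 + p.2 + 1 ≤ m),
      norm2 (fun R β => DR^[p.1] (Dbeta^[p.2+1] f) R β * Real.sqrt (w2 R β))

/-- Sup of `|f|` over the domain `(0,∞)×(0,π/2)`. -/
def supDom (f : ℝ → ℝ → ℝ) : ℝ :=
  ⨆ (R : Set.Ioi (0:ℝ)) (β : Set.Ioo (0:ℝ) (Real.pi/2)), |f R.1 β.1|

/-- The weighted `C¹` norm. -/
def C1norm (α : ℝ) (f : ℝ → ℝ → ℝ) : ℝ :=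
  supDom f + supDom (fun R β => (1+R)/R * DR f R β)
  + supDom (fun R β =>
      (1 + (R * Real.sin (2*β) ^ α) ^ (-(1/40 : ℝ))) * Dbeta f R β)

/-- Boundedness of `f` on the domain. -/
def BddDom (f : ℝ → ℝ → ℝ) : Prop :=
  ∃ M : ℝ, ∀ R ∈ Set.Ioi (0:ℝ), ∀ β ∈ Set.Ioo (0:ℝ) (Real.pi/2), |f R β| ≤ M

/-- Finiteness of the weighted `C¹` norm. -/
def C1Fin (α : ℝ) (f : ℝ → ℝ → ℝ) : Prop :=
  BddDom f ∧ BddDom (fun R β => (1+R)/R * DR f R β) ∧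
  BddDom (fun R β => (1 + (R * Real.sin (2*β) ^ α) ^ (-(1/40 : ℝ))) * Dbeta f R β)

/-- The weighted `W^{l,∞}` norm. -/
def Wnorm (α : ℝ) (l : ℕ) (f : ℝ → ℝ → ℝ) : ℝ :=
  (∑ k ∈ Finset.range (l+1), supDom (DR^[k] f))
  + ∑ p ∈ (Finset.range (l+1) ×ˢ Finset.range (l+1)).filter
      (fun p => p.1 + p.2 ≤ l ∧ 1 ≤ p.2),
      supDom (fun R β => Real.sin (2*β) ^ (-(α/5)) *
        DR^[p.1] (fun R' β' => Dbeta^[p.2] f R' β' / (α/10 + Real.sin (2*β'))) R β)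

/-- Finiteness of the `W^{l,∞}` norm. -/
def WFin (α : ℝ) (l : ℕ) (f : ℝ → ℝ → ℝ) : Prop :=
  (∀ k ≤ l, BddDom (DR^[k] f)) ∧
  ∀ k j : ℕ, k + j ≤ l → 1 ≤ j →
    BddDom (fun R β => Real.sin (2*β) ^ (-(α/5)) *
      DR^[k] (fun R' β' => Dbeta^[j] f R' β' / (α/10 + Real.sin (2*β'))) R β)

/-- `I(f)(x,y) = ∫₀ˣ f(z,y)/z dz`. -/
def Ifun (f : ℝ → ℝ → ℝ) : ℝ → ℝ → ℝ := fun x y => ∫ z in Set.Ioo (0:ℝ) x, f z y / z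

/-- `D_S g = (1/α)(z ∂_z g + y ∂_y g)` in Cartesian variables. -/
def DScart (α : ℝ) (g : ℝ → ℝ → ℝ) : ℝ → ℝ → ℝ := fun a b =>
  (1/α) * (a * deriv (fun a' => g a' b) a + b * deriv (fun b' => g a b') b)

/-- `D_τ g = 2y ∂_y g − 2α (y²/(y²+z²)) D_S g` in Cartesian variables. -/
def DTcart (α : ℝ) (g : ℝ → ℝ → ℝ) : ℝ → ℝ → ℝ := fun a b =>
  2*b * deriv (fun b' => g a b') b - 2*α*(b^2/(b^2+a^2)) * DScart α g a b

/-!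
In the variable `t = z / y`, `ξ̄` becomes a multiple of an angular transform of the radial profile
`u ↦ u² / (1 + u)⁴`: an integral over `0 < t < cot β` that involves `R` only through dilations of
the profile. The transform therefore commutes with `D_R`, and `3 ξ̄ - D_R ξ̄` is the transform of
another profile of the same size; because `c = 4 / (π (α + 2))`, the prefactors combine to
`18 α² / c · 2 / (π α) = 9 α (α + 2)`. Hence `L₃` is a local transport operator acting on `ξ` plus a
forcing of size `O(α)`, linear in `L̃₁₂(Ω)(R)` and `L₁₂(Ω)(0)`.

Integrating the transport operator by parts against the weight leaves a damping of at least `3/2`.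
Both transforms are bounded by `R² (1 + R)⁻³ (sin β)^(-α)`, so that their weighted squares are
integrable in `β` and decay in `R`, and Young's inequality absorbs the forcing. As `D_β` commutes
with the transport operator, the same argument applies to `D_β ξ`; the stronger singularity
`(cos β)^(-γ)` of `ψ₂` is compensated by the factor `cos β` that `D_β` produces on the transforms.
-/

/-! ### Differentiation of parametric integrals -/

section ParametricIntegral

variable {E : Type*} [NormedAddCommGroup E] [NormedSpace ℝ E] {f f' : ℝ → ℝ → E}

theorem hasDerivAt_intervalIntegral_of_continuous (hf : Continuous (Function.uncurry f))
    (hf' : Continuous (Function.uncurry f')) (hd : ∀ x t, HasDerivAt (f · t) (f' x t) x)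
    (a b x : ℝ) : HasDerivAt (fun x ↦ ∫ t in a..b, f x t) (∫ t in a..b, f' x t) x := by
  obtain ⟨M, hM⟩ := ((isCompact_closedBall x 1).prod isCompact_uIcc).exists_bound_of_continuousOn
    (hf'.continuousOn (s := Metric.closedBall x 1 ×ˢ uIcc a b))
  refine (intervalIntegral.hasDerivAt_integral_of_dominated_loc_of_deriv_le
    (bound := fun _ ↦ M) (Metric.closedBall_mem_nhds x one_pos)
    (.of_forall fun y ↦ (hf.uncurry_left y).aestronglyMeasurable)
    ((hf.uncurry_left x).intervalIntegrable a b) (hf'.uncurry_left x).aestronglyMeasurable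
    (.of_forall fun t ht y hy ↦ hM (y, t) ⟨hy, uIoc_subset_uIcc ht⟩)
    intervalIntegrable_const (.of_forall fun t _ y _ ↦ hd y t)).2

variable [CompleteSpace E]

theorem hasStrictFDerivAt_intervalIntegral (hf : Continuous (Function.uncurry f))
    (hf' : Continuous (Function.uncurry f')) (hd : ∀ x t, HasDerivAt (f · t) (f' x t) x)
    (a : ℝ) (p : ℝ × ℝ) :
    HasStrictFDerivAt (fun q : ℝ × ℝ ↦ ∫ t in a..q.2, f q.1 t)
      ((ContinuousLinearMap.toSpanSingleton ℝ (∫ t in a..p.2, f' p.1 t)).coprod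
        (ContinuousLinearMap.toSpanSingleton ℝ (f p.1 p.2))) p := by
  have hspan : Continuous (ContinuousLinearMap.toSpanSingleton ℝ : E → ℝ →L[ℝ] E) :=
    (ContinuousLinearMap.toSpanSingletonCLE (𝕜 := ℝ) (E := E)).continuous
  have hint : Continuous fun q : ℝ × ℝ ↦ ∫ t in a..q.2, f' q.1 t :=
    intervalIntegral.continuous_parametric_intervalIntegral_of_continuous
      (f := fun (q : ℝ × ℝ) t ↦ f' q.1 t)
      (hf'.comp (by fun_prop : Continuous fun q : (ℝ × ℝ) × ℝ ↦ (q.1.1, q.2))) continuous_snd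
  exact hasStrictFDerivAt_uncurry_coprod (𝕜 := ℝ) (f := fun x b ↦ ∫ t in a..b, f x t)
    (f₁ := fun x b ↦ ContinuousLinearMap.toSpanSingleton ℝ (∫ t in a..b, f' x t))
    (f₂ := fun x b ↦ ContinuousLinearMap.toSpanSingleton ℝ (f x b))
    (.of_forall fun q ↦
      (hasDerivAt_intervalIntegral_of_continuous hf hf' hd a q.2 q.1).hasFDerivAt)
    (.of_forall fun q ↦
      ((hf.uncurry_left q.1).integral_hasStrictDerivAt a q.2).hasDerivAt.hasFDerivAt)
    (hspan.comp hint).continuousAt (hspan.comp hf).continuousAt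

theorem hasDerivAt_intervalIntegral_of_hasDerivAt_limit (hf : Continuous (Function.uncurry f))
    (hf' : Continuous (Function.uncurry f')) (hd : ∀ x t, HasDerivAt (f · t) (f' x t) x)
    {a τ' b' x : ℝ} {τ b : ℝ → ℝ} (hτ : HasDerivAt τ τ' x) (hb : HasDerivAt b b' x) :
    HasDerivAt (fun y ↦ ∫ t in a..b y, f (τ y) t)
      (τ' • (∫ t in a..b x, f' (τ x) t) + b' • f (τ x) (b x)) x := by
  refine ((hasStrictFDerivAt_intervalIntegral hf hf' hd a (τ x, b x)).hasFDerivAt.comp_hasDerivAt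
    x (hτ.prodMk hb)).congr_deriv ?_
  simp

end ParametricIntegral

/-! ### The angular transform of a radial profile -/

/-- The kernel of `angularTransform`. -/
def angularKernel (α t : ℝ) : ℝ := t ^ α * (1 + t ^ 2) ^ (-(α / 2)) / (1 + t ^ 2)

/-- The angular transform of a radial profile `f`: the integral over the horizontal segment from
`(0, y)` to the point of coordinates `(R, β)` of `y / (y² + z²) · (z / ρ)^α · f (ρ^α)`, where
`ρ² = y² + z²`, written in the variable `t = z / y`. The profile `ξ̄` is a multiple of the
transform of `u² / (1 + u)⁴`. -/
def angularTransform (α : ℝ) (f : ℝ → ℝ) (R β : ℝ) : ℝ :=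
  ∫ t in 0..cos β / sin β, angularKernel α t * f (R * sin β ^ α * (1 + t ^ 2) ^ (α / 2))

lemma sin_pos_of_mem_quadrant {β : ℝ} (hβ : β ∈ Ioo 0 (π / 2)) : 0 < sin β :=
  sin_pos_of_pos_of_lt_pi hβ.1 (by linarith [hβ.2, pi_pos])

lemma cos_pos_of_mem_quadrant {β : ℝ} (hβ : β ∈ Ioo 0 (π / 2)) : 0 < cos β :=
  cos_pos_of_mem_Ioo ⟨by linarith [hβ.1, pi_pos], hβ.2⟩

lemma one_add_cot_sq {β : ℝ} (hs : sin β ≠ 0) : 1 + (cos β / sin β) ^ 2 = (sin β ^ 2)⁻¹ := by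
  field_simp
  exact sin_sq_add_cos_sq β

lemma sq_rpow_half {x : ℝ} (hx : 0 ≤ x) (α : ℝ) : (x ^ 2) ^ (α / 2) = x ^ α := by
  rw [← rpow_natCast, ← rpow_mul hx]
  congr 1
  push_cast
  ring

section AngularKernel

variable {α : ℝ}

lemma continuous_angularKernel (hα : 0 ≤ α) : Continuous (angularKernel α) := by
  have h (t : ℝ) : 1 + t ^ 2 ≠ 0 := by positivity
  exact ((continuous_id.rpow_const fun _ ↦ .inr hα).mul
    (Continuous.rpow_const (by fun_prop) fun t ↦ .inl (h t))).div (by fun_prop) h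

lemma abs_angularKernel_le {t : ℝ} (hα : 0 ≤ α) (ht : 0 ≤ t) :
    |angularKernel α t| ≤ (1 + t ^ 2)⁻¹ := by
  have h : 0 < 1 + t ^ 2 := by positivity
  rw [angularKernel, abs_of_nonneg (by positivity), div_eq_mul_inv]
  refine mul_le_of_le_one_left (by positivity) ?_
  rw [rpow_neg h.le, ← div_eq_mul_inv, div_le_one (by positivity), ← sq_rpow_half ht]
  exact rpow_le_rpow (by positivity) (by linarith) (by positivity)

lemma angularKernel_cot {β : ℝ} (hβ : β ∈ Ioo 0 (π / 2)) :
    angularKernel α (cos β / sin β) = cos β ^ α * sin β ^ 2 := by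
  have hs := sin_pos_of_mem_quadrant hβ
  have hc := cos_pos_of_mem_quadrant hβ
  rw [angularKernel, one_add_cot_sq hs.ne', div_rpow hc.le hs.le, inv_rpow (by positivity),
    rpow_neg (by positivity), inv_inv, sq_rpow_half hs.le]
  field_simp

end AngularKernel

section AngularTransform

variable {α : ℝ} {f : ℝ → ℝ} {R β : ℝ}

lemma continuous_angularKernel_mul_comp (hα : 0 ≤ α) (hf : ContinuousOn f (Ioi 0)) :
    Continuous (Function.uncurry fun x t ↦
      angularKernel α t * f (exp x * (1 + t ^ 2) ^ (α / 2))) := by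
  have hA := continuous_angularKernel hα
  have hq : Continuous fun p : ℝ × ℝ ↦ exp p.1 * (1 + p.2 ^ 2) ^ (α / 2) :=
    (by fun_prop : Continuous fun p : ℝ × ℝ ↦ exp p.1).mul
      (Continuous.rpow_const (by fun_prop) fun _ ↦ .inr (by positivity))
  exact (hA.comp continuous_snd).mul
    (hf.comp_continuous hq fun p ↦ by simp only [mem_Ioi]; positivity)

lemma continuousOn_DR1 (hf : ContDiffOn ℝ 1 f (Ioi 0)) : ContinuousOn (DR1 f) (Ioi 0) :=
  continuousOn_id.mul (hf.continuousOn_deriv_of_isOpen isOpen_Ioi le_rfl)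

lemma hasDerivAt_comp_exp_mul (hf : DifferentiableOn ℝ f (Ioi 0)) {q : ℝ} (hq : 0 < q) (x : ℝ) :
    HasDerivAt (fun x ↦ f (exp x * q)) (DR1 f (exp x * q)) x := by
  have hpos : 0 < exp x * q := by positivity
  have hd := (hf.differentiableAt (Ioi_mem_nhds hpos)).hasDerivAt
  exact (hd.comp x ((Real.hasDerivAt_exp x).mul_const q)).congr_deriv (mul_comm _ _)

lemma exp_log_add_mul_log (hR : 0 < R) (hβ : β ∈ Ioo 0 (π / 2)) :
    exp (log R + α * log (sin β)) = R * sin β ^ α := by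
  rw [exp_add, exp_log hR, rpow_def_of_pos (sin_pos_of_mem_quadrant hβ), mul_comm α]

lemma hasDerivAt_angularTransform {r b : ℝ → ℝ} {τ' T' x : ℝ} (hα : 0 ≤ α)
    (hf : ContDiffOn ℝ 1 f (Ioi 0)) (hr : ∀ᶠ y in nhds x, 0 < r y)
    (hb : ∀ᶠ y in nhds x, b y ∈ Ioo 0 (π / 2))
    (hτ : HasDerivAt (fun y ↦ log (r y) + α * log (sin (b y))) τ' x)
    (hT : HasDerivAt (fun y ↦ cos (b y) / sin (b y)) T' x) :
    HasDerivAt (fun y ↦ angularTransform α f (r y) (b y))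
      (τ' * angularTransform α (DR1 f) (r x) (b x)
        + T' * (cos (b x) ^ α * sin (b x) ^ 2 * f (r x))) x := by
  have hleibniz := hasDerivAt_intervalIntegral_of_hasDerivAt_limit
    (continuous_angularKernel_mul_comp hα hf.continuousOn)
    (continuous_angularKernel_mul_comp hα (continuousOn_DR1 hf))
    (fun x t ↦ (hasDerivAt_comp_exp_mul (hf.differentiableOn one_ne_zero)
      (by positivity : 0 < (1 + t ^ 2) ^ (α / 2)) x).const_mul (angularKernel α t))
    (a := 0) hτ hT
  have hbx := hb.self_of_nhds
  have hs := sin_pos_of_mem_quadrant hbx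
  have hend : r x * sin (b x) ^ α * (1 + (cos (b x) / sin (b x)) ^ 2) ^ (α / 2) = r x := by
    rw [one_add_cot_sq hs.ne', inv_rpow (by positivity), sq_rpow_half hs.le]
    field_simp
  simp only [exp_log_add_mul_log hr.self_of_nhds hbx, hend, angularKernel_cot hbx,
    smul_eq_mul] at hleibniz
  refine hleibniz.congr_of_eventuallyEq ?_
  filter_upwards [hr, hb] with y hry hby
  simp only [angularTransform, exp_log_add_mul_log hry hby]

lemma DR_angularTransform (hα : 0 ≤ α) (hf : ContDiffOn ℝ 1 f (Ioi 0)) (hR : 0 < R)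
    (hβ : β ∈ Ioo 0 (π / 2)) :
    DR (angularTransform α f) R β = angularTransform α (DR1 f) R β := by
  have hd := hasDerivAt_angularTransform (r := id) (b := fun _ ↦ β) hα hf (Ioi_mem_nhds hR)
    (.of_forall fun _ ↦ hβ) ((hasDerivAt_log hR.ne').add_const _) (hasDerivAt_const R _)
  rw [DR, show deriv (fun r ↦ angularTransform α f r β) R = _ from hd.deriv]
  simp only [id]
  field_simp
  ring

lemma hasDerivAt_angularTransform_angle (hα : 0 ≤ α) (hf : ContDiffOn ℝ 1 f (Ioi 0)) (hR : 0 < R)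
    (hβ : β ∈ Ioo 0 (π / 2)) :
    HasDerivAt (angularTransform α f R)
      (α * (cos β / sin β) * angularTransform α (DR1 f) R β - cos β ^ α * f R) β := by
  have hs := sin_pos_of_mem_quadrant hβ
  have hlog : HasDerivAt (fun b ↦ log R + α * log (sin b)) (α * (cos β / sin β)) β :=
    (((hasDerivAt_sin β).log hs.ne').const_mul α).const_add _
  have hcot : HasDerivAt (fun b ↦ cos b / sin b) (-(sin β ^ 2)⁻¹) β := by
    refine ((hasDerivAt_cos β).div (hasDerivAt_sin β) hs.ne').congr_deriv ?_
    field_simp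
    linarith [sin_sq_add_cos_sq β]
  refine (hasDerivAt_angularTransform (r := fun _ ↦ R) (b := id) hα hf (.of_forall fun _ ↦ hR)
    (Ioo_mem_nhds hβ.1 hβ.2) hlog hcot).congr_deriv ?_
  simp only [id]
  field_simp
  ring

lemma Dbeta_angularTransform (hα : 0 ≤ α) (hf : ContDiffOn ℝ 1 f (Ioi 0)) (hR : 0 < R)
    (hβ : β ∈ Ioo 0 (π / 2)) :
    Dbeta (angularTransform α f) R β = 2 * cos β *
      (α * cos β * angularTransform α (DR1 f) R β - sin β * cos β ^ α * f R) := by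
  have hs := sin_pos_of_mem_quadrant hβ
  rw [Dbeta, show deriv (fun b ↦ angularTransform α f R b) β = _ from
    (hasDerivAt_angularTransform_angle hα hf hR hβ).deriv, sin_two_mul]
  field_simp

lemma continuousOn_angularTransform (hα : 0 ≤ α) (hf : ContinuousOn f (Ioi 0)) :
    ContinuousOn (Function.uncurry (angularTransform α f)) Qdom := by
  have hs : ∀ p ∈ Qdom, sin p.2 ≠ 0 := fun p hp ↦ (sin_pos_of_mem_quadrant hp.2).ne'
  have hF : Continuous fun q : ℝ × ℝ ↦
      ∫ t in 0..q.2, angularKernel α t * f (exp q.1 * (1 + t ^ 2) ^ (α / 2)) :=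
    intervalIntegral.continuous_parametric_intervalIntegral_of_continuous
      (f := fun (q : ℝ × ℝ) t ↦ angularKernel α t * f (exp q.1 * (1 + t ^ 2) ^ (α / 2)))
      ((continuous_angularKernel_mul_comp hα hf).comp
        (by fun_prop : Continuous fun q : (ℝ × ℝ) × ℝ ↦ (q.1.1, q.2))) continuous_snd
  have harg : ContinuousOn (fun p : ℝ × ℝ ↦ (log p.1 + α * log (sin p.2), cos p.2 / sin p.2))
      Qdom :=
    ((continuousOn_fst.log fun p hp ↦ (mem_Ioi.1 hp.1).ne').add
      (continuousOn_const.mul (ContinuousOn.log (by fun_prop) hs))).prodMk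
        (ContinuousOn.div (by fun_prop) (by fun_prop) hs)
  refine (hF.comp_continuousOn harg).congr fun p hp ↦ ?_
  simp only [Function.uncurry, Function.comp, angularTransform, exp_log_add_mul_log hp.1 hp.2]

lemma angularTransform_mul_sub {g : ℝ → ℝ} (hα : 0 ≤ α) (hf : ContinuousOn f (Ioi 0))
    (hg : ContinuousOn g (Ioi 0)) (c : ℝ) (hR : 0 < R) (hβ : β ∈ Ioo 0 (π / 2)) :
    angularTransform α (fun u ↦ c * f u - g u) R β
      = c * angularTransform α f R β - angularTransform α g R β := by
  have hint {h : ℝ → ℝ} (hh : ContinuousOn h (Ioi 0)) : IntervalIntegrable (fun t ↦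
      angularKernel α t * h (R * sin β ^ α * (1 + t ^ 2) ^ (α / 2))) volume
      0 (cos β / sin β) := by
    rw [← exp_log_add_mul_log hR hβ]
    exact ((continuous_angularKernel_mul_comp hα hh).uncurry_left _).intervalIntegrable _ _
  simp only [angularTransform]
  rw [← intervalIntegral.integral_const_mul,
    ← intervalIntegral.integral_sub ((hint hf).const_mul c) (hint hg)]
  exact intervalIntegral.integral_congr fun t _ ↦ by ring

end AngularTransform

/-! ### Radial profiles -/

/-- The radial profile `f₀(u) = u² / (1 + u)⁴` generating `ξ̄`. -/
def profile (u : ℝ) : ℝ := u ^ 2 / (1 + u) ^ 4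

/-- The radial profile `3 f₀ - D_R f₀` generating `3 ξ̄ - D_R ξ̄`. -/
def dualProfile (u : ℝ) : ℝ := 3 * profile u - DR1 profile u

/-- Radial profiles which are, together with their logarithmic derivative, controlled by `N`
times `profile`. -/
structure IsRadialProfile (N : ℝ) (f : ℝ → ℝ) : Prop where
  contDiffOn : ContDiffOn ℝ 1 f (Ioi 0)
  abs_le : ∀ u, 0 < u → |f u| ≤ N * profile u
  abs_DR1_le : ∀ u, 0 < u → |DR1 f u| ≤ N * profile u

lemma DR1_profile {u : ℝ} (hu : 0 < u) :
    DR1 profile u = 2 * u ^ 2 * (1 - u) / (1 + u) ^ 5 := by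
  have hd := ((hasDerivAt_id u).pow 2).div (((hasDerivAt_id u).const_add 1).pow 4)
    (by simp only [Pi.pow_apply, id]; positivity)
  rw [DR1, show deriv profile u = _ from hd.deriv]
  simp only [Pi.pow_apply, id]
  field_simp
  ring

lemma dualProfile_eq {u : ℝ} (hu : 0 < u) :
    dualProfile u = u ^ 2 * (1 + 5 * u) / (1 + u) ^ 5 := by
  rw [dualProfile, DR1_profile hu, profile]
  field_simp
  ring

lemma DR1_dualProfile {u : ℝ} (hu : 0 < u) :
    DR1 dualProfile u = u ^ 2 * (2 + 12 * u - 10 * u ^ 2) / (1 + u) ^ 6 := by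
  have hd := (((hasDerivAt_id u).pow 2).mul (((hasDerivAt_id u).const_mul 5).const_add 1)).div
    (((hasDerivAt_id u).const_add 1).pow 5) (by simp only [Pi.pow_apply, id]; positivity)
  have heq : dualProfile =ᶠ[nhds u] fun u ↦ u ^ 2 * (1 + 5 * u) / (1 + u) ^ 5 := by
    filter_upwards [Ioi_mem_nhds hu] with v hv using dualProfile_eq hv
  rw [DR1, heq.deriv_eq, show deriv (fun u : ℝ ↦ u ^ 2 * (1 + 5 * u) / (1 + u) ^ 5) u = _ from
    hd.deriv]
  simp only [Pi.pow_apply, Pi.mul_apply, id]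
  field_simp
  ring

lemma abs_div_pow_le_mul_profile {N p u : ℝ} {n : ℕ} (hu : 0 < u)
    (h : |p| ≤ N * (1 + u) ^ n) :
    |u ^ 2 * p / (1 + u) ^ (4 + n)| ≤ N * profile u := by
  rw [profile, abs_div, abs_mul, abs_of_pos (by positivity : 0 < u ^ 2),
    abs_of_pos (by positivity : 0 < (1 + u) ^ (4 + n)), div_le_iff₀ (by positivity), pow_add]
  calc u ^ 2 * |p| ≤ u ^ 2 * (N * (1 + u) ^ n) := by gcongr
    _ = N * (u ^ 2 / (1 + u) ^ 4) * ((1 + u) ^ 4 * (1 + u) ^ n) := by field_simp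

lemma isRadialProfile_profile : IsRadialProfile 2 profile where
  contDiffOn := ContDiffOn.div (by fun_prop) (by fun_prop) fun u (hu : 0 < u) ↦ by positivity
  abs_le u hu := by
    simpa [profile] using abs_div_pow_le_mul_profile (N := 2) (p := 1) (n := 0) hu (by norm_num)
  abs_DR1_le u hu := by
    rw [DR1_profile hu, mul_comm 2, mul_assoc]
    exact abs_div_pow_le_mul_profile (n := 1) hu (abs_le.2 (by constructor <;> linarith))

lemma isRadialProfile_dualProfile : IsRadialProfile 10 dualProfile where
  contDiffOn := by
    refine (ContDiffOn.div (f := fun u : ℝ ↦ u ^ 2 * (1 + 5 * u)) (g := fun u ↦ (1 + u) ^ 5)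
      (by fun_prop) (by fun_prop) fun u (hu : 0 < u) ↦ by positivity).congr ?_
    exact fun u hu ↦ dualProfile_eq hu
  abs_le u hu := by
    rw [dualProfile_eq hu]
    exact abs_div_pow_le_mul_profile (n := 1) hu (abs_le.2 (by constructor <;> linarith))
  abs_DR1_le u hu := by
    rw [DR1_dualProfile hu]
    exact abs_div_pow_le_mul_profile (n := 2) hu (abs_le.2 (by constructor <;> nlinarith))

/-! ### Pointwise bounds on the angular transform -/

/-- The bound `R² (1 + R)⁻³ (sin β)^(-α)` for angular transforms of radial profiles. -/
def envelope (α R β : ℝ) : ℝ := R ^ 2 / (1 + R) ^ 3 * (sin β ^ α)⁻¹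

lemma envelope_nonneg {α R β : ℝ} (hR : 0 < R) (hβ : β ∈ Ioo 0 (π / 2)) :
    0 ≤ envelope α R β := by
  have := sin_pos_of_mem_quadrant hβ
  unfold envelope
  positivity

lemma profile_le_of_mul_le {u R s : ℝ} (hs : 0 < s) (hs1 : s ≤ 1) (hR : 0 < R) (hu : R * s ≤ u)
    (huR : u ≤ R) : profile u ≤ R ^ 2 / (1 + R) ^ 3 * s⁻¹ := by
  have hu0 : 0 < u := (mul_pos hR hs).trans_le hu
  have hratio : u / (1 + u) ≤ R / (1 + R) := by
    rw [div_le_div_iff₀ (by positivity) (by positivity)]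
    linarith
  have hlow : s * (1 + R) ≤ 1 + u := by linarith
  calc profile u = (u / (1 + u)) ^ 2 * (1 + u)⁻¹ * (1 + u)⁻¹ := by rw [profile]; field_simp
    _ ≤ (R / (1 + R)) ^ 2 * (s * (1 + R))⁻¹ * 1 := by
      gcongr
      exact inv_le_one_of_one_le₀ (by linarith)
    _ = R ^ 2 / (1 + R) ^ 3 * s⁻¹ := by field_simp

lemma sin_rpow_mul_le_one {α β t : ℝ} (hα : 0 ≤ α) (hβ : β ∈ Ioo 0 (π / 2)) (ht : 0 ≤ t)
    (ht' : t ≤ cos β / sin β) : sin β ^ α * (1 + t ^ 2) ^ (α / 2) ≤ 1 := by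
  have hs := sin_pos_of_mem_quadrant hβ
  rw [← sq_rpow_half hs.le, ← mul_rpow (by positivity) (by positivity)]
  refine rpow_le_one (by positivity) ?_ (by positivity)
  calc sin β ^ 2 * (1 + t ^ 2) ≤ sin β ^ 2 * (1 + (cos β / sin β) ^ 2) := by gcongr
    _ = 1 := by rw [one_add_cot_sq hs.ne', mul_inv_cancel₀ (by positivity)]

lemma abs_angularTransform_le {α N R β : ℝ} {f : ℝ → ℝ} (hα : 0 ≤ α) (hN : 0 ≤ N)
    (hf : ∀ u, 0 < u → |f u| ≤ N * profile u) (hR : 0 < R) (hβ : β ∈ Ioo 0 (π / 2)) :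
    |angularTransform α f R β| ≤ 2 * N * envelope α R β := by
  have hs := sin_pos_of_mem_quadrant hβ
  have hc := cos_pos_of_mem_quadrant hβ
  have hB := envelope_nonneg (α := α) hR hβ
  have hbound : ∀ t ∈ Ioc 0 (cos β / sin β),
      ‖angularKernel α t * f (R * sin β ^ α * (1 + t ^ 2) ^ (α / 2))‖
        ≤ N * envelope α R β * (1 + t ^ 2)⁻¹ := fun t ht ↦ by
    have hone : 1 ≤ (1 + t ^ 2) ^ (α / 2) := one_le_rpow (by nlinarith) (by positivity)
    have hle := sin_rpow_mul_le_one hα hβ ht.1.le ht.2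
    rw [norm_mul, mul_comm]
    refine mul_le_mul ((hf _ (by positivity)).trans ?_) (abs_angularKernel_le hα ht.1.le)
      (norm_nonneg _) (by positivity)
    gcongr
    refine profile_le_of_mul_le (by positivity) (rpow_le_one hs.le (sin_le_one β) hα) hR
      (le_mul_of_one_le_right (by positivity) hone) ?_
    rw [mul_assoc]
    exact mul_le_of_le_one_right hR.le hle
  refine (intervalIntegral.norm_integral_le_of_norm_le (by positivity) (.of_forall hbound)
    (Continuous.intervalIntegrable (continuous_const.mul
      (Continuous.inv₀ (by fun_prop) fun t ↦ by positivity)) _ _)).trans ?_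
  rw [intervalIntegral.integral_const_mul, integral_inv_one_add_sq, arctan_zero]
  nlinarith [mul_nonneg hN hB, arctan_lt_pi_div_two (cos β / sin β), pi_lt_four]

namespace IsRadialProfile

variable {α N R β : ℝ} {f : ℝ → ℝ}

lemma nonneg (hf : IsRadialProfile N f) : 0 ≤ N := by
  have := (abs_nonneg _).trans (hf.abs_le 1 one_pos)
  norm_num [profile] at this
  linarith

lemma abs_le_mul_envelope (hf : IsRadialProfile N f) (hα : 0 ≤ α) (hR : 0 < R)
    (hβ : β ∈ Ioo 0 (π / 2)) : |f R| ≤ N * envelope α R β := by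
  have hs := sin_pos_of_mem_quadrant hβ
  refine (hf.abs_le R hR).trans (mul_le_mul_of_nonneg_left ?_ hf.nonneg)
  exact profile_le_of_mul_le (by positivity) (rpow_le_one hs.le (sin_le_one β) hα) hR
    (mul_le_of_le_one_right hR.le (rpow_le_one hs.le (sin_le_one β) hα)) le_rfl

lemma abs_Dbeta_angularTransform_le (hf : IsRadialProfile N f) (hα : 0 ≤ α) (hR : 0 < R)
    (hβ : β ∈ Ioo 0 (π / 2)) :
    |Dbeta (angularTransform α f) R β| ≤ 2 * N * (2 * α + 1) * (cos β * envelope α R β) := by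
  have hc := cos_pos_of_mem_quadrant hβ
  have htransform := abs_angularTransform_le hα hf.nonneg hf.abs_DR1_le hR hβ
  have hprofile := hf.abs_le_mul_envelope hα hR hβ
  have hs := sin_pos_of_mem_quadrant hβ
  rw [Dbeta_angularTransform hα hf.contDiffOn hR hβ, abs_mul, abs_of_pos (by positivity)]
  calc 2 * cos β * |α * cos β * angularTransform α (DR1 f) R β - sin β * cos β ^ α * f R|
      ≤ 2 * cos β * (α * 1 * (2 * N * envelope α R β) + 1 * 1 * (N * envelope α R β)) := by
        gcongr
        refine (abs_sub _ _).trans ?_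
        simp only [abs_mul, abs_of_nonneg hα, abs_of_pos hs, abs_of_pos hc,
          abs_of_pos (rpow_pos_of_pos hc α)]
        gcongr
        exacts [cos_le_one β, sin_le_one β, rpow_le_one hc.le (cos_le_one β) hα]
    _ = 2 * N * (2 * α + 1) * (cos β * envelope α R β) := by ring

end IsRadialProfile

/-! ### The profile `ξ̄` as an angular transform -/

lemma cst_eq {α : ℝ} (hα : 0 ≤ α) : cst α = 4 / (π * (α + 2)) := by
  have hderiv : ∀ x ∈ uIcc 0 (π / 2), HasDerivAt (fun x ↦ -(2 / (α + 2)) * cos x ^ (α + 2))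
      (Γf α x * sin (2 * x)) x := by
    intro x hx
    rw [uIcc_of_le (by positivity)] at hx
    have hc : 0 ≤ cos x := cos_nonneg_of_mem_Icc ⟨by linarith [hx.1, pi_pos], hx.2⟩
    refine (((hasDerivAt_cos x).rpow_const (.inr (by linarith))).const_mul _).congr_deriv ?_
    rw [show α + 2 - 1 = α + 1 by ring, rpow_add_one' hc (by linarith), sin_two_mul, Γf]
    field_simp
  have hcont : Continuous fun x ↦ Γf α x * sin (2 * x) :=
    (continuous_cos.rpow_const fun _ ↦ .inr hα).mul (by fun_prop)
  have hint : ∫ β in Ioo 0 (π / 2), Γf α β * sin (2 * β) = 2 / (α + 2) := by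
    rw [← integral_Ioc_eq_integral_Ioo, ← intervalIntegral.integral_of_le (by positivity),
      intervalIntegral.integral_eq_sub_of_hasDerivAt hderiv (hcont.intervalIntegrable _ _)]
    simp [zero_rpow (by linarith : α + 2 ≠ 0)]
  rw [cst, hint]
  field_simp
  norm_num

lemma ξbarC_eq_intervalIntegral (α : ℝ) {x y : ℝ} (hx : 0 ≤ x) (hy : 0 < y) :
    ξbarC α x y = -(18 * α ^ 2 / cst α) *
      ∫ t in 0..x / y, angularKernel α t * profile (y ^ α * (1 + t ^ 2) ^ (α / 2)) := by
  have hsub := intervalIntegral.mul_integral_comp_mul_left (a := 0) (b := x / y) (c := y)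
    (f := fun z ↦ y / (y ^ 2 + z ^ 2) *
      (z ^ α * (z ^ 2 + y ^ 2) ^ (α / 2) / (1 + (z ^ 2 + y ^ 2) ^ (α / 2)) ^ 4))
  rw [mul_zero, mul_div_cancel₀ _ hy.ne'] at hsub
  rw [ξbarC, ← integral_Ioc_eq_integral_Ioo, ← intervalIntegral.integral_of_le hx, ← hsub,
    ← intervalIntegral.integral_const_mul]
  congr 1
  refine intervalIntegral.integral_congr fun t ht ↦ ?_
  rw [uIcc_of_le (by positivity)] at ht
  have h1 : 0 < 1 + t ^ 2 := by positivity
  have hmod : ((y * t) ^ 2 + y ^ 2) ^ (α / 2) = y ^ α * (1 + t ^ 2) ^ (α / 2) := by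
    rw [← sq_rpow_half hy.le, ← mul_rpow (by positivity) h1.le]
    ring_nf
  have hsum : y ^ 2 + (y * t) ^ 2 = y ^ 2 * (1 + t ^ 2) := by ring
  simp only [angularKernel, profile, hmod, mul_rpow hy.le ht.1, rpow_neg h1.le, hsum]
  field_simp

lemma ξbar_eq_angularTransform {α R β : ℝ} (hα : α ≠ 0) (hR : 0 < R) (hβ : β ∈ Ioo 0 (π / 2)) :
    ξbar α R β = -(18 * α ^ 2 / cst α) * angularTransform α profile R β := by
  have hs := sin_pos_of_mem_quadrant hβ
  have hc := cos_pos_of_mem_quadrant hβ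
  have hratio : R ^ (1 / α) * cos β / (R ^ (1 / α) * sin β) = cos β / sin β := by field_simp
  rw [ξbar, ξbarC_eq_intervalIntegral α (by positivity) (by positivity), hratio,
    mul_rpow (by positivity) hs.le, ← rpow_mul hR.le, one_div_mul_cancel hα, rpow_one]
  rfl

lemma three_mul_ξbar_sub_DR_ξbar {α R β : ℝ} (hα : 0 < α) (hR : 0 < R)
    (hβ : β ∈ Ioo 0 (π / 2)) :
    3 * ξbar α R β - DR (ξbar α) R β
      = -(18 * α ^ 2 / cst α) * angularTransform α dualProfile R β := by
  have hprofile := isRadialProfile_profile.contDiffOn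
  have hlin : angularTransform α dualProfile R β
      = 3 * angularTransform α profile R β - angularTransform α (DR1 profile) R β :=
    angularTransform_mul_sub hα.le hprofile.continuousOn (continuousOn_DR1 hprofile) 3 hR hβ
  have heq : (fun r ↦ ξbar α r β) =ᶠ[nhds R]
      fun r ↦ -(18 * α ^ 2 / cst α) * angularTransform α profile r β := by
    filter_upwards [Ioi_mem_nhds hR] with r hr using ξbar_eq_angularTransform hα.ne' hr hβ
  have hDR : DR (ξbar α) R β = -(18 * α ^ 2 / cst α) * angularTransform α (DR1 profile) R β := by
    rw [← DR_angularTransform hα.le hprofile hR hβ, DR, DR, heq.deriv_eq, deriv_const_mul_field]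
    ring
  rw [ξbar_eq_angularTransform hα.ne' hR hβ, hDR, hlin]
  ring

/-- The local part `-D_R - 3/(1+R) D_β - 2 - 3/(1+R)` of the operator `L₃`. -/
def transport (g : ℝ → ℝ → ℝ) : ℝ → ℝ → ℝ := fun R β ↦
  -DR g R β - 3 / (1 + R) * Dbeta g R β + (-2 - 3 / (1 + R)) * g R β

/-- The nonlocal part of `L₃`, up to the factor `9 α (α + 2)`, for a potential `h` standing for
`L̃₁₂(Ω)` and a constant `l` standing for `L₁₂(Ω)(0)`. -/
def forcing (α : ℝ) (h : ℝ → ℝ) (l : ℝ) : ℝ → ℝ → ℝ := fun R β ↦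
  h R * angularTransform α profile R β + l * angularTransform α dualProfile R β

lemma opL3_eq {α R β : ℝ} {Ω ξ : ℝ → ℝ → ℝ} (hα : 0 < α) (hR : 0 < R) (hβ : β ∈ Ioo 0 (π / 2)) :
    opL3 α Ω ξ R β
      = transport ξ R β + 9 * α * (α + 2) * forcing α (tL12 Ω) (L12 Ω 0) R β := by
  rw [opL3, cω, three_mul_ξbar_sub_DR_ξbar hα hR hβ, ξbar_eq_angularTransform hα.ne' hR hβ,
    cst_eq hα.le, transport, forcing]
  field_simp
  ring

/-! ### Partial derivatives and supports -/

section PartialDerivatives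

variable {g : ℝ → ℝ → ℝ} {R β : ℝ}

lemma hasDerivAt_left (hg : DifferentiableAt ℝ (Function.uncurry g) (R, β)) :
    HasDerivAt (fun r ↦ g r β) (fderiv ℝ (Function.uncurry g) (R, β) (1, 0)) R :=
  hg.hasFDerivAt.comp_hasDerivAt (f := fun r ↦ (r, β)) R
    ((hasDerivAt_id R).prodMk (hasDerivAt_const R β))

lemma hasDerivAt_right (hg : DifferentiableAt ℝ (Function.uncurry g) (R, β)) :
    HasDerivAt (g R) (fderiv ℝ (Function.uncurry g) (R, β) (0, 1)) β :=
  hg.hasFDerivAt.comp_hasDerivAt (f := fun b ↦ (R, b)) β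
    ((hasDerivAt_const β R).prodMk (hasDerivAt_id β))

lemma DR_eq_fderiv (hg : DifferentiableAt ℝ (Function.uncurry g) (R, β)) :
    DR g R β = R * fderiv ℝ (Function.uncurry g) (R, β) (1, 0) := by
  rw [DR, (hasDerivAt_left hg).deriv]

lemma Dbeta_eq_fderiv (hg : DifferentiableAt ℝ (Function.uncurry g) (R, β)) :
    Dbeta g R β = sin (2 * β) * fderiv ℝ (Function.uncurry g) (R, β) (0, 1) := by
  rw [Dbeta, (hasDerivAt_right hg).deriv]

lemma contDiff_DR {n : ℕ} (hg : ContDiff ℝ (n + 1) (Function.uncurry g)) :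
    ContDiff ℝ n (Function.uncurry (DR g)) := by
  have h : ContDiff ℝ n fun p : ℝ × ℝ ↦ p.1 * fderiv ℝ (Function.uncurry g) p (1, 0) :=
    contDiff_fst.mul ((hg.fderiv_right le_rfl).clm_apply contDiff_const)
  exact (funext fun p ↦ DR_eq_fderiv (hg.differentiable (by simp) p) :
    Function.uncurry (DR g) = _) ▸ h

lemma contDiff_Dbeta {n : ℕ} (hg : ContDiff ℝ (n + 1) (Function.uncurry g)) :
    ContDiff ℝ n (Function.uncurry (Dbeta g)) := by
  have h : ContDiff ℝ n fun p : ℝ × ℝ ↦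
      sin (2 * p.2) * fderiv ℝ (Function.uncurry g) p (0, 1) :=
    (contDiff_const.mul contDiff_snd).sin.mul ((hg.fderiv_right le_rfl).clm_apply contDiff_const)
  exact (funext fun p ↦ Dbeta_eq_fderiv (hg.differentiable (by simp) p) :
    Function.uncurry (Dbeta g) = _) ▸ h

lemma fderiv_fderiv_apply {E : Type*} [NormedAddCommGroup E] [NormedSpace ℝ E] {f : E → ℝ}
    (hf : ContDiff ℝ 2 f) (v w x : E) :
    fderiv ℝ (fun y ↦ fderiv ℝ f y v) x w = fderiv ℝ (fun y ↦ fderiv ℝ f y w) x v := by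
  have hd : DifferentiableAt ℝ (fderiv ℝ f) x :=
    (hf.fderiv_right (m := 1) le_rfl).differentiable one_ne_zero x
  rw [fderiv_clm_apply hd (differentiableAt_const v),
    fderiv_clm_apply hd (differentiableAt_const w)]
  simpa using (hf.contDiffAt.isSymmSndFDerivAt (by simp)) w v

lemma Dbeta_DR_comm (hg : ContDiff ℝ 2 (Function.uncurry g)) (R β : ℝ) :
    Dbeta (DR g) R β = DR (Dbeta g) R β := by
  have hd : Differentiable ℝ (Function.uncurry g) := hg.differentiable two_ne_zero
  have hpartial (v : ℝ × ℝ) : Differentiable ℝ fun p ↦ fderiv ℝ (Function.uncurry g) p v :=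
    ((hg.fderiv_right (m := 1) le_rfl).clm_apply contDiff_const).differentiable one_ne_zero
  have hleft : DR g R = fun b ↦ R * fderiv ℝ (Function.uncurry g) (R, b) (1, 0) :=
    funext fun b ↦ DR_eq_fderiv (hd (R, b))
  have hright : (fun r ↦ Dbeta g r β)
      = fun r ↦ sin (2 * β) * fderiv ℝ (Function.uncurry g) (r, β) (0, 1) :=
    funext fun r ↦ Dbeta_eq_fderiv (hd (r, β))
  rw [Dbeta, DR, hleft, hright, deriv_const_mul_field, deriv_const_mul_field,
    (hasDerivAt_right (g := fun r b ↦ fderiv ℝ (Function.uncurry g) (r, b) (1, 0))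
      (hpartial (1, 0) (R, β))).deriv,
    (hasDerivAt_left (g := fun r b ↦ fderiv ℝ (Function.uncurry g) (r, b) (0, 1))
      (hpartial (0, 1) (R, β))).deriv]
  have hsymm := fderiv_fderiv_apply hg (1, 0) (0, 1) (R, β)
  simp only [Function.uncurry_def] at hsymm ⊢
  rw [hsymm]
  ring

lemma hasDerivAt_transport (hg : ContDiff ℝ 2 (Function.uncurry g)) (R β : ℝ) :
    HasDerivAt (transport g R) (-deriv (DR g R) β - 3 / (1 + R) * deriv (Dbeta g R) β
      + (-2 - 3 / (1 + R)) * deriv (g R) β) β := by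
  have hDR := (hasDerivAt_right ((contDiff_DR (n := 1) hg).differentiable
    one_ne_zero (R, β))).differentiableAt.hasDerivAt
  have hDbeta := (hasDerivAt_right ((contDiff_Dbeta (n := 1) hg).differentiable
    one_ne_zero (R, β))).differentiableAt.hasDerivAt
  have hg' := (hasDerivAt_right (hg.differentiable two_ne_zero (R, β))).differentiableAt.hasDerivAt
  exact (hDR.neg.sub (hDbeta.const_mul (3 / (1 + R)))).add (hg'.const_mul (-2 - 3 / (1 + R)))

lemma Dbeta_transport (hg : ContDiff ℝ 2 (Function.uncurry g)) (R β : ℝ) :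
    Dbeta (transport g) R β = transport (Dbeta g) R β := by
  rw [Dbeta, show deriv (fun b ↦ transport g R b) β = _ from (hasDerivAt_transport hg R β).deriv,
    transport, ← Dbeta_DR_comm hg, Dbeta, Dbeta, Dbeta]
  ring

end PartialDerivatives

section Support

variable {g : ℝ → ℝ → ℝ}

lemma suppIn.hasCompactSupport (hg : suppIn g) : HasCompactSupport (Function.uncurry g) := by
  obtain ⟨K, hK, -, hzero⟩ := hg
  exact HasCompactSupport.intro hK fun p hp ↦ hzero p.1 p.2 hp

lemma suppIn.tsupport_subset (hg : suppIn g) : tsupport (Function.uncurry g) ⊆ Qdom := by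
  obtain ⟨K, hK, hKQ, hzero⟩ := hg
  exact (closure_minimal (Function.support_subset_iff'.2 fun p hp ↦ hzero p.1 p.2 hp)
    hK.isClosed).trans hKQ

lemma suppIn_Dbeta (hg : Differentiable ℝ (Function.uncurry g)) (hs : suppIn g) :
    suppIn (Dbeta g) := by
  obtain ⟨K, hK, hKQ, hzero⟩ := hs
  refine ⟨K, hK, hKQ, fun R β hp ↦ ?_⟩
  have hloc : Function.uncurry g =ᶠ[nhds (R, β)] 0 := by
    filter_upwards [hK.isClosed.isOpen_compl.mem_nhds hp] with x hx using hzero x.1 x.2 hx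
  rw [Dbeta_eq_fderiv (hg _), hloc.fderiv_eq]
  simp

end Support

/-! ### Integration by parts against compactly supported functions -/

section IntegrationByParts

lemma integrable_mul_of_tsupport_subset {X : Type*} [TopologicalSpace X] [MeasurableSpace X]
    [OpensMeasurableSpace X] {μ : Measure X} [IsFiniteMeasureOnCompacts μ] {U : Set X}
    {a g : X → ℝ} (hU : IsOpen U) (ha : ContinuousOn a U) (hg : Continuous g)
    (hc : HasCompactSupport g) (hgU : tsupport g ⊆ U) : Integrable (fun x ↦ a x * g x) μ := by
  refine Continuous.integrable_of_hasCompactSupport ?_ hc.mul_left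
  refine continuous_of_tsupport fun x hx ↦ ?_
  exact (ha.continuousAt (hU.mem_nhds (hgU (tsupport_mul_subset_right hx)))).mul hg.continuousAt

variable {E : Type*} [NormedAddCommGroup E] [NormedSpace ℝ E] [MeasurableSpace E] [BorelSpace E]
  {μ : Measure E} {U : Set E} {a b c g : E → ℝ}

lemma integrable_mul_fderiv (hU : IsOpen U) (ha : ContinuousOn a U) (hg : ContDiff ℝ 1 g)
    (hc : HasCompactSupport g) (hgU : tsupport g ⊆ U) [IsFiniteMeasureOnCompacts μ] (v : E) :
    Integrable (fun x ↦ a x * fderiv ℝ g x v) μ :=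
  integrable_mul_of_tsupport_subset hU ha
    ((hg.continuous_fderiv one_ne_zero).clm_apply continuous_const) (hc.fderiv_apply ℝ v)
    ((tsupport_fderiv_apply_subset ℝ v).trans hgU)

lemma integrable_fderiv_mul (hU : IsOpen U) (ha : ContDiffOn ℝ 1 a U) (hg : Continuous g)
    (hc : HasCompactSupport g) (hgU : tsupport g ⊆ U) [IsFiniteMeasureOnCompacts μ] (v : E) :
    Integrable (fun x ↦ fderiv ℝ a x v * g x) μ :=
  integrable_mul_of_tsupport_subset hU
    ((ha.continuousOn_fderiv_of_isOpen hU le_rfl).clm_apply continuousOn_const) hg hc hgU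

variable [FiniteDimensional ℝ E] [μ.IsAddHaarMeasure]

theorem integral_mul_fderiv_eq_neg_of_tsupport_subset (hU : IsOpen U) (ha : ContDiffOn ℝ 1 a U)
    (hg : ContDiff ℝ 1 g) (hc : HasCompactSupport g) (hgU : tsupport g ⊆ U) (v : E) :
    ∫ x, a x * fderiv ℝ g x v ∂μ = -∫ x, fderiv ℝ a x v * g x ∂μ :=
  integral_mul_fderiv_eq_neg_fderiv_mul_of_integrable
    (integrable_fderiv_mul hU ha hg.continuous hc hgU v)
    (integrable_mul_fderiv hU ha.continuousOn hg hc hgU v)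
    (integrable_mul_of_tsupport_subset hU ha.continuousOn hg.continuous hc hgU)
    (fun _ hx ↦ (ha.contDiffAt (hU.mem_nhds (hgU hx))).differentiableAt one_ne_zero)
    fun _ _ ↦ hg.differentiable one_ne_zero _

theorem setIntegral_mul_fderiv_add_mul_fderiv_add (hU : IsOpen U) (ha : ContDiffOn ℝ 1 a U)
    (hb : ContDiffOn ℝ 1 b U) (hcont : ContinuousOn c U) (hg : ContDiff ℝ 1 g)
    (hc : HasCompactSupport g) (hgU : tsupport g ⊆ U) (v w : E) :
    ∫ x in U, (a x * fderiv ℝ g x v + b x * fderiv ℝ g x w + c x * g x) ∂μ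
      = ∫ x in U, (c x - fderiv ℝ a x v - fderiv ℝ b x w) * g x ∂μ := by
  have hav := integrable_mul_fderiv (μ := μ) hU ha.continuousOn hg hc hgU v
  have hbw := integrable_mul_fderiv (μ := μ) hU hb.continuousOn hg hc hgU w
  have hav' := integrable_fderiv_mul (μ := μ) hU ha hg.continuous hc hgU v
  have hbw' := integrable_fderiv_mul (μ := μ) hU hb hg.continuous hc hgU w
  have hcg := integrable_mul_of_tsupport_subset (μ := μ) hU hcont hg.continuous hc hgU
  have hfderiv : ∀ x ∉ U, fderiv ℝ g x = 0 := fun x hx ↦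
    fderiv_of_notMem_tsupport (𝕜 := ℝ) fun h ↦ hx (hgU h)
  have hzero : ∀ x ∉ U, g x = 0 := fun x hx ↦ image_eq_zero_of_notMem_tsupport fun h ↦ hx (hgU h)
  rw [setIntegral_eq_integral_of_forall_compl_eq_zero fun x hx ↦ by simp [hfderiv x hx, hzero x hx],
    setIntegral_eq_integral_of_forall_compl_eq_zero fun x hx ↦ by simp [hzero x hx]]
  simp only [sub_mul]
  rw [integral_add (by exact hav.add hbw) hcg, integral_add hav hbw,
    integral_sub (by exact hcg.sub hav') hbw', integral_sub hcg hav',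
    integral_mul_fderiv_eq_neg_of_tsupport_subset hU ha hg hc hgU,
    integral_mul_fderiv_eq_neg_of_tsupport_subset hU hb hg hc hgU]
  ring

end IntegrationByParts

/-! ### Coercivity of the transport part -/

section Weight

/-- The weight `(1 + R)⁴ R⁻⁴ (sin β)^(-p) (cos β)^(-q)`, which is `ψ₁` for `p = q = 99/100` and
`ψ₂` for `p = 99/100`, `q = 1 + α/10`. -/
def weight (p q R β : ℝ) : ℝ := (1 + R) ^ 4 / R ^ 4 * (sin β ^ (-p) * cos β ^ (-q))

variable {p q R β : ℝ}

lemma weight_pos (hR : 0 < R) (hβ : β ∈ Ioo 0 (π / 2)) : 0 < weight p q R β := by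
  have := sin_pos_of_mem_quadrant hβ
  have := cos_pos_of_mem_quadrant hβ
  unfold weight
  positivity

lemma contDiffOn_weight : ContDiffOn ℝ 1 (Function.uncurry (weight p q)) Qdom := by
  have hsin : ContDiffOn ℝ 1 (fun x : ℝ × ℝ ↦ sin x.2 ^ (-p)) Qdom :=
    ContDiffOn.rpow_const_of_ne (by fun_prop) fun x hx ↦ (sin_pos_of_mem_quadrant hx.2).ne'
  have hcos : ContDiffOn ℝ 1 (fun x : ℝ × ℝ ↦ cos x.2 ^ (-q)) Qdom :=
    ContDiffOn.rpow_const_of_ne (by fun_prop) fun x hx ↦ (cos_pos_of_mem_quadrant hx.2).ne'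
  exact (ContDiffOn.div (by fun_prop) (by fun_prop) fun x hx ↦
    pow_ne_zero 4 (mem_Ioi.1 hx.1).ne').mul (hsin.mul hcos)

lemma hasDerivAt_mul_weight (hR : 0 < R) :
    HasDerivAt (fun r ↦ r * weight p q r β) ((1 - 4 / (1 + R)) * weight p q R β) R := by
  have hd := (hasDerivAt_id R).mul (((((hasDerivAt_id R).const_add 1).pow 4).div
    ((hasDerivAt_id R).pow 4) (pow_ne_zero 4 hR.ne')).mul_const (sin β ^ (-p) * cos β ^ (-q)))
  refine HasDerivAt.congr_deriv (f := fun r ↦ r * weight p q r β) hd ?_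
  simp only [weight, Pi.pow_apply, Pi.div_apply, id]
  field_simp
  ring

lemma hasDerivAt_sin_two_mul_mul_weight (hβ : β ∈ Ioo 0 (π / 2)) :
    HasDerivAt (fun b ↦ sin (2 * b) * weight p q R b)
      ((2 * (1 - p) * cos β ^ 2 + 2 * (q - 1) * sin β ^ 2) * weight p q R β) β := by
  have hs := sin_pos_of_mem_quadrant hβ
  have hc := cos_pos_of_mem_quadrant hβ
  have hd := ((hasDerivAt_id β).const_mul 2).sin.mul
    ((((hasDerivAt_sin β).rpow_const (p := -p) (.inl hs.ne')).mul
      ((hasDerivAt_cos β).rpow_const (p := -q) (.inl hc.ne'))).const_mul ((1 + R) ^ 4 / R ^ 4))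
  refine HasDerivAt.congr_deriv (f := fun b ↦ sin (2 * b) * weight p q R b) hd ?_
  simp only [weight, Pi.mul_apply, id]
  rw [rpow_sub_one hs.ne', rpow_sub_one hc.ne', sin_two_mul, cos_two_mul']
  field_simp
  ring

end Weight

lemma isOpen_Qdom : IsOpen Qdom := isOpen_Ioi.prod isOpen_Ioo

section Coercivity

variable {p q : ℝ} {g : ℝ → ℝ → ℝ}

lemma contDiffOn_mul_weight (p q : ℝ) :
    ContDiffOn ℝ 1 (Function.uncurry fun R β ↦ -(1 / 2) * (R * weight p q R β)) Qdom :=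
  contDiffOn_const.mul (contDiffOn_fst.mul contDiffOn_weight)

lemma contDiffOn_div_mul_sin_two_mul_mul_weight (p q : ℝ) :
    ContDiffOn ℝ 1 (Function.uncurry fun R β ↦
      -(3 / 2) / (1 + R) * (sin (2 * β) * weight p q R β)) Qdom :=
  (contDiffOn_const.div (contDiffOn_const.add contDiffOn_fst) fun x hx ↦ by
    linarith [mem_Ioi.1 hx.1]).mul (ContDiffOn.mul (by fun_prop) contDiffOn_weight)

/-- The zeroth-order coefficient that `transport` leaves in the energy identity for `weight p q`. -/
def damping (p q R β : ℝ) : ℝ :=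
  3 / 2 + (5 - 3 * (1 - p) * cos β ^ 2 - 3 * (q - 1) * sin β ^ 2) / (1 + R)

theorem setIntegral_transport_mul_weight (hg : ContDiff ℝ 1 (Function.uncurry g)) (hs : suppIn g) :
    ∫ x in Qdom, transport g x.1 x.2 * (g x.1 x.2 * weight p q x.1 x.2)
      = -∫ x in Qdom, damping p q x.1 x.2 * g x.1 x.2 * (g x.1 x.2 * weight p q x.1 x.2) := by
  rw [← integral_neg]
  have hd : Differentiable ℝ (Function.uncurry g) := hg.differentiable one_ne_zero
  have hc : ContinuousOn (fun x : ℝ × ℝ ↦ (-2 - 3 / (1 + x.1)) * weight p q x.1 x.2) Qdom :=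
    (continuousOn_const.sub (continuousOn_const.div (by fun_prop) fun x hx ↦ by
      linarith [mem_Ioi.1 hx.1])).mul contDiffOn_weight.continuousOn
  set G : ℝ × ℝ → ℝ := Function.uncurry fun R β ↦ g R β ^ 2 with hGdef
  have hG : ContDiff ℝ 1 G := hg.pow 2
  have hGs : suppIn fun R β ↦ g R β ^ 2 := by
    obtain ⟨K, hK, hKQ, hzero⟩ := hs
    exact ⟨K, hK, hKQ, fun R β hx ↦ by simp [hzero R β hx]⟩
  have hG' (x v : ℝ × ℝ) : fderiv ℝ G x v
      = 2 * g x.1 x.2 * fderiv ℝ (Function.uncurry g) x v := by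
    have := fderiv_fun_pow 2 (hd x)
    simp_all [Function.uncurry_def]
  refine (setIntegral_congr_fun isOpen_Qdom.measurableSet fun x _ ↦ ?_).trans
    ((setIntegral_mul_fderiv_add_mul_fderiv_add isOpen_Qdom (contDiffOn_mul_weight p q)
      (contDiffOn_div_mul_sin_two_mul_mul_weight p q) hc hG hGs.hasCompactSupport
      hGs.tsupport_subset (1, 0) (0, 1)).trans
    (setIntegral_congr_fun isOpen_Qdom.measurableSet fun x hx ↦ ?_))
  · have hGx : G x = g x.1 x.2 ^ 2 := rfl
    simp only [Function.uncurry, hG', hGx, transport, DR_eq_fderiv (hd x), Dbeta_eq_fderiv (hd x)]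
    ring
  · have hnhds := isOpen_Qdom.mem_nhds hx
    have hleft := hasDerivAt_left
      (((contDiffOn_mul_weight p q).contDiffAt hnhds).differentiableAt one_ne_zero)
    have hright := hasDerivAt_right
      (((contDiffOn_div_mul_sin_two_mul_mul_weight p q).contDiffAt hnhds).differentiableAt
        one_ne_zero)
    rw [hleft.unique ((hasDerivAt_mul_weight hx.1).const_mul _),
      hright.unique ((hasDerivAt_sin_two_mul_mul_weight hx.2).const_mul _)]
    have hR : 1 + x.1 ≠ 0 := by linarith [mem_Ioi.1 hx.1]
    simp only [hGdef, damping, Function.uncurry]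
    field_simp
    ring

end Coercivity

section Energy

variable {p q l R β : ℝ} {a g E F ψ : ℝ → ℝ → ℝ}

lemma three_halves_le_damping (hp : -(2 / 3) ≤ p) (hq : q ≤ 8 / 3) (hR : 0 < R) :
    3 / 2 ≤ damping p q R β := by
  refine le_add_of_nonneg_right (div_nonneg ?_ (by linarith))
  nlinarith [sin_sq_add_cos_sq β, sq_nonneg (sin β), sq_nonneg (cos β)]

lemma continuousOn_damping : ContinuousOn (Function.uncurry (damping p q)) Qdom :=
  continuousOn_const.add (ContinuousOn.div (by fun_prop) (by fun_prop) fun x hx ↦ by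
    linarith [mem_Ioi.1 hx.1])

lemma continuousOn_transport (hg : ContDiff ℝ 1 (Function.uncurry g)) :
    ContinuousOn (Function.uncurry (transport g)) Qdom := by
  have hR : ContinuousOn (fun x : ℝ × ℝ ↦ 3 / (1 + x.1)) Qdom :=
    ContinuousOn.div (by fun_prop) (by fun_prop) fun x hx ↦ by linarith [mem_Ioi.1 hx.1]
  have hDR := (contDiff_DR (n := 0) (by simpa using hg)).continuous.continuousOn (s := Qdom)
  have hDbeta := (contDiff_Dbeta (n := 0) (by simpa using hg)).continuous.continuousOn (s := Qdom)
  exact (hDR.neg.sub (hR.mul hDbeta)).add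
    ((continuousOn_const.sub hR).mul hg.continuous.continuousOn)

lemma suppIn.integrableOn_mul_weight (hs : suppIn g) (hg : Continuous (Function.uncurry g))
    (ha : ContinuousOn (Function.uncurry a) Qdom) :
    IntegrableOn (fun x ↦ a x.1 x.2 * (g x.1 x.2 * weight p q x.1 x.2)) Qdom := by
  refine Integrable.integrableOn ((integrable_mul_of_tsupport_subset isOpen_Qdom
    (ha.mul (contDiffOn_weight (p := p) (q := q)).continuousOn) hg hs.hasCompactSupport
    hs.tsupport_subset).congr (.of_forall fun x ↦ ?_))
  change a x.1 x.2 * weight p q x.1 x.2 * g x.1 x.2 = _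
  ring

theorem setIntegral_transport_mul_weight_le (hp : -(2 / 3) ≤ p) (hq : q ≤ 8 / 3)
    (hg : ContDiff ℝ 1 (Function.uncurry g)) (hs : suppIn g) :
    ∫ x in Qdom, transport g x.1 x.2 * (g x.1 x.2 * weight p q x.1 x.2)
      ≤ -(3 / 2) * ∫ x in Qdom, g x.1 x.2 * (g x.1 x.2 * weight p q x.1 x.2) := by
  have hgc := hg.continuous.continuousOn (s := Qdom)
  rw [setIntegral_transport_mul_weight hg hs, neg_mul, neg_le_neg_iff, ← integral_const_mul]
  refine setIntegral_mono_on ((hs.integrableOn_mul_weight hg.continuous hgc).const_mul _)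
    (hs.integrableOn_mul_weight (a := fun R β ↦ damping p q R β * g R β) hg.continuous
      (continuousOn_damping.mul hgc)) isOpen_Qdom.measurableSet fun x hx ↦ ?_
  have hw := (weight_pos (p := p) (q := q) hx.1 hx.2).le
  nlinarith [mul_le_mul_of_nonneg_right (three_halves_le_damping (β := x.2) hp hq hx.1)
    (mul_nonneg (mul_self_nonneg (g x.1 x.2)) hw)]

lemma inner2_eq_setIntegral {f : ℝ → ℝ → ℝ}
    (h : IntegrableOn (fun x : ℝ × ℝ ↦ f x.1 x.2 * g x.1 x.2) Qdom) :
    inner2 f g = ∫ x in Qdom, f x.1 x.2 * g x.1 x.2 :=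
  (setIntegral_prod _ h).symm

lemma norm2_mul_sqrt_sq (hψ : ∀ x ∈ Qdom, 0 ≤ ψ x.1 x.2) :
    norm2 (fun R β ↦ g R β * √(ψ R β)) ^ 2 = inner2 g fun R β ↦ g R β * ψ R β := by
  have hinner : inner2 (fun R β ↦ g R β * √(ψ R β)) (fun R β ↦ g R β * √(ψ R β))
      = inner2 g fun R β ↦ g R β * ψ R β :=
    setIntegral_congr_fun measurableSet_Ioi fun R hR ↦
      setIntegral_congr_fun measurableSet_Ioo fun β hβ ↦ by
        simp only
        rw [mul_mul_mul_comm, mul_self_sqrt (hψ (R, β) ⟨hR, hβ⟩), mul_assoc]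
  rw [norm2, sq_sqrt, hinner]
  exact integral_nonneg fun R ↦ integral_nonneg fun β ↦ mul_self_nonneg _

theorem inner2_transport_add_le (hp : -(2 / 3) ≤ p) (hq : q ≤ 8 / 3)
    (hg : ContDiff ℝ 1 (Function.uncurry g)) (hs : suppIn g) (hl : 0 ≤ l)
    (hF : ContinuousOn (Function.uncurry F) Qdom)
    (hF2 : IntegrableOn (fun x ↦ F x.1 x.2 ^ 2 * weight p q x.1 x.2) Qdom)
    (hE : ∀ x ∈ Qdom, E x.1 x.2 = transport g x.1 x.2 + l * F x.1 x.2)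
    (hψ : ∀ x ∈ Qdom, ψ x.1 x.2 = weight p q x.1 x.2) :
    inner2 E (fun R β ↦ g R β * ψ R β)
      ≤ (-(3 / 2) + l) * norm2 (fun R β ↦ g R β * √(ψ R β)) ^ 2
        + l / 4 * ∫ x in Qdom, F x.1 x.2 ^ 2 * weight p q x.1 x.2 := by
  have hQ := isOpen_Qdom.measurableSet
  have hT := hs.integrableOn_mul_weight (p := p) (q := q) hg.continuous (continuousOn_transport hg)
  have hFg := hs.integrableOn_mul_weight (p := p) (q := q) hg.continuous hF
  have hgg := hs.integrableOn_mul_weight (p := p) (q := q) hg.continuous hg.continuous.continuousOn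
  have hEψ : EqOn (fun x ↦ transport g x.1 x.2 * (g x.1 x.2 * weight p q x.1 x.2)
      + l * (F x.1 x.2 * (g x.1 x.2 * weight p q x.1 x.2)))
      (fun x ↦ E x.1 x.2 * (g x.1 x.2 * ψ x.1 x.2)) Qdom := fun x hx ↦ by
    simp only [hE x hx, hψ x hx]
    ring
  have hgψ : EqOn (fun x ↦ g x.1 x.2 * (g x.1 x.2 * weight p q x.1 x.2))
      (fun x ↦ g x.1 x.2 * (g x.1 x.2 * ψ x.1 x.2)) Qdom := fun x hx ↦ by simp only [hψ x hx]
  have hyoung : ∫ x in Qdom, F x.1 x.2 * (g x.1 x.2 * weight p q x.1 x.2)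
      ≤ ∫ x in Qdom, (g x.1 x.2 * (g x.1 x.2 * weight p q x.1 x.2)
        + 1 / 4 * (F x.1 x.2 ^ 2 * weight p q x.1 x.2)) := by
    refine setIntegral_mono_on hFg (hgg.add (hF2.const_mul _)) hQ fun x hx ↦ ?_
    nlinarith [mul_nonneg (sq_nonneg (g x.1 x.2 - F x.1 x.2 / 2))
      (weight_pos (p := p) (q := q) hx.1 hx.2).le]
  rw [integral_add hgg (hF2.const_mul _), integral_const_mul] at hyoung
  rw [norm2_mul_sqrt_sq fun x hx ↦ hψ x hx ▸ (weight_pos hx.1 hx.2).le,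
    inner2_eq_setIntegral ((hT.add (hFg.const_mul l)).congr_fun hEψ hQ),
    inner2_eq_setIntegral (hgg.congr_fun hgψ hQ), ← setIntegral_congr_fun hQ hEψ,
    ← setIntegral_congr_fun hQ hgψ, integral_add hT (hFg.const_mul l), integral_const_mul]
  linarith [setIntegral_transport_mul_weight_le hp hq hg hs, mul_le_mul_of_nonneg_left hyoung hl]

end Energy

/-! ### The nonlocal term -/

/-- The density `s ↦ s⁻¹ ∫₀^{π/2} Ω(s,β) sin(2β) dβ`, whose integral over `(R,∞)` is
`L₁₂(Ω)(R)`. -/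
def angularMean (Ω : ℝ → ℝ → ℝ) (s : ℝ) : ℝ :=
  ∫ β in Ioo 0 (π / 2), Ω s β * sin (2 * β) / s

section Nonlocal

variable {Ω : ℝ → ℝ → ℝ}

lemma integrable_angularMean (hs : suppIn Ω) (hΩ : Continuous (Function.uncurry Ω)) :
    Integrable (angularMean Ω) := by
  have ha : ContinuousOn (fun x : ℝ × ℝ ↦ sin (2 * x.2) / x.1) Qdom :=
    ContinuousOn.div (by fun_prop) (by fun_prop) fun x hx ↦ (mem_Ioi.1 hx.1).ne'
  have hint := (integrable_mul_of_tsupport_subset (μ := volume) isOpen_Qdom ha hΩ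
    hs.hasCompactSupport hs.tsupport_subset).integrableOn (s := univ ×ˢ Ioo 0 (π / 2))
  rw [IntegrableOn, Measure.volume_eq_prod, ← Measure.prod_restrict, Measure.restrict_univ] at hint
  refine hint.integral_prod_left.congr (.of_forall fun s ↦
    integral_congr_ae (.of_forall fun β ↦ ?_))
  change sin (2 * β) / s * Ω s β = Ω s β * sin (2 * β) / s
  ring

lemma tL12_eq_neg_intervalIntegral (hi : Integrable (angularMean Ω)) (R : ℝ) :
    tL12 Ω R = -∫ s in (0 : ℝ)..R, angularMean Ω s := by
  rw [← intervalIntegral.integral_Ioi_sub_Ioi' hi.integrableOn hi.integrableOn, neg_sub]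
  rfl

lemma continuous_tL12 (hi : Integrable (angularMean Ω)) : Continuous (tL12 Ω) := by
  rw [funext (tL12_eq_neg_intervalIntegral hi)]
  exact (intervalIntegral.continuous_primitive (fun _ _ ↦ hi.intervalIntegrable) 0).neg

lemma abs_tL12_le (hi : Integrable (angularMean Ω)) (R : ℝ) :
    |tL12 Ω R| ≤ ∫ s, |angularMean Ω s| := by
  rw [tL12_eq_neg_intervalIntegral hi, abs_neg]
  exact intervalIntegral.norm_integral_le_integral_norm_uIoc.trans
    (setIntegral_le_integral hi.norm (.of_forall fun _ ↦ norm_nonneg _))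

lemma suppIn.exists_pos_forall_lt_eq_zero (hs : suppIn Ω) :
    ∃ ε > 0, ∀ R < ε, ∀ β, Ω R β = 0 := by
  obtain ⟨K, hK, hKQ, h0⟩ := hs
  rcases K.eq_empty_or_nonempty with rfl | hne
  · exact ⟨1, one_pos, fun R _ β ↦ h0 R β (notMem_empty _)⟩
  · obtain ⟨x, hx, hmin⟩ := hK.exists_isMinOn hne continuous_fst.continuousOn
    exact ⟨x.1, (hKQ hx).1, fun R hR β ↦ h0 R β fun hmem ↦ (hmin hmem).not_gt hR⟩

lemma tL12_eq_zero {ε R : ℝ} (hi : Integrable (angularMean Ω)) (hε : ∀ R < ε, ∀ β, Ω R β = 0)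
    (hR : 0 < R) (hRε : R < ε) : tL12 Ω R = 0 := by
  rw [tL12_eq_neg_intervalIntegral hi, neg_eq_zero]
  refine intervalIntegral.integral_zero_ae (.of_forall fun s hs ↦ ?_)
  rw [uIoc_of_le hR.le] at hs
  simp [angularMean, hε s (hs.2.trans_lt hRε)]

lemma integrableOn_sq_div_of_eq_zero {h : ℝ → ℝ} {M ε : ℝ} (hc : Continuous h)
    (hM : ∀ R, |h R| ≤ M) (hε : 0 < ε) (h0 : ∀ R, 0 < R → R < ε → h R = 0) :
    IntegrableOn (fun R ↦ (h R / R) ^ 2) (Ioi 0) := by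
  have hdom : IntegrableOn (fun R : ℝ ↦ M ^ 2 * (1 + (ε ^ 2)⁻¹) * (1 + R ^ 2)⁻¹) (Ioi 0) :=
    (integrable_inv_one_add_sq.const_mul _).integrableOn
  refine hdom.mono' (ContinuousOn.aestronglyMeasurable ((hc.continuousOn.div continuousOn_id
    fun R (hR : 0 < R) ↦ hR.ne').pow 2) measurableSet_Ioi) ?_
  filter_upwards [ae_restrict_mem measurableSet_Ioi] with R (hR : 0 < R)
  rw [norm_of_nonneg (sq_nonneg _)]
  rcases lt_or_ge R ε with hRε | hRε
  · rw [h0 R hR hRε, zero_div, zero_pow two_ne_zero]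
    positivity
  · have hh : h R ^ 2 ≤ M ^ 2 := sq_le_sq' (abs_le.1 (hM R)).1 (abs_le.1 (hM R)).2
    have hinv : (R ^ 2)⁻¹ ≤ (1 + (ε ^ 2)⁻¹) * (1 + R ^ 2)⁻¹ := by
      rw [← div_eq_mul_inv, inv_eq_one_div, div_le_div_iff₀ (by positivity) (by positivity)]
      have : 1 ≤ (ε ^ 2)⁻¹ * R ^ 2 := by
        rw [inv_mul_eq_div, one_le_div (by positivity)]
        gcongr
      linarith
    rw [div_pow, div_eq_mul_inv, mul_assoc]
    gcongr

lemma integrableOn_tL12_div_sq (hs : suppIn Ω) (hΩ : Continuous (Function.uncurry Ω)) :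
    IntegrableOn (fun R ↦ (tL12 Ω R / R) ^ 2) (Ioi 0) := by
  have hi := integrable_angularMean hs hΩ
  obtain ⟨ε, hε, hzero⟩ := hs.exists_pos_forall_lt_eq_zero
  exact integrableOn_sq_div_of_eq_zero (continuous_tL12 hi) (abs_tL12_le hi) hε
    fun _ ↦ tL12_eq_zero hi hzero

end Nonlocal

/-! ### Weighted bounds for the forcing -/

section AngularMajorant

/-- The integrable function of the angle that dominates the weighted square of `envelope`. -/
def angularMajorant (κ β : ℝ) : ℝ := (sin β * cos β) ^ (-κ)

variable {κ β : ℝ}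

lemma angularMajorant_nonneg (hβ : β ∈ Ioo 0 (π / 2)) : 0 ≤ angularMajorant κ β :=
  rpow_nonneg (mul_pos (sin_pos_of_mem_quadrant hβ) (cos_pos_of_mem_quadrant hβ)).le _

lemma min_div_four_le_sin_mul_cos (hβ : β ∈ Ioo 0 (π / 2)) :
    min β (π / 2 - β) / 4 ≤ sin β * cos β := by
  have hsin : 2 / π * β ≤ sin β := mul_le_sin hβ.1.le hβ.2.le
  have hcos : 2 / π * (π / 2 - β) ≤ cos β := by
    rw [← sin_pi_div_two_sub]
    exact mul_le_sin (by linarith [hβ.2]) (by linarith [hβ.1])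
  have hmin : 0 ≤ min β (π / 2 - β) := le_min hβ.1.le (by linarith [hβ.2])
  have hmax : π / 4 ≤ max β (π / 2 - β) := by
    rcases le_total β (π / 4) with h | h
    · exact le_max_of_le_right (by linarith)
    · exact le_max_of_le_left h
  calc min β (π / 2 - β) / 4 ≤ min β (π / 2 - β) / π := by gcongr; exact pi_lt_four.le
    _ = (2 / π) ^ 2 * (min β (π / 2 - β) * (π / 4)) := by field_simp; ring
    _ ≤ (2 / π) ^ 2 * (min β (π / 2 - β) * max β (π / 2 - β)) := by gcongr
    _ = 2 / π * β * (2 / π * (π / 2 - β)) := by rw [min_mul_max]; ring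
    _ ≤ sin β * cos β :=
        mul_le_mul hsin hcos (mul_nonneg (by positivity) (by linarith [hβ.2]))
          (sin_pos_of_mem_quadrant hβ).le

lemma angularMajorant_le (hκ : 0 ≤ κ) (hβ : β ∈ Ioo 0 (π / 2)) :
    angularMajorant κ β ≤ (1 / 4) ^ (-κ) * (β ^ (-κ) + (π / 2 - β) ^ (-κ)) := by
  have hβ' : 0 < π / 2 - β := sub_pos.2 hβ.2
  have hmin : 0 < min β (π / 2 - β) := lt_min hβ.1 hβ'
  calc angularMajorant κ β ≤ (1 / 4 * min β (π / 2 - β)) ^ (-κ) :=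
        rpow_le_rpow_of_nonpos (by positivity)
          (by linarith [min_div_four_le_sin_mul_cos hβ]) (neg_nonpos.2 hκ)
    _ = (1 / 4) ^ (-κ) * min β (π / 2 - β) ^ (-κ) := mul_rpow (by norm_num) hmin.le
    _ ≤ (1 / 4) ^ (-κ) * (β ^ (-κ) + (π / 2 - β) ^ (-κ)) := by
        gcongr
        rcases min_choice β (π / 2 - β) with h | h <;> rw [h]
        · exact le_add_of_nonneg_right (rpow_nonneg hβ'.le _)
        · exact le_add_of_nonneg_left (rpow_nonneg hβ.1.le _)

lemma integrableOn_angularMajorant (hκ : 0 ≤ κ) (hκ1 : κ < 1) :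
    IntegrableOn (angularMajorant κ) (Ioo 0 (π / 2)) := by
  have hleft : IntervalIntegrable (fun β : ℝ ↦ β ^ (-κ)) volume 0 (π / 2) :=
    intervalIntegral.intervalIntegrable_rpow' (by linarith)
  have hright : IntervalIntegrable (fun β : ℝ ↦ (π / 2 - β) ^ (-κ)) volume 0 (π / 2) := by
    simpa using (hleft.comp_sub_left (π / 2)).symm
  rw [intervalIntegrable_iff_integrableOn_Ioo_of_le (by positivity)] at hleft hright
  refine ((hleft.add hright).const_mul ((1 / 4) ^ (-κ))).mono' (ContinuousOn.aestronglyMeasurable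
    (ContinuousOn.rpow_const (by fun_prop) fun β hβ ↦ .inl (mul_pos (sin_pos_of_mem_quadrant hβ)
      (cos_pos_of_mem_quadrant hβ)).ne') measurableSet_Ioo) ?_
  filter_upwards [ae_restrict_mem measurableSet_Ioo] with β hβ
  rw [norm_of_nonneg (angularMajorant_nonneg hβ)]
  exact angularMajorant_le hκ hβ

end AngularMajorant

section Enveloped

/-- Continuous functions on `Qdom` dominated by `M (cos β)^n` times `envelope α`; the functions
multiplying `L̃₁₂(Ω)` and `L₁₂(Ω)(0)` in the two estimates are of this kind, with `n = 0` and
`n = 1` respectively. -/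
structure IsEnveloped (α M : ℝ) (n : ℕ) (X : ℝ → ℝ → ℝ) : Prop where
  continuousOn : ContinuousOn (Function.uncurry X) Qdom
  abs_le : ∀ x ∈ Qdom, |X x.1 x.2| ≤ M * (cos x.2 ^ n * envelope α x.1 x.2)

variable {α κ M N p q : ℝ} {n : ℕ} {f : ℝ → ℝ} {X Y : ℝ → ℝ → ℝ}

lemma IsEnveloped.mono (hX : IsEnveloped α N n X) (hNM : N ≤ M) : IsEnveloped α M n X where
  continuousOn := hX.continuousOn
  abs_le x hx := (hX.abs_le x hx).trans <| mul_le_mul_of_nonneg_right hNM <|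
    mul_nonneg (pow_nonneg (cos_pos_of_mem_quadrant hx.2).le n) (envelope_nonneg hx.1 hx.2)

lemma IsRadialProfile.isEnveloped_angularTransform (hf : IsRadialProfile N f) (hα : 0 ≤ α) :
    IsEnveloped α (2 * N) 0 (angularTransform α f) where
  continuousOn := continuousOn_angularTransform hα hf.contDiffOn.continuousOn
  abs_le x hx := by
    simpa using abs_angularTransform_le hα hf.nonneg hf.abs_le hx.1 hx.2

lemma IsRadialProfile.isEnveloped_Dbeta_angularTransform (hf : IsRadialProfile N f)
    (hα : 0 ≤ α) : IsEnveloped α (2 * N * (2 * α + 1)) 1 (Dbeta (angularTransform α f)) where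
  continuousOn := by
    have hcos : ContinuousOn (fun x : ℝ × ℝ ↦ cos x.2 ^ α) Qdom :=
      ContinuousOn.rpow_const (by fun_prop) fun x hx ↦ .inl (cos_pos_of_mem_quadrant hx.2).ne'
    have hDR := continuousOn_angularTransform hα (continuousOn_DR1 hf.contDiffOn)
    have hf' : ContinuousOn (fun x : ℝ × ℝ ↦ f x.1) Qdom :=
      hf.contDiffOn.continuousOn.comp continuousOn_fst fun x hx ↦ hx.1
    refine ContinuousOn.congr (f := fun x : ℝ × ℝ ↦ 2 * cos x.2 * (α * cos x.2 *
      angularTransform α (DR1 f) x.1 x.2 - sin x.2 * cos x.2 ^ α * f x.1)) ?_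
      fun x hx ↦ Dbeta_angularTransform hα hf.contDiffOn hx.1 hx.2
    exact ContinuousOn.mul (by fun_prop) ((ContinuousOn.mul (by fun_prop) hDR).sub
      ((ContinuousOn.mul (by fun_prop) hcos).mul hf'))
  abs_le x hx := by simpa using hf.abs_Dbeta_angularTransform_le hα hx.1 hx.2

lemma sq_envelope_mul_weight_le {R β : ℝ} (hp : p + 2 * α ≤ κ) (hq : q ≤ κ + 2 * n) (hR : 0 < R)
    (hβ : β ∈ Ioo 0 (π / 2)) :
    (cos β ^ n * envelope α R β) ^ 2 * weight p q R β
      ≤ ((1 + R) ^ 2)⁻¹ * angularMajorant κ β := by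
  have hs := sin_pos_of_mem_quadrant hβ
  have hc := cos_pos_of_mem_quadrant hβ
  have hsin : ((sin β ^ α)⁻¹) ^ 2 * sin β ^ (-p) = sin β ^ (-(p + 2 * α)) := by
    rw [← rpow_neg hs.le, ← rpow_mul_natCast hs.le, ← rpow_add hs]
    congr 1; push_cast; ring
  have hcos : (cos β ^ n) ^ 2 * cos β ^ (-q) = cos β ^ (2 * n - q) := by
    rw [← pow_mul, ← rpow_natCast, ← rpow_add hc]
    congr 1; push_cast; ring
  have hradial : (R ^ 2 / (1 + R) ^ 3) ^ 2 * ((1 + R) ^ 4 / R ^ 4) = ((1 + R) ^ 2)⁻¹ := by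
    field_simp
  calc (cos β ^ n * envelope α R β) ^ 2 * weight p q R β
      = (R ^ 2 / (1 + R) ^ 3) ^ 2 * ((1 + R) ^ 4 / R ^ 4)
          * ((((sin β ^ α)⁻¹) ^ 2 * sin β ^ (-p)) * ((cos β ^ n) ^ 2 * cos β ^ (-q))) := by
        rw [envelope, weight]; ring
    _ = ((1 + R) ^ 2)⁻¹ * (sin β ^ (-(p + 2 * α)) * cos β ^ (2 * n - q)) := by
        rw [hradial, hsin, hcos]
    _ ≤ ((1 + R) ^ 2)⁻¹ * angularMajorant κ β := by
        rw [angularMajorant, mul_rpow hs.le hc.le]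
        refine mul_le_mul_of_nonneg_left (mul_le_mul ?_ ?_ (by positivity) (by positivity))
          (by positivity)
        · exact rpow_le_rpow_of_exponent_ge hs (sin_le_one β) (by linarith)
        · exact rpow_le_rpow_of_exponent_ge hc (cos_le_one β) (by linarith)

lemma IsEnveloped.sq_mul_weight_le (hX : IsEnveloped α M n X) (hp : p + 2 * α ≤ κ)
    (hq : q ≤ κ + 2 * n) {x : ℝ × ℝ} (hx : x ∈ Qdom) :
    X x.1 x.2 ^ 2 * weight p q x.1 x.2
      ≤ M ^ 2 * (((1 + x.1) ^ 2)⁻¹ * angularMajorant κ x.2) := by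
  have hsq : X x.1 x.2 ^ 2 ≤ (M * (cos x.2 ^ n * envelope α x.1 x.2)) ^ 2 :=
    sq_le_sq.2 ((hX.abs_le x hx).trans (le_abs_self _))
  calc X x.1 x.2 ^ 2 * weight p q x.1 x.2
      ≤ (M * (cos x.2 ^ n * envelope α x.1 x.2)) ^ 2 * weight p q x.1 x.2 :=
        mul_le_mul_of_nonneg_right hsq (weight_pos hx.1 hx.2).le
    _ = M ^ 2 * ((cos x.2 ^ n * envelope α x.1 x.2) ^ 2 * weight p q x.1 x.2) := by ring
    _ ≤ M ^ 2 * (((1 + x.1) ^ 2)⁻¹ * angularMajorant κ x.2) :=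
        mul_le_mul_of_nonneg_left (sq_envelope_mul_weight_le hp hq hx.1 hx.2) (sq_nonneg M)

variable {h : ℝ → ℝ} {l : ℝ}

lemma IsEnveloped.sq_mul_add_mul_mul_weight_le (hX : IsEnveloped α M n X)
    (hY : IsEnveloped α M n Y) (hp : p + 2 * α ≤ κ) (hq : q ≤ κ + 2 * n) {x : ℝ × ℝ}
    (hx : x ∈ Qdom) :
    (h x.1 * X x.1 x.2 + l * Y x.1 x.2) ^ 2 * weight p q x.1 x.2
      ≤ 2 * M ^ 2 * ((h x.1 / x.1) ^ 2 + l ^ 2 * (1 + x.1 ^ 2)⁻¹) * angularMajorant κ x.2 := by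
  have hR : 0 < x.1 := hx.1
  have hm : 0 ≤ angularMajorant κ x.2 := angularMajorant_nonneg hx.2
  have hXw : X x.1 x.2 ^ 2 * weight p q x.1 x.2
      ≤ M ^ 2 * ((x.1 ^ 2)⁻¹ * angularMajorant κ x.2) :=
    (hX.sq_mul_weight_le hp hq hx).trans (by gcongr; linarith)
  have hYw : Y x.1 x.2 ^ 2 * weight p q x.1 x.2
      ≤ M ^ 2 * ((1 + x.1 ^ 2)⁻¹ * angularMajorant κ x.2) :=
    (hY.sq_mul_weight_le hp hq hx).trans (by gcongr; nlinarith)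
  calc (h x.1 * X x.1 x.2 + l * Y x.1 x.2) ^ 2 * weight p q x.1 x.2
      ≤ 2 * ((h x.1 * X x.1 x.2) ^ 2 + (l * Y x.1 x.2) ^ 2) * weight p q x.1 x.2 :=
        mul_le_mul_of_nonneg_right add_sq_le (weight_pos hx.1 hx.2).le
    _ = 2 * (h x.1 ^ 2 * (X x.1 x.2 ^ 2 * weight p q x.1 x.2)
          + l ^ 2 * (Y x.1 x.2 ^ 2 * weight p q x.1 x.2)) := by ring
    _ ≤ 2 * (h x.1 ^ 2 * (M ^ 2 * ((x.1 ^ 2)⁻¹ * angularMajorant κ x.2))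
          + l ^ 2 * (M ^ 2 * ((1 + x.1 ^ 2)⁻¹ * angularMajorant κ x.2))) := by
        linarith [mul_le_mul_of_nonneg_left hXw (sq_nonneg (h x.1)),
          mul_le_mul_of_nonneg_left hYw (sq_nonneg l)]
    _ = _ := by ring

lemma integrableOn_radial_mul_angularMajorant (hκ : 0 ≤ κ) (hκ1 : κ < 1)
    (hh : IntegrableOn (fun R ↦ (h R / R) ^ 2) (Ioi 0)) :
    IntegrableOn (fun x : ℝ × ℝ ↦ 2 * M ^ 2 * ((h x.1 / x.1) ^ 2 + l ^ 2 * (1 + x.1 ^ 2)⁻¹)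
      * angularMajorant κ x.2) Qdom := by
  have hradial : IntegrableOn (fun R ↦ 2 * M ^ 2 * ((h R / R) ^ 2 + l ^ 2 * (1 + R ^ 2)⁻¹))
      (Ioi 0) := (hh.add (integrable_inv_one_add_sq.integrableOn.const_mul _)).const_mul _
  have hprod := Integrable.mul_prod hradial (integrableOn_angularMajorant hκ hκ1)
  rwa [Measure.prod_restrict, ← Measure.volume_eq_prod] at hprod

lemma setIntegral_radial_mul_angularMajorant (κ M : ℝ)
    (hh : IntegrableOn (fun R ↦ (h R / R) ^ 2) (Ioi 0)) :
    ∫ x in Qdom, 2 * M ^ 2 * ((h x.1 / x.1) ^ 2 + l ^ 2 * (1 + x.1 ^ 2)⁻¹) * angularMajorant κ x.2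
      = 2 * M ^ 2 * (normR (fun R ↦ h R / R) ^ 2 + l ^ 2 * (π / 2))
        * ∫ β in Ioo 0 (π / 2), angularMajorant κ β := by
  have hnorm : normR (fun R ↦ h R / R) ^ 2 = ∫ R in Ioi 0, (h R / R) ^ 2 :=
    sq_sqrt (integral_nonneg fun _ ↦ sq_nonneg _)
  have hinv : IntegrableOn (fun R : ℝ ↦ l ^ 2 * (1 + R ^ 2)⁻¹) (Ioi 0) :=
    integrable_inv_one_add_sq.integrableOn.const_mul _
  have hradial : ∫ R in Ioi 0, 2 * M ^ 2 * ((h R / R) ^ 2 + l ^ 2 * (1 + R ^ 2)⁻¹)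
      = 2 * M ^ 2 * (normR (fun R ↦ h R / R) ^ 2 + l ^ 2 * (π / 2)) := by
    rw [integral_const_mul, integral_add hh hinv, integral_const_mul, integral_Ioi_inv_one_add_sq,
      hnorm, arctan_zero, sub_zero]
  rw [← hradial, Measure.volume_eq_prod]
  exact setIntegral_prod_mul (fun R ↦ 2 * M ^ 2 * ((h R / R) ^ 2 + l ^ 2 * (1 + R ^ 2)⁻¹))
    (angularMajorant κ) _ _

end Enveloped

/-! ### The two estimates -/

/-- The constant in front of `α` in the energy estimate for a forcing enveloped with constant `M`;
`27` comes from the bound `9 α (α + 2) ≤ 27 α` for `α ≤ 1`. -/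
def energyConst (κ M : ℝ) : ℝ := 27 * (1 + M ^ 2 * ∫ β in Ioo 0 (π / 2), angularMajorant κ β)

section Forced

variable {α κ M l p q : ℝ} {n : ℕ} {h : ℝ → ℝ} {g X Y E ψ : ℝ → ℝ → ℝ}

lemma integral_angularMajorant_nonneg (κ : ℝ) :
    0 ≤ ∫ β in Ioo 0 (π / 2), angularMajorant κ β :=
  setIntegral_nonneg measurableSet_Ioo fun _ ↦ angularMajorant_nonneg

lemma continuousOn_mul_add_mul (hh : Continuous h) (hX : IsEnveloped α M n X)
    (hY : IsEnveloped α M n Y) :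
    ContinuousOn (Function.uncurry fun R β ↦ h R * X R β + l * Y R β) Qdom :=
  ((hh.comp continuous_fst).continuousOn.mul hX.continuousOn).add
    (continuousOn_const.mul hY.continuousOn)

lemma integrableOn_sq_mul_add_mul_mul_weight (hκ : 0 ≤ κ) (hκ1 : κ < 1) (hp : p + 2 * α ≤ κ)
    (hq : q ≤ κ + 2 * n) (hh : Continuous h) (hh2 : IntegrableOn (fun R ↦ (h R / R) ^ 2) (Ioi 0))
    (hX : IsEnveloped α M n X) (hY : IsEnveloped α M n Y) :
    IntegrableOn (fun x ↦ (h x.1 * X x.1 x.2 + l * Y x.1 x.2) ^ 2 * weight p q x.1 x.2) Qdom := by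
  refine (integrableOn_radial_mul_angularMajorant (M := M) (l := l) hκ hκ1 hh2).mono'
    ((((continuousOn_mul_add_mul hh hX hY).pow 2).mul
      contDiffOn_weight.continuousOn).aestronglyMeasurable isOpen_Qdom.measurableSet) ?_
  filter_upwards [ae_restrict_mem isOpen_Qdom.measurableSet] with x hx
  rw [norm_of_nonneg (mul_nonneg (sq_nonneg _) (weight_pos hx.1 hx.2).le)]
  exact hX.sq_mul_add_mul_mul_weight_le hY hp hq hx

lemma setIntegral_sq_mul_add_mul_mul_weight_le (hκ : 0 ≤ κ) (hκ1 : κ < 1) (hp : p + 2 * α ≤ κ)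
    (hq : q ≤ κ + 2 * n) (hh : Continuous h) (hh2 : IntegrableOn (fun R ↦ (h R / R) ^ 2) (Ioi 0))
    (hX : IsEnveloped α M n X) (hY : IsEnveloped α M n Y) :
    ∫ x in Qdom, (h x.1 * X x.1 x.2 + l * Y x.1 x.2) ^ 2 * weight p q x.1 x.2
      ≤ 4 * M ^ 2 * (l ^ 2 + normR (fun R ↦ h R / R) ^ 2)
        * ∫ β in Ioo 0 (π / 2), angularMajorant κ β := by
  refine (setIntegral_mono_on (integrableOn_sq_mul_add_mul_mul_weight hκ hκ1 hp hq hh hh2 hX hY)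
    (integrableOn_radial_mul_angularMajorant hκ hκ1 hh2) isOpen_Qdom.measurableSet
    fun x ↦ hX.sq_mul_add_mul_mul_weight_le hY hp hq).trans ?_
  rw [setIntegral_radial_mul_angularMajorant κ M hh2]
  refine mul_le_mul_of_nonneg_right ?_ (integral_angularMajorant_nonneg κ)
  nlinarith [mul_nonneg (sq_nonneg M) (mul_nonneg (sq_nonneg l) (sub_nonneg.2 pi_lt_four.le)),
    mul_nonneg (sq_nonneg M) (sq_nonneg (normR fun R ↦ h R / R))]

theorem inner2_transport_add_nonlocal_le (hα : 0 ≤ α) (hα1 : α ≤ 1) (hκ : 0 ≤ κ) (hκ1 : κ < 1)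
    (hp : -(2 / 3) ≤ p) (hpκ : p + 2 * α ≤ κ) (hq : q ≤ 8 / 3) (hqκ : q ≤ κ + 2 * n)
    (hg : ContDiff ℝ 1 (Function.uncurry g)) (hs : suppIn g) (hh : Continuous h)
    (hh2 : IntegrableOn (fun R ↦ (h R / R) ^ 2) (Ioi 0))
    (hX : IsEnveloped α M n X) (hY : IsEnveloped α M n Y)
    (hE : ∀ x ∈ Qdom, E x.1 x.2 = transport g x.1 x.2
      + 9 * α * (α + 2) * (h x.1 * X x.1 x.2 + l * Y x.1 x.2))
    (hψ : ∀ x ∈ Qdom, ψ x.1 x.2 = weight p q x.1 x.2) :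
    inner2 E (fun R β ↦ g R β * ψ R β)
      ≤ (-(3 / 2) + energyConst κ M * α) * norm2 (fun R β ↦ g R β * √(ψ R β)) ^ 2
        + energyConst κ M * α * (l ^ 2 + normR (fun R ↦ h R / R) ^ 2) := by
  have henergy := inner2_transport_add_le hp hq hg hs (by positivity)
    (continuousOn_mul_add_mul hh hX hY)
    (integrableOn_sq_mul_add_mul_mul_weight hκ hκ1 hpκ hqκ hh hh2 hX hY) hE hψ
  have hforcing := setIntegral_sq_mul_add_mul_mul_weight_le (l := l) hκ hκ1 hpκ hqκ hh hh2 hX hY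
  have hcoeff : 9 * α * (α + 2) ≤ 27 * α := by nlinarith
  set J := ∫ β in Ioo 0 (π / 2), angularMajorant κ β with hJdef
  set S := l ^ 2 + normR (fun R ↦ h R / R) ^ 2
  set B := norm2 (fun R β ↦ g R β * √(ψ R β)) ^ 2
  have hJ : 0 ≤ J := integral_angularMajorant_nonneg κ
  calc inner2 E (fun R β ↦ g R β * ψ R β)
      ≤ (-(3 / 2) + 9 * α * (α + 2)) * B + 9 * α * (α + 2) / 4 * (4 * M ^ 2 * S * J) :=
        henergy.trans (by gcongr)
    _ ≤ (-(3 / 2) + 27 * α) * B + 27 * α / 4 * (4 * M ^ 2 * S * J) := by gcongr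
    _ = (-(3 / 2) + energyConst κ M * α) * B + energyConst κ M * α * S
          - 27 * α * (M ^ 2 * J * B + S) := by rw [energyConst, ← hJdef]; ring
    _ ≤ (-(3 / 2) + energyConst κ M * α) * B + energyConst κ M * α * S :=
        sub_le_self _ (by positivity)

end Forced

section Dbeta

variable {α R β : ℝ} {Ω ξ : ℝ → ℝ → ℝ}

lemma hasDerivAt_forcing (hα : 0 ≤ α) (h : ℝ → ℝ) (l : ℝ) (hR : 0 < R) (hβ : β ∈ Ioo 0 (π / 2)) :
    HasDerivAt (forcing α h l R) (h R * deriv (angularTransform α profile R) β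
      + l * deriv (angularTransform α dualProfile R) β) β :=
  ((hasDerivAt_angularTransform_angle hα isRadialProfile_profile.contDiffOn hR
      hβ).differentiableAt.hasDerivAt.const_mul (h R)).add
    ((hasDerivAt_angularTransform_angle hα isRadialProfile_dualProfile.contDiffOn hR
      hβ).differentiableAt.hasDerivAt.const_mul l)

lemma Dbeta_opL3 (hα : 0 < α) (hξ : ContDiff ℝ 2 (Function.uncurry ξ)) (hR : 0 < R)
    (hβ : β ∈ Ioo 0 (π / 2)) :
    Dbeta (opL3 α Ω ξ) R β = transport (Dbeta ξ) R β + 9 * α * (α + 2)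
      * (tL12 Ω R * Dbeta (angularTransform α profile) R β
        + L12 Ω 0 * Dbeta (angularTransform α dualProfile) R β) := by
  have heq : opL3 α Ω ξ R =ᶠ[nhds β] fun b ↦
      transport ξ R b + 9 * α * (α + 2) * forcing α (tL12 Ω) (L12 Ω 0) R b := by
    filter_upwards [isOpen_Ioo.mem_nhds hβ] with b hb using opL3_eq hα hR hb
  have hderiv := ((hasDerivAt_transport hξ R β).differentiableAt.hasDerivAt.add
    ((hasDerivAt_forcing hα.le (tL12 Ω) (L12 Ω 0) hR hβ).const_mul
      (9 * α * (α + 2)))).congr_of_eventuallyEq heq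
  rw [← Dbeta_transport hξ, Dbeta, show deriv (fun b ↦ opL3 α Ω ξ R b) β = _ from hderiv.deriv,
    Dbeta, Dbeta, Dbeta]
  ring

end Dbeta

lemma psi1_eq_weight {x : ℝ × ℝ} (hx : x ∈ Qdom) :
    psi1 x.1 x.2 = weight (99 / 100) (99 / 100) x.1 x.2 := by
  rw [psi1, weight, mul_rpow (sin_pos_of_mem_quadrant hx.2).le (cos_pos_of_mem_quadrant hx.2).le]

lemma psi2_eq_weight (α R β : ℝ) : psi2 α R β = weight (99 / 100) (1 + α / 10) R β :=
  mul_assoc _ _ _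

section Estimates

-- `21` bounds `2 * N * (2 * α + 1)` for `N = 10`, the constant of `dualProfile`.
variable {α α₀ : ℝ} {Ω ξ : ℝ → ℝ → ℝ}

theorem inner2_opL3_le (hα : 0 < α) (hαα₀ : α ≤ α₀) (hα₀ : α₀ < 1 / 200)
    (hΩ : Continuous (Function.uncurry Ω)) (hΩs : suppIn Ω)
    (hξ : ContDiff ℝ 1 (Function.uncurry ξ)) (hξs : suppIn ξ) :
    inner2 (opL3 α Ω ξ) (fun R β ↦ ξ R β * psi1 R β)
      ≤ (-(3 / 2) + energyConst (99 / 100 + 2 * α₀) 21 * α)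
          * norm2 (fun R β ↦ ξ R β * √(psi1 R β)) ^ 2
        + energyConst (99 / 100 + 2 * α₀) 21 * α
          * (L12 Ω 0 ^ 2 + normR (fun R ↦ tL12 Ω R / R) ^ 2) :=
  inner2_transport_add_nonlocal_le (n := 0) (p := 99 / 100) (q := 99 / 100) hα.le (by linarith)
    (by linarith) (by linarith) (by norm_num) (by linarith) (by norm_num)
    (by norm_num; linarith) hξ hξs (continuous_tL12 (integrable_angularMean hΩs hΩ))
    (integrableOn_tL12_div_sq hΩs hΩ)
    ((isRadialProfile_profile.isEnveloped_angularTransform hα.le).mono (by norm_num))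
    ((isRadialProfile_dualProfile.isEnveloped_angularTransform hα.le).mono (by norm_num))
    (fun _ hx ↦ opL3_eq hα hx.1 hx.2) fun _ ↦ psi1_eq_weight

theorem inner2_Dbeta_opL3_le (hα : 0 < α) (hαα₀ : α ≤ α₀) (hα₀ : α₀ < 1 / 200)
    (hΩ : Continuous (Function.uncurry Ω)) (hΩs : suppIn Ω)
    (hξ : ContDiff ℝ 2 (Function.uncurry ξ)) (hξs : suppIn ξ) :
    inner2 (Dbeta (opL3 α Ω ξ)) (fun R β ↦ Dbeta ξ R β * psi2 α R β)
      ≤ (-(3 / 2) + energyConst (99 / 100 + 2 * α₀) 21 * α)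
          * norm2 (fun R β ↦ Dbeta ξ R β * √(psi2 α R β)) ^ 2
        + energyConst (99 / 100 + 2 * α₀) 21 * α
          * (L12 Ω 0 ^ 2 + normR (fun R ↦ tL12 Ω R / R) ^ 2) :=
  inner2_transport_add_nonlocal_le (n := 1) (p := 99 / 100) (q := 1 + α / 10) hα.le (by linarith)
    (by linarith) (by linarith) (by norm_num) (by linarith) (by linarith)
    (by norm_num; linarith) (contDiff_Dbeta (n := 1) hξ)
    (suppIn_Dbeta (hξ.differentiable two_ne_zero) hξs)
    (continuous_tL12 (integrable_angularMean hΩs hΩ)) (integrableOn_tL12_div_sq hΩs hΩ)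
    ((isRadialProfile_profile.isEnveloped_Dbeta_angularTransform hα.le).mono (by linarith))
    ((isRadialProfile_dualProfile.isEnveloped_Dbeta_angularTransform hα.le).mono (by linarith))
    (fun _ hx ↦ Dbeta_opL3 hα hξ hx.1 hx.2) fun _ _ ↦ psi2_eq_weight _ _ _

end Estimates

/-- The threshold `1/200` is where `(sin β) ^ (-99/100 - 2 α)` stops being integrable. -/
theorem weighted_L2_estimate_xi_general {α₀ : ℝ} (hα₀ : α₀ < 1 / 200) :
    ∃ C : ℝ, ∀ α : ℝ, 0 < α → α ≤ α₀ → ∀ Ω ξ : ℝ → ℝ → ℝ,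
      Continuous (Function.uncurry Ω) → suppIn Ω → suppIn ξ →
        (ContDiff ℝ 1 (Function.uncurry ξ) →
          inner2 (opL3 α Ω ξ) (fun R β ↦ ξ R β * psi1 R β)
            ≤ (-(3 / 2) + C * α) * norm2 (fun R β ↦ ξ R β * √(psi1 R β)) ^ 2
              + C * α * (L12 Ω 0 ^ 2 + normR (fun R ↦ tL12 Ω R / R) ^ 2)) ∧
        (ContDiff ℝ 2 (Function.uncurry ξ) →
          inner2 (Dbeta (opL3 α Ω ξ)) (fun R β ↦ Dbeta ξ R β * psi2 α R β)
            ≤ (-(3 / 2) + C * α) * norm2 (fun R β ↦ Dbeta ξ R β * √(psi2 α R β)) ^ 2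
              + C * α * (L12 Ω 0 ^ 2 + normR (fun R ↦ tL12 Ω R / R) ^ 2)) :=
  ⟨energyConst (99 / 100 + 2 * α₀) 21, fun _ hα hαα₀ _ _ hΩ hΩs hξs ↦
    ⟨fun hξ ↦ inner2_opL3_le hα hαα₀ hα₀ hΩ hΩs hξ hξs,
      fun hξ ↦ inner2_Dbeta_opL3_le hα hαα₀ hα₀ hΩ hΩs hξ hξs⟩⟩

/-- weighted `L²` estimates of `ξ` and `D_β ξ`. -/
theorem weighted_L2_estimate_xi :
    ∃ C : ℝ, ∀ α : ℝ, 0 < α → α ≤ 1/1000 →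
      ∀ Ω ξ : ℝ → ℝ → ℝ,
        ContDiff ℝ 2 (Function.uncurry Ω) → ContDiff ℝ 2 (Function.uncurry ξ) →
        suppIn Ω → suppIn ξ →
        (inner2 (opL3 α Ω ξ) (fun R β => ξ R β * psi1 R β)
            ≤ (-(1/3) + C*α) * (norm2 (fun R β => ξ R β * Real.sqrt (psi1 R β)))^2
              + C*α * ((L12 Ω 0)^2 + (normR (fun R => tL12 Ω R / R))^2)) ∧
        (inner2 (Dbeta (opL3 α Ω ξ)) (fun R β => Dbeta ξ R β * psi2 α R β)
            ≤ (-(1/3) + C*α) * (norm2 (fun R β => Dbeta ξ R β * Real.sqrt (psi2 α R β)))^2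
              + C*α * ((L12 Ω 0)^2 + (normR (fun R => tL12 Ω R / R))^2)) := by
  obtain ⟨C, hC⟩ := weighted_L2_estimate_xi_general (α₀ := 1 / 1000) (by norm_num)
  refine ⟨C, fun α hα hα₀ Ω ξ hΩ hξ hΩs hξs ↦ ?_⟩
  obtain ⟨hξ_le, hDβξ_le⟩ := hC α hα hα₀ Ω ξ hΩ.continuous hΩs hξs
  exact ⟨(hξ_le (hξ.of_le one_le_two)).trans (by gcongr (?_ + _) * _ + _; norm_num),
    (hDβξ_le hξ).trans (by gcongr (?_ + _) * _ + _; norm_num)⟩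

end Paper
end
end

section
/- Let Ω be continuous with compact support contained in (0,∞)×(0,π/2), let k ∈ [3/2, 4] and λ > 0. Then ⟨sin(2β) Ω L̃₁₂(Ω), R^{−k}⟩ = −((k−1)/2) ‖L̃₁₂(Ω) R^{−k/2}‖²_{L²(R)}, and ⟨(sin(2β) Ω + λ L̃₁₂(Ω))², R^{−k}⟩ = ⟨R^{−k} sin(2β)², Ω²⟩ − ((k−1)λ − (π/2)λ²) ‖L̃₁₂(Ω) R^{−k/2}‖²_{L²(R)}. -/
open Real MeasureTheory Set

noncomputable section

namespace Paper

/-!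
Write `g(R) = ∫₀^{π/2} sin(2β) Ω(R,β) dβ` and `T = L̃₁₂(Ω)`. The angular variable enters `T` only
through `g`, and `R T' = -g`. Hence `(T² R^{1-k})' = -2 g T R^{-k} + (1-k) T² R^{-k}`, whose
integral over `(0,∞)` is the first identity: the boundary terms vanish because `T` vanishes near
`R = 0` and is bounded, and `k > 1`. Inserting it in the expansion of the square gives the second
identity, the factor `π/2` being the length of the angular interval.
-/

open Filter Topology

theorem integral_mul_mul_rpow_neg_of_hasDerivAt {g T : ℝ → ℝ} {k : ℝ}
    (hT : ∀ R ∈ Ioi (0 : ℝ), HasDerivAt T (-(g R / R)) R)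
    (hgT : IntegrableOn (fun R => g R * T R * R ^ (-k)) (Ioi 0))
    (hTT : IntegrableOn (fun R => T R ^ 2 * R ^ (-k)) (Ioi 0))
    (h_zero : Tendsto (fun R => T R ^ 2 * R ^ (1 - k)) (𝓝[>] 0) (𝓝 0))
    (h_infty : Tendsto (fun R => T R ^ 2 * R ^ (1 - k)) atTop (𝓝 0)) :
    ∫ R in Ioi (0 : ℝ), g R * T R * R ^ (-k)
      = -((k - 1) / 2) * ∫ R in Ioi (0 : ℝ), T R ^ 2 * R ^ (-k) := by
  let u' : ℝ → ℝ := fun R => 2 * T R * -(g R / R)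
  let v' : ℝ → ℝ := fun R => (1 - k) * R ^ (-k)
  have hu : ∀ R ∈ Ioi (0 : ℝ), HasDerivAt (fun R => T R ^ 2) (u' R) R := fun R hR => by
    simpa [u'] using (hT R hR).fun_pow 2
  have hv : ∀ R ∈ Ioi (0 : ℝ), HasDerivAt (fun R => R ^ (1 - k)) (v' R) R := fun R hR => by
    simpa [v'] using Real.hasDerivAt_rpow_const (p := 1 - k) (Or.inl (ne_of_gt hR))
  have huv : EqOn (fun R => u' R * R ^ (1 - k) + T R ^ 2 * v' R)
      (fun R => -2 * (g R * T R * R ^ (-k)) + (1 - k) * (T R ^ 2 * R ^ (-k))) (Ioi 0) := by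
    intro R (hR : 0 < R)
    have hpow : R ^ (1 - k) = R * R ^ (-k) := by
      rw [sub_eq_add_neg, Real.rpow_add hR, Real.rpow_one]
    simp only [u', v', hpow]
    field_simp
  have hint := (hgT.const_mul (-2)).fun_add (hTT.const_mul (1 - k))
  have hparts := integral_Ioi_deriv_mul_eq_sub hu hv
    (IntegrableOn.congr_fun hint huv.symm measurableSet_Ioi) h_zero h_infty
  rw [setIntegral_congr_fun measurableSet_Ioi huv, integral_add (hgT.const_mul _)
    (hTT.const_mul _), integral_const_mul, integral_const_mul] at hparts
  linarith

theorem sq_normR_mul_rpow_neg_half (h : ℝ → ℝ) (k : ℝ) :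
    normR (fun R => h R * R ^ (-k / 2)) ^ 2 = ∫ R in Ioi (0 : ℝ), h R ^ 2 * R ^ (-k) := by
  rw [normR, Real.sq_sqrt (integral_nonneg fun _ => sq_nonneg _)]
  refine setIntegral_congr_fun measurableSet_Ioi fun R (hR : 0 < R) => ?_
  simp only [mul_pow]
  rw [← Real.rpow_mul_natCast hR.le, Nat.cast_ofNat, div_mul_cancel₀ _ two_ne_zero]

theorem integral_add_const_sq {X : Type*} [MeasurableSpace X] {μ : Measure X} [IsFiniteMeasure μ]
    {φ : X → ℝ} (hφ : Integrable φ μ) (hφ2 : Integrable (fun x => φ x ^ 2) μ) (c : ℝ) :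
    ∫ x, (φ x + c) ^ 2 ∂μ
      = ∫ x, φ x ^ 2 ∂μ + 2 * c * ∫ x, φ x ∂μ + μ.real univ * c ^ 2 := by
  have hsq : ∀ x, (φ x + c) ^ 2 = φ x ^ 2 + 2 * c * φ x + c ^ 2 := fun x => by ring
  simp only [hsq]
  rw [integral_add (hφ2.fun_add (hφ.const_mul _)) (integrable_const _),
    integral_add hφ2 (hφ.const_mul _), integral_const_mul, integral_const, smul_eq_mul]

/-- The integral `∫₀^{π/2} f(R,β) dβ` over the angular variable, as a function of `R`. -/
def angularIntegral (f : ℝ → ℝ → ℝ) (R : ℝ) : ℝ := ∫ β in Ioo (0 : ℝ) (π / 2), f R β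

/-- The angular moment `∫₀^{π/2} sin(2β) Ω(R,β) dβ`, through which `L₁₂(Ω)` depends on `Ω`. -/
def sineMoment (Ω : ℝ → ℝ → ℝ) : ℝ → ℝ := angularIntegral fun R β => sin (2 * β) * Ω R β

theorem inner2_radial (f : ℝ → ℝ → ℝ) (w : ℝ → ℝ) :
    inner2 f (fun R _ => w R) = ∫ R in Ioi (0 : ℝ), angularIntegral f R * w R := by
  simp only [inner2, angularIntegral, integral_mul_const]

/-- The class of functions of `(R, β)` for which the angular integrals converge, and the integrals
against `R^p`, `p < -1`, as well. A function `h` of `R` alone is said to be admissible when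
`fun R _ ↦ h R` is. -/
structure IsAdmissible (f : ℝ → ℝ → ℝ) : Prop where
  continuousOn : ContinuousOn (Function.uncurry f) Qdom
  bddDom : BddDom f
  eventually_eq_zero : ∀ᶠ R in 𝓝[>] (0 : ℝ), ∀ β ∈ Ioo (0 : ℝ) (π / 2), f R β = 0

theorem isAdmissible_radial_iff {h : ℝ → ℝ} :
    IsAdmissible (fun R _ => h R) ↔
      ContinuousOn h (Ioi 0) ∧ (∃ C, ∀ R ∈ Ioi (0 : ℝ), |h R| ≤ C) ∧
        ∀ᶠ R in 𝓝[>] (0 : ℝ), h R = 0 := by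
  have hβ : π / 4 ∈ Ioo (0 : ℝ) (π / 2) := ⟨by positivity, by linarith [pi_pos]⟩
  constructor
  · rintro ⟨hc, ⟨C, hC⟩, h0⟩
    exact ⟨hc.comp (f := fun R => (R, π / 4)) (by fun_prop) fun R hR => ⟨hR, hβ⟩,
      ⟨C, fun R hR => hC R hR _ hβ⟩, h0.mono fun R hR => hR _ hβ⟩
  · rintro ⟨hc, ⟨C, hC⟩, h0⟩
    exact ⟨hc.comp continuousOn_fst fun p hp => hp.1, ⟨C, fun R hR _ _ => hC R hR⟩,
      h0.mono fun R hR _ _ => hR⟩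

namespace IsAdmissible

variable {f g : ℝ → ℝ → ℝ} {h : ℝ → ℝ} {R k p : ℝ}

theorem bdd_mul (hf : IsAdmissible f) (hg : ContinuousOn (Function.uncurry g) Qdom)
    (hgb : BddDom g) : IsAdmissible fun R β => g R β * f R β := by
  refine ⟨hg.mul hf.continuousOn, ?_,
    hf.eventually_eq_zero.mono fun R hR β hβ => by rw [hR β hβ, mul_zero]⟩
  obtain ⟨C, hC⟩ := hf.bddDom
  obtain ⟨D, hD⟩ := hgb
  refine ⟨D * C, fun R hR β hβ => ?_⟩
  rw [abs_mul]
  exact mul_le_mul (hD R hR β hβ) (hC R hR β hβ) (abs_nonneg _)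
    ((abs_nonneg _).trans (hD R hR β hβ))

theorem mul (hg : IsAdmissible g) (hf : IsAdmissible f) : IsAdmissible fun R β => g R β * f R β :=
  hf.bdd_mul hg.continuousOn hg.bddDom

theorem sq (hf : IsAdmissible f) : IsAdmissible fun R β => f R β ^ 2 := by
  simpa only [pow_two] using hf.mul hf

theorem sin_mul (hf : IsAdmissible f) : IsAdmissible fun R β => sin (2 * β) * f R β :=
  hf.bdd_mul (g := fun _ β => sin (2 * β)) (by unfold Function.uncurry; fun_prop)
    ⟨1, fun _ _ _ _ => abs_sin_le_one _⟩

theorem aestronglyMeasurable_angular (hf : IsAdmissible f) (hR : 0 < R) :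
    AEStronglyMeasurable (f R) (volume.restrict (Ioo 0 (π / 2))) :=
  (hf.continuousOn.comp (f := fun β => (R, β)) (by fun_prop)
    fun _ hβ => ⟨hR, hβ⟩).aestronglyMeasurable measurableSet_Ioo

theorem integrableOn_angular (hf : IsAdmissible f) (hR : 0 < R) :
    IntegrableOn (f R) (Ioo 0 (π / 2)) := by
  obtain ⟨C, hC⟩ := hf.bddDom
  exact IntegrableOn.of_bound measure_Ioo_lt_top (hf.aestronglyMeasurable_angular hR) C
    (ae_restrict_of_forall_mem measurableSet_Ioo (hC R hR))

protected theorem angularIntegral (hf : IsAdmissible f) :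
    IsAdmissible fun R _ => angularIntegral f R := by
  obtain ⟨C, hC⟩ := hf.bddDom
  refine isAdmissible_radial_iff.2 ⟨?_, ?_, ?_⟩
  · refine continuousOn_of_dominated (bound := fun _ => C)
      (fun R hR => hf.aestronglyMeasurable_angular hR)
      (fun R hR => ae_restrict_of_forall_mem measurableSet_Ioo (hC R hR))
      (integrable_const _) (ae_restrict_of_forall_mem measurableSet_Ioo fun β hβ => ?_)
    exact hf.continuousOn.comp (f := fun R => (R, β)) (by fun_prop) fun R hR => ⟨hR, hβ⟩
  · refine ⟨C * volume.real (Ioo 0 (π / 2)), fun R hR => ?_⟩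
    rw [← Real.norm_eq_abs]
    exact norm_setIntegral_le_of_norm_le_const measure_Ioo_lt_top (hC R hR)
  · exact hf.eventually_eq_zero.mono fun R hR => setIntegral_eq_zero_of_forall_eq_zero hR

protected theorem sineMoment (hf : IsAdmissible f) : IsAdmissible fun R _ => sineMoment f R :=
  hf.sin_mul.angularIntegral

theorem integrableOn_mul_rpow (hh : IsAdmissible fun R _ => h R) (hp : p < -1) :
    IntegrableOn (fun R => h R * R ^ p) (Ioi 0) := by
  obtain ⟨hc, ⟨C, hC⟩, h0⟩ := isAdmissible_radial_iff.1 hh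
  obtain ⟨a, ha, ha0⟩ := mem_nhdsGT_iff_exists_Ioo_subset.1 h0
  have hsub : Ici a ⊆ Ioi 0 := Ici_subset_Ioi.2 ha
  have hpow : IntegrableOn (fun R : ℝ => R ^ p) (Ici a) :=
    (integrableOn_Ici_iff_integrableOn_Ioi).2 (integrableOn_Ioi_rpow_of_lt hp ha)
  have hfar : IntegrableOn (fun R => h R * R ^ p) (Ici a) :=
    hpow.bdd_mul ((hc.mono hsub).aestronglyMeasurable measurableSet_Ici)
      (ae_restrict_of_forall_mem measurableSet_Ici fun R hR => hC R (hsub hR))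
  refine hfar.of_forall_sdiff_eq_zero measurableSet_Ioi fun R hR => ?_
  have : h R = 0 := ha0 ⟨hR.1, not_le.1 hR.2⟩
  rw [this, zero_mul]

theorem tendsto_sq_mul_rpow_nhdsGT_zero (hh : IsAdmissible fun R _ => h R) :
    Tendsto (fun R => h R ^ 2 * R ^ p) (𝓝[>] 0) (𝓝 0) :=
  tendsto_const_nhds.congr' <|
    (isAdmissible_radial_iff.1 hh).2.2.mono fun R hR => by simp [hR]

theorem tendsto_sq_mul_rpow_atTop (hh : IsAdmissible fun R _ => h R) (hp : p < 0) :
    Tendsto (fun R => h R ^ 2 * R ^ p) atTop (𝓝 0) := by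
  obtain ⟨C, hC⟩ := (isAdmissible_radial_iff.1 hh.sq).2.1
  exact bdd_le_mul_tendsto_zero' C ((eventually_gt_atTop 0).mono hC)
    (by simpa using tendsto_rpow_neg_atTop (neg_pos.2 hp))

theorem inner2_add_const_mul_radial_sq (hf : IsAdmissible f)
    (hh : IsAdmissible fun R _ => h R) (hk : 1 < k) (c : ℝ) :
    inner2 (fun R β => (f R β + c * h R) ^ 2) (fun R _ => R ^ (-k))
      = inner2 (fun R β => f R β ^ 2) (fun R _ => R ^ (-k))
        + 2 * c * (∫ R in Ioi (0 : ℝ), angularIntegral f R * h R * R ^ (-k))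
        + π / 2 * c ^ 2 * ∫ R in Ioi (0 : ℝ), h R ^ 2 * R ^ (-k) := by
  have hexpand : EqOn
      (fun R => angularIntegral (fun R β => (f R β + c * h R) ^ 2) R * R ^ (-k))
      (fun R => angularIntegral (fun R β => f R β ^ 2) R * R ^ (-k)
        + 2 * c * (angularIntegral f R * h R * R ^ (-k))
        + π / 2 * c ^ 2 * (h R ^ 2 * R ^ (-k))) (Ioi 0) := by
    intro R hR
    have hlen : (volume.restrict (Ioo 0 (π / 2))).real univ = π / 2 := by
      simp [pi_div_two_pos.le]
    simp only [angularIntegral]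
    rw [integral_add_const_sq (hf.integrableOn_angular hR) (hf.sq.integrableOn_angular hR), hlen]
    ring
  have hk' : -k < -1 := neg_lt_neg hk
  have hff := hf.sq.angularIntegral.integrableOn_mul_rpow hk'
  have hfh := (hf.angularIntegral.mul hh).integrableOn_mul_rpow hk'
  have hhh := hh.sq.integrableOn_mul_rpow hk'
  rw [inner2_radial, inner2_radial, setIntegral_congr_fun measurableSet_Ioi hexpand,
    integral_add (hff.fun_add (hfh.const_mul _)) (hhh.const_mul _),
    integral_add hff (hfh.const_mul _), integral_const_mul, integral_const_mul]

end IsAdmissible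

section TildeL12

variable {Ω : ℝ → ℝ → ℝ} {R k : ℝ}

theorem L12_eq_integral_sineMoment (Ω : ℝ → ℝ → ℝ) (R : ℝ) :
    L12 Ω R = ∫ s in Ioi R, sineMoment Ω s / s := by
  simp only [L12, sineMoment, angularIntegral, integral_div, mul_comm]

theorem tL12_eq_neg_intervalIntegral_s5 (hint : IntegrableOn (fun s => sineMoment Ω s / s) (Ioi 0))
    (hR : 0 ≤ R) : tL12 Ω R = -∫ s in 0..R, sineMoment Ω s / s := by
  rw [← intervalIntegral.integral_Ioi_sub_Ioi' hint (hint.mono_set (Ioi_subset_Ioi hR)), tL12,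
    L12_eq_integral_sineMoment, L12_eq_integral_sineMoment, neg_sub]

theorem abs_tL12_le_s5 (hint : IntegrableOn (fun s => sineMoment Ω s / s) (Ioi 0)) (hR : 0 ≤ R) :
    |tL12 Ω R| ≤ ∫ s in Ioi (0 : ℝ), |sineMoment Ω s / s| := by
  calc |tL12 Ω R| = ‖∫ s in 0..R, sineMoment Ω s / s‖ := by
        rw [tL12_eq_neg_intervalIntegral_s5 hint hR, abs_neg, Real.norm_eq_abs]
    _ ≤ ∫ s in Ioc 0 R, |sineMoment Ω s / s| := by
        rw [intervalIntegral.integral_of_le hR]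
        exact norm_integral_le_integral_norm _
    _ ≤ ∫ s in Ioi (0 : ℝ), |sineMoment Ω s / s| :=
        setIntegral_mono_set hint.norm (Eventually.of_forall fun _ => abs_nonneg _)
          Ioc_subset_Ioi_self.eventuallyLE

theorem hasDerivAt_tL12 (hcont : ContinuousOn (sineMoment Ω) (Ioi 0))
    (hint : IntegrableOn (fun s => sineMoment Ω s / s) (Ioi 0)) (hR : 0 < R) :
    HasDerivAt (tL12 Ω) (-(sineMoment Ω R / R)) R := by
  have hcont' : ContinuousOn (fun s => sineMoment Ω s / s) (Ioi 0) :=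
    hcont.div continuousOn_id fun s hs => ne_of_gt hs
  have hprim : HasDerivAt (fun R => ∫ s in 0..R, sineMoment Ω s / s) (sineMoment Ω R / R) R :=
    intervalIntegral.integral_hasDerivAt_right
      ((intervalIntegrable_iff_integrableOn_Ioc_of_le hR.le).2
        (hint.mono_set Ioc_subset_Ioi_self))
      (hcont'.stronglyMeasurableAtFilter isOpen_Ioi R hR)
      (hcont'.continuousAt (Ioi_mem_nhds hR))
  refine hprim.neg.congr_of_eventuallyEq ?_
  filter_upwards [Ioi_mem_nhds hR] with r hr
  exact tL12_eq_neg_intervalIntegral_s5 hint (le_of_lt hr)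

theorem eventually_tL12_eq_zero (h0 : ∀ᶠ R in 𝓝[>] (0 : ℝ), sineMoment Ω R = 0)
    (hint : IntegrableOn (fun s => sineMoment Ω s / s) (Ioi 0)) :
    ∀ᶠ R in 𝓝[>] (0 : ℝ), tL12 Ω R = 0 := by
  obtain ⟨a, ha, ha0⟩ := mem_nhdsGT_iff_exists_Ioo_subset.1 h0
  filter_upwards [Ioo_mem_nhdsGT ha] with R hR
  rw [tL12_eq_neg_intervalIntegral_s5 hint hR.1.le, intervalIntegral.integral_of_le hR.1.le,
    setIntegral_eq_zero_of_forall_eq_zero, neg_zero]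
  intro s hs
  have : sineMoment Ω s = 0 := ha0 ⟨hs.1, hs.2.trans_lt hR.2⟩
  rw [this, zero_div]

namespace IsAdmissible

protected theorem tL12 (hΩ : IsAdmissible Ω)
    (hint : IntegrableOn (fun s => sineMoment Ω s / s) (Ioi 0)) :
    IsAdmissible fun R _ => tL12 Ω R := by
  obtain ⟨hcont, -, h0⟩ := isAdmissible_radial_iff.1 hΩ.sineMoment
  exact isAdmissible_radial_iff.2
    ⟨fun R hR => (hasDerivAt_tL12 hcont hint hR).continuousAt.continuousWithinAt,
      ⟨_, fun R hR => abs_tL12_le_s5 hint (le_of_lt hR)⟩, eventually_tL12_eq_zero h0 hint⟩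

theorem integral_sineMoment_mul_tL12 (hΩ : IsAdmissible Ω)
    (hint : IntegrableOn (fun s => sineMoment Ω s / s) (Ioi 0)) (hk : 1 < k) :
    ∫ R in Ioi (0 : ℝ), sineMoment Ω R * tL12 Ω R * R ^ (-k)
      = -((k - 1) / 2) * ∫ R in Ioi (0 : ℝ), tL12 Ω R ^ 2 * R ^ (-k) := by
  have hT := hΩ.tL12 hint
  have hcont := (isAdmissible_radial_iff.1 hΩ.sineMoment).1
  exact integral_mul_mul_rpow_neg_of_hasDerivAt (fun R hR => hasDerivAt_tL12 hcont hint hR)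
    ((hΩ.sineMoment.mul hT).integrableOn_mul_rpow (neg_lt_neg hk))
    (hT.sq.integrableOn_mul_rpow (neg_lt_neg hk))
    hT.tendsto_sq_mul_rpow_nhdsGT_zero (hT.tendsto_sq_mul_rpow_atTop (sub_neg.2 hk))

end IsAdmissible

end TildeL12

section CompactSupport

variable {Ω : ℝ → ℝ → ℝ}

theorem suppIn.exists_isCompact_radial (hs : suppIn Ω) :
    ∃ K : Set ℝ, IsCompact K ∧ K ⊆ Ioi 0 ∧ ∀ R ∉ K, ∀ β, Ω R β = 0 := by
  obtain ⟨K, hK, hKQ, h0⟩ := hs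
  exact ⟨Prod.fst '' K, hK.image continuous_fst, image_subset_iff.2 fun p hp => (hKQ hp).1,
    fun R hR β => h0 R β fun hmem => hR (mem_image_of_mem Prod.fst hmem)⟩

theorem suppIn.isAdmissible (hs : suppIn Ω) (hc : Continuous (Function.uncurry Ω)) :
    IsAdmissible Ω := by
  refine ⟨hc.continuousOn, ?_, ?_⟩
  · obtain ⟨K, hK, -, h0⟩ := hs
    have hcs : HasCompactSupport (Function.uncurry Ω) :=
      HasCompactSupport.intro hK fun p hp => h0 p.1 p.2 hp
    obtain ⟨C, hC⟩ := hcs.exists_bound_of_continuous hc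
    exact ⟨C, fun R _ β _ => hC (R, β)⟩
  · obtain ⟨K, hK, hK0, h0⟩ := hs.exists_isCompact_radial
    have hnhds : Kᶜ ∈ 𝓝 (0 : ℝ) :=
      hK.isClosed.isOpen_compl.mem_nhds fun hmem => lt_irrefl (0 : ℝ) (hK0 hmem)
    filter_upwards [nhdsWithin_le_nhds hnhds] with R hR β _ using h0 R hR β

theorem suppIn.integrableOn_sineMoment_div (hs : suppIn Ω)
    (hc : Continuous (Function.uncurry Ω)) :
    IntegrableOn (fun R => sineMoment Ω R / R) (Ioi 0) := by
  obtain ⟨K, hK, hK0, h0⟩ := hs.exists_isCompact_radial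
  have hcont : ContinuousOn (sineMoment Ω) (Ioi 0) :=
    (isAdmissible_radial_iff.1 (hs.isAdmissible hc).sineMoment).1
  have hintK : IntegrableOn (fun R => sineMoment Ω R / R) K :=
    ((hcont.mono hK0).div continuousOn_id fun R hR => ne_of_gt (hK0 hR)).integrableOn_compact hK
  refine hintK.of_forall_sdiff_eq_zero measurableSet_Ioi fun R hR => ?_
  simp [sineMoment, angularIntegral, h0 R hR.2]

end CompactSupport

theorem cancellation_tL12_general {Ω : ℝ → ℝ → ℝ} (hΩ : IsAdmissible Ω)
    (hint : IntegrableOn (fun R => sineMoment Ω R / R) (Ioi 0)) {k : ℝ} (hk : 1 < k) (lam : ℝ) :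
    inner2 (fun R β => sin (2 * β) * Ω R β * tL12 Ω R) (fun R _ => R ^ (-k))
        = -((k - 1) / 2) * normR (fun R => tL12 Ω R * R ^ (-k / 2)) ^ 2 ∧
    inner2 (fun R β => (sin (2 * β) * Ω R β + lam * tL12 Ω R) ^ 2) (fun R _ => R ^ (-k))
        = inner2 (fun R β => R ^ (-k) * sin (2 * β) ^ 2) (fun R β => Ω R β ^ 2)
          - ((k - 1) * lam - π / 2 * lam ^ 2) * normR (fun R => tL12 Ω R * R ^ (-k / 2)) ^ 2 := by
  have hcross := hΩ.integral_sineMoment_mul_tL12 hint hk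
  rw [sq_normR_mul_rpow_neg_half]
  refine ⟨?_, ?_⟩
  · rw [inner2_radial, ← hcross]
    simp only [sineMoment, angularIntegral, integral_mul_const]
  · have hweight : inner2 (fun R β => (sin (2 * β) * Ω R β) ^ 2) (fun R _ => R ^ (-k))
        = inner2 (fun R β => R ^ (-k) * sin (2 * β) ^ 2) (fun R β => Ω R β ^ 2) := by
      simp only [inner2, mul_pow, mul_comm, mul_left_comm]
    rw [hΩ.sin_mul.inner2_add_const_mul_radial_sq (hΩ.tL12 hint) hk, hweight, ← sineMoment, hcross]
    ring

/-- cancellation identities between `Ω` and `L̃₁₂(Ω)`. -/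
theorem cancellation_tL12
    (Ω : ℝ → ℝ → ℝ) (hc : Continuous (Function.uncurry Ω)) (hs : suppIn Ω)
    (k lam : ℝ) (hk : k ∈ Set.Icc (3/2 : ℝ) 4) (hlam : 0 < lam) :
    inner2 (fun R β => Real.sin (2*β) * Ω R β * tL12 Ω R) (fun R _ => R ^ (-k))
        = -((k-1)/2) * (normR (fun R => tL12 Ω R * R ^ (-k/2)))^2 ∧
    inner2 (fun R β => (Real.sin (2*β) * Ω R β + lam * tL12 Ω R)^2) (fun R _ => R ^ (-k))
        = inner2 (fun R β => R ^ (-k) * (Real.sin (2*β))^2) (fun R β => (Ω R β)^2)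
          - ((k-1)*lam - (Real.pi/2)*lam^2) * (normR (fun R => tL12 Ω R * R ^ (-k/2)))^2 := by
  exact cancellation_tL12_general (hs.isAdmissible hc) (hs.integrableOn_sineMoment_div hc)
    (by linarith [hk.1]) lam

end Paper
end
end

section
/- Let χ : [0,∞) → [0,1] be a smooth cutoff function with χ(R) = 1 for R ≤ 1 and χ(R) = 0 for R ≥ 2. There is a constant C, depending only on χ, such that for every continuous Ω on (0,∞)×(0,π/2) for which the respective right-hand sides are finite: (i) sup_{R≥0} |L₁₂(Ω)(R)| ≤ C ‖((1+R)/R) Ω‖₂; (ii) ∫_0^∞ L̃₁₂(Ω)(R)² (R^{−2} + R^{−3}) dR ≤ C ‖((1+R)²/R²) Ω‖₂²; (iii) (∫_0^∞ L₁₂(Ω)(R)² dR)^{1/2} ≤ C ‖Ω‖₂; (iv) for k = 1, 2: ‖((1+R)/R)^k (L₁₂(Ω) − L₁₂(Ω)(0) χ)‖_{L²(R)} ≤ C ‖((1+R)/R)^k Ω‖₂. -/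
open Real MeasureTheory Set

noncomputable section

namespace Paper

open scoped ENNReal

/-!
By Cauchy–Schwarz in `β`, the function `m(R) = ∫₀^{π/2} Ω(R, β) sin(2β) dβ` has weighted `L²` norms
at most those of `Ω`, and `L₁₂(Ω)(R) = ∫_R^∞ m(s) / s ds`. Everything is then one-dimensional. The
uniform bound is Cauchy–Schwarz against `(1 + s)⁻¹`, whose `L²(0, ∞)` norm is `1`. Since
`s ^ (-a) ≤ ((1 + s) / s) ^ k` for `0 ≤ a ≤ k`, the weighted bounds on
`L̃₁₂(Ω)(R) = -∫₀ᴿ m(s) / s ds` and on `L₁₂(Ω)` are Hardy's inequality and its dual, both instances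
of Schur's test with the weight `s ^ (-1 / 2)`. Finally
`L₁₂(Ω) - L₁₂(Ω)(0) χ = χ L̃₁₂(Ω) + (1 - χ) L₁₂(Ω)`, where `(1 + R) / R` is at most `3 / R` on the
support of `χ` and at most `2` on that of `1 - χ`.
-/

section LTwo

variable {α β : Type*} [MeasurableSpace α] [MeasurableSpace β] {μ : Measure α} {ν : Measure β}

lemma eLpNorm_two_sq {ε : Type*} [ENorm ε] (f : α → ε) :
    eLpNorm f 2 μ ^ 2 = ∫⁻ x, ‖f x‖ₑ ^ 2 ∂μ := by
  simpa using eLpNorm_nnreal_pow_eq_lintegral (μ := μ) (f := f) (p := 2) two_ne_zero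

lemma lintegral_mul_le_eLpNorm_two_mul_eLpNorm_two {f g : α → ℝ≥0∞} (hf : AEMeasurable f μ)
    (hg : AEMeasurable g μ) : ∫⁻ x, f x * g x ∂μ ≤ eLpNorm f 2 μ * eLpNorm g 2 μ := by
  simpa [eLpNorm_eq_lintegral_rpow_enorm_toReal two_ne_zero ENNReal.ofNat_ne_top] using
    ENNReal.lintegral_mul_le_Lp_mul_Lq μ Real.HolderConjugate.two_two hf hg

lemma ofReal_sqrt_integral_sq_le_eLpNorm (h : α → ℝ) :
    ENNReal.ofReal √(∫ x, h x ^ 2 ∂μ) ≤ eLpNorm h 2 μ := by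
  rw [← ENNReal.pow_le_pow_left_iff two_ne_zero, eLpNorm_two_sq,
    ← ENNReal.ofReal_pow (sqrt_nonneg _), sq_sqrt (integral_nonneg fun x ↦ sq_nonneg (h x)),
    ← Real.enorm_of_nonneg (integral_nonneg fun x ↦ sq_nonneg (h x))]
  simp_rw [← enorm_pow]
  exact enorm_integral_le_lintegral_enorm _

lemma eLpNorm_two_eq_ofReal_sqrt {h : α → ℝ} (hh : Integrable (fun x ↦ h x ^ 2) μ) :
    eLpNorm h 2 μ = ENNReal.ofReal √(∫ x, h x ^ 2 ∂μ) := by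
  refine (ENNReal.pow_right_strictMono two_ne_zero).injective ?_
  rw [← ENNReal.ofReal_pow (sqrt_nonneg _), sq_sqrt (integral_nonneg fun x ↦ sq_nonneg (h x)),
    ofReal_integral_eq_lintegral_ofReal hh (.of_forall fun x ↦ sq_nonneg (h x)), eLpNorm_two_sq]
  simp_rw [← enorm_pow, Real.enorm_of_nonneg (sq_nonneg _)]

lemma lintegral_mul_sq_le_mul_lintegral_sq_div {k q f : β → ℝ≥0∞} (hk : AEMeasurable k ν)
    (hq : AEMeasurable q ν) (hq₀ : ∀ᵐ y ∂ν, q y ≠ 0) (hq_top : ∀ᵐ y ∂ν, q y ≠ ∞)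
    (hf : AEMeasurable f ν) :
    (∫⁻ y, k y * f y ∂ν) ^ 2 ≤ (∫⁻ y, k y * q y ∂ν) * ∫⁻ y, k y * (f y ^ 2 / q y) ∂ν := by
  have geom_mean : ∀ᵐ y ∂ν, k y * f y =
      (k y * q y) ^ (1 / 2 : ℝ) * (k y * (f y ^ 2 / q y)) ^ (1 / 2 : ℝ) := by
    filter_upwards [hq₀, hq_top] with y hy₀ hy_top
    rw [← ENNReal.mul_rpow_of_nonneg _ _ (by norm_num), mul_mul_mul_comm,
      ENNReal.mul_div_cancel hy₀ hy_top, ← sq, ← mul_pow, ← ENNReal.rpow_natCast,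
      ← ENNReal.rpow_mul]
    norm_num
  have holder := ENNReal.lintegral_mul_norm_pow_le (hk.mul hq) (hk.mul ((hf.pow_const 2).div hq))
    (by norm_num) (by norm_num) (add_halves (1 : ℝ))
  rw [lintegral_congr_ae geom_mean]
  refine (pow_le_pow_left' holder 2).trans_eq ?_
  rw [← ENNReal.mul_rpow_of_nonneg _ _ (by norm_num), ← ENNReal.rpow_natCast, ← ENNReal.rpow_mul]
  norm_num

theorem schur_test [SFinite μ] [SFinite ν] {K : α → β → ℝ≥0∞} {p : α → ℝ≥0∞} {q f : β → ℝ≥0∞}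
    {A B : ℝ≥0∞} (hK : Measurable (Function.uncurry K)) (hp : AEMeasurable p μ)
    (hq : AEMeasurable q ν) (hq₀ : ∀ᵐ y ∂ν, q y ≠ 0) (hq_top : ∀ᵐ y ∂ν, q y ≠ ∞)
    (hf : AEMeasurable f ν)
    (hA : ∀ᵐ x ∂μ, ∫⁻ y, K x y * q y ∂ν ≤ A * p x)
    (hB : ∀ᵐ y ∂ν, ∫⁻ x, K x y * p x ∂μ ≤ B * q y) :
    eLpNorm (fun x ↦ ∫⁻ y, K x y * f y ∂ν) 2 μ ^ 2 ≤ A * B * eLpNorm f 2 ν ^ 2 := by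
  have hKx (x : α) : Measurable (K x) := hK.of_uncurry_left
  have hKy (y : β) : Measurable fun x ↦ K x y := hK.of_uncurry_right
  have hfq : AEMeasurable (fun y ↦ f y ^ 2 / q y) ν := (hf.pow_const 2).div hq
  have hKfq (x : α) : AEMeasurable (fun y ↦ K x y * (f y ^ 2 / q y)) ν :=
    (hKx x).aemeasurable.mul hfq
  have hKp (y : β) : AEMeasurable (fun x ↦ K x y * p x) μ := (hKy y).aemeasurable.mul hp
  have hF : AEMeasurable (Function.uncurry fun x y ↦ p x * (K x y * (f y ^ 2 / q y)))
      (μ.prod ν) := hp.comp_fst.mul (hK.aemeasurable.mul hfq.comp_snd)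
  simp only [eLpNorm_two_sq, enorm_eq_self]
  calc ∫⁻ x, (∫⁻ y, K x y * f y ∂ν) ^ 2 ∂μ
      ≤ ∫⁻ x, A * ∫⁻ y, p x * (K x y * (f y ^ 2 / q y)) ∂ν ∂μ := by
        refine lintegral_mono_ae (hA.mono fun x hx ↦ ?_)
        rw [lintegral_const_mul'' _ (hKfq x), ← mul_assoc]
        exact (lintegral_mul_sq_le_mul_lintegral_sq_div (hKx x).aemeasurable hq hq₀ hq_top
          hf).trans (by gcongr)
    _ = A * ∫⁻ y, (f y ^ 2 / q y) * ∫⁻ x, K x y * p x ∂μ ∂ν := by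
        have hint : AEMeasurable (fun x ↦ ∫⁻ y, p x * (K x y * (f y ^ 2 / q y)) ∂ν) μ :=
          hF.lintegral_prod_right'
        rw [lintegral_const_mul'' _ hint, lintegral_lintegral_swap hF]
        congr! 3 with y
        rw [← lintegral_const_mul'' _ (hKp y)]
        congr! 2 with x
        ring
    _ ≤ A * ∫⁻ y, B * f y ^ 2 ∂ν := by
        gcongr A * ?_
        refine lintegral_mono_ae ?_
        filter_upwards [hB, hq₀, hq_top] with y hy hy₀ hy_top
        calc f y ^ 2 / q y * ∫⁻ x, K x y * p x ∂μ ≤ f y ^ 2 / q y * (B * q y) := by gcongr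
          _ = B * f y ^ 2 := by rw [mul_left_comm, ENNReal.div_mul_cancel hy₀ hy_top]
    _ = A * B * ∫⁻ y, f y ^ 2 ∂ν := by
        rw [lintegral_const_mul'' _ (hf.pow_const 2), mul_assoc]

end LTwo

section Hardy

lemma lintegral_Ioi_ofReal_rpow {a c : ℝ} (ha : a < -1) (hc : 0 < c) :
    ∫⁻ s in Ioi c, ENNReal.ofReal (s ^ a) = ENNReal.ofReal (-c ^ (a + 1) / (a + 1)) := by
  rw [← integral_Ioi_rpow_of_lt ha hc,
    ofReal_integral_eq_lintegral_ofReal (integrableOn_Ioi_rpow_of_lt ha hc)]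
  filter_upwards [self_mem_ae_restrict measurableSet_Ioi] with s hs
  exact rpow_nonneg (hc.trans hs).le _

lemma lintegral_Ioc_ofReal_rpow {a c : ℝ} (ha : -1 < a) (hc : 0 ≤ c) :
    ∫⁻ s in Ioc 0 c, ENNReal.ofReal (s ^ a) = ENNReal.ofReal (c ^ (a + 1) / (a + 1)) := by
  have h := integral_rpow (a := 0) (b := c) (.inl ha)
  rw [zero_rpow (by linarith), sub_zero, intervalIntegral.integral_of_le hc] at h
  rw [← h, ofReal_integral_eq_lintegral_ofReal (intervalIntegral.intervalIntegrable_rpow' ha).1]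
  filter_upwards [self_mem_ae_restrict measurableSet_Ioc] with s hs
  exact rpow_nonneg hs.1.le _

/-- The homogeneous kernel `R ^ (-a) s ^ (a - 1)` on `0 < s ≤ R`, of degree `-1`. Integration in
`s` gives Hardy's operator `f ↦ R ^ (-a) ∫₀ᴿ f` up to the weight `s ^ (1 - a)` on `f`, and
integration in `R` gives its dual. -/
def hardyKernel (a R s : ℝ) : ℝ≥0∞ :=
  if s ≤ R then ENNReal.ofReal (R ^ (-a) * s ^ (a - 1)) else 0

lemma measurable_uncurry_hardyKernel (a : ℝ) : Measurable (Function.uncurry (hardyKernel a)) :=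
  Measurable.ite (measurableSet_le measurable_snd measurable_fst) (by fun_prop) measurable_const

lemma lintegral_hardyKernel_mul (a R : ℝ) (f : ℝ → ℝ≥0∞) :
    ∫⁻ s in Ioi 0, hardyKernel a R s * f s =
      ∫⁻ s in Ioc 0 R, ENNReal.ofReal (R ^ (-a) * s ^ (a - 1)) * f s := by
  rw [← Ioi_inter_Iic, inter_comm, ← setLIntegral_indicator measurableSet_Iic]
  congr! with s
  simp [hardyKernel, indicator_apply]

lemma lintegral_mul_hardyKernel {a s : ℝ} (hs : 0 < s) (f : ℝ → ℝ≥0∞) :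
    ∫⁻ R in Ioi 0, hardyKernel a R s * f R =
      ∫⁻ R in Ioi s, ENNReal.ofReal (R ^ (-a) * s ^ (a - 1)) * f R := by
  rw [setLIntegral_congr (Ioi_ae_eq_Ici (a := s)), ← inter_eq_left.2 (Ici_subset_Ioi.2 hs),
    ← setLIntegral_indicator measurableSet_Ici]
  congr! with R
  simp [hardyKernel, indicator_apply]

lemma lintegral_hardyKernel_mul_rpow {a R : ℝ} (ha : 1 / 2 < a) (hR : 0 < R) :
    ∫⁻ s in Ioi 0, hardyKernel a R s * ENNReal.ofReal (s ^ (-(1 / 2) : ℝ)) =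
      ENNReal.ofReal (a - 1 / 2)⁻¹ * ENNReal.ofReal (R ^ (-(1 / 2) : ℝ)) := by
  have split : ∀ s ∈ Ioc 0 R,
      ENNReal.ofReal (R ^ (-a) * s ^ (a - 1)) * ENNReal.ofReal (s ^ (-(1 / 2) : ℝ)) =
        ENNReal.ofReal (R ^ (-a)) * ENNReal.ofReal (s ^ (a - 3 / 2)) := fun s hs ↦ by
    have hs₀ := hs.1
    rw [← ENNReal.ofReal_mul (by positivity), ← ENNReal.ofReal_mul (by positivity), mul_assoc,
      ← rpow_add hs₀]
    ring_nf
  rw [lintegral_hardyKernel_mul, setLIntegral_congr_fun measurableSet_Ioc split,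
    lintegral_const_mul _ (by fun_prop), lintegral_Ioc_ofReal_rpow (by linarith) hR.le,
    ← ENNReal.ofReal_mul (by positivity), ← ENNReal.ofReal_mul (inv_nonneg.2 (by linarith)),
    mul_div_assoc', ← rpow_add hR]
  ring_nf

lemma lintegral_rpow_mul_hardyKernel {a s : ℝ} (ha : 1 / 2 < a) (hs : 0 < s) :
    ∫⁻ R in Ioi 0, hardyKernel a R s * ENNReal.ofReal (R ^ (-(1 / 2) : ℝ)) =
      ENNReal.ofReal (a - 1 / 2)⁻¹ * ENNReal.ofReal (s ^ (-(1 / 2) : ℝ)) := by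
  have split : ∀ R ∈ Ioi s,
      ENNReal.ofReal (R ^ (-a) * s ^ (a - 1)) * ENNReal.ofReal (R ^ (-(1 / 2) : ℝ)) =
        ENNReal.ofReal (s ^ (a - 1)) * ENNReal.ofReal (R ^ (-a - 1 / 2)) := fun R hR ↦ by
    have hR₀ : 0 < R := hs.trans hR
    rw [← ENNReal.ofReal_mul (by positivity), ← ENNReal.ofReal_mul (by positivity), mul_right_comm,
      ← rpow_add hR₀]
    ring_nf
  rw [lintegral_mul_hardyKernel hs, setLIntegral_congr_fun measurableSet_Ioi split,
    lintegral_const_mul _ (by fun_prop), lintegral_Ioi_ofReal_rpow (by linarith) hs,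
    ← ENNReal.ofReal_mul (by positivity), ← ENNReal.ofReal_mul (inv_nonneg.2 (by linarith)),
    show -a - 1 / 2 + 1 = -(a - 1 / 2) by ring, neg_div_neg_eq, mul_div_assoc', ← rpow_add hs]
  ring_nf

lemma ae_restrict_Ioi_ofReal_rpow_ne_zero (b : ℝ) :
    ∀ᵐ s ∂volume.restrict (Ioi 0), ENNReal.ofReal (s ^ b) ≠ 0 := by
  filter_upwards [self_mem_ae_restrict measurableSet_Ioi] with s hs
  exact (ENNReal.ofReal_pos.2 (rpow_pos_of_pos hs b)).ne'

lemma eLpNorm_lintegral_hardyKernel_mul_le {a : ℝ} (ha : 1 / 2 < a) {f : ℝ → ℝ≥0∞}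
    (hf : AEMeasurable f (volume.restrict (Ioi 0))) :
    eLpNorm (fun R ↦ ∫⁻ s in Ioi 0, hardyKernel a R s * f s) 2 (volume.restrict (Ioi 0)) ≤
      ENNReal.ofReal (a - 1 / 2)⁻¹ * eLpNorm f 2 (volume.restrict (Ioi 0)) := by
  have hp : Measurable fun x : ℝ ↦ ENNReal.ofReal (x ^ (-(1 / 2) : ℝ)) := by fun_prop
  rw [← ENNReal.pow_le_pow_left_iff two_ne_zero, mul_pow, sq (ENNReal.ofReal _)]
  refine schur_test (measurable_uncurry_hardyKernel a) hp.aemeasurable hp.aemeasurable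
    (ae_restrict_Ioi_ofReal_rpow_ne_zero _) (.of_forall fun _ ↦ ENNReal.ofReal_ne_top) hf ?_ ?_
  · filter_upwards [self_mem_ae_restrict measurableSet_Ioi] with R hR
    exact (lintegral_hardyKernel_mul_rpow ha hR).le
  · filter_upwards [self_mem_ae_restrict measurableSet_Ioi] with s hs
    exact (lintegral_rpow_mul_hardyKernel ha hs).le

lemma eLpNorm_lintegral_mul_hardyKernel_le {a : ℝ} (ha : 1 / 2 < a) {f : ℝ → ℝ≥0∞}
    (hf : AEMeasurable f (volume.restrict (Ioi 0))) :
    eLpNorm (fun s ↦ ∫⁻ R in Ioi 0, hardyKernel a R s * f R) 2 (volume.restrict (Ioi 0)) ≤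
      ENNReal.ofReal (a - 1 / 2)⁻¹ * eLpNorm f 2 (volume.restrict (Ioi 0)) := by
  have hp : Measurable fun x : ℝ ↦ ENNReal.ofReal (x ^ (-(1 / 2) : ℝ)) := by fun_prop
  rw [← ENNReal.pow_le_pow_left_iff two_ne_zero, mul_pow, sq (ENNReal.ofReal _)]
  refine schur_test ((measurable_uncurry_hardyKernel a).comp measurable_swap) hp.aemeasurable
    hp.aemeasurable (ae_restrict_Ioi_ofReal_rpow_ne_zero _)
    (.of_forall fun _ ↦ ENNReal.ofReal_ne_top) hf ?_ ?_
  · filter_upwards [self_mem_ae_restrict measurableSet_Ioi] with s hs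
    exact (lintegral_rpow_mul_hardyKernel ha hs).le
  · filter_upwards [self_mem_ae_restrict measurableSet_Ioi] with R hR
    exact (lintegral_hardyKernel_mul_rpow ha hR).le

theorem hardy_inequality {a : ℝ} (ha : 1 / 2 < a) {g : ℝ → ℝ≥0∞}
    (hg : AEMeasurable g (volume.restrict (Ioi 0))) :
    eLpNorm (fun R ↦ ENNReal.ofReal (R ^ (-a)) * ∫⁻ s in Ioc 0 R, g s) 2
        (volume.restrict (Ioi 0)) ≤
      ENNReal.ofReal (a - 1 / 2)⁻¹ *
        eLpNorm (fun s ↦ ENNReal.ofReal (s ^ (1 - a)) * g s) 2 (volume.restrict (Ioi 0)) := by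
  refine le_of_eq_of_le (eLpNorm_congr_ae ?_)
    (eLpNorm_lintegral_hardyKernel_mul_le ha (by fun_prop))
  filter_upwards [self_mem_ae_restrict measurableSet_Ioi] with R (hR : 0 < R)
  rw [lintegral_hardyKernel_mul, ← lintegral_const_mul' _ _ ENNReal.ofReal_ne_top]
  refine setLIntegral_congr_fun measurableSet_Ioc fun s hs ↦ ?_
  have hs₀ := hs.1
  have cancel : s ^ (a - 1) * s ^ (1 - a) = 1 := by rw [← rpow_add hs₀]; simp
  rw [← mul_assoc, ← ENNReal.ofReal_mul (by positivity), mul_assoc, cancel, mul_one]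

theorem dual_hardy_inequality {a : ℝ} (ha : a < 1 / 2) {g : ℝ → ℝ≥0∞}
    (hg : AEMeasurable g (volume.restrict (Ioi 0))) :
    eLpNorm (fun R ↦ ENNReal.ofReal (R ^ (-a)) * ∫⁻ s in Ioi R, g s) 2
        (volume.restrict (Ioi 0)) ≤
      ENNReal.ofReal (1 / 2 - a)⁻¹ *
        eLpNorm (fun s ↦ ENNReal.ofReal (s ^ (1 - a)) * g s) 2 (volume.restrict (Ioi 0)) := by
  rw [show 1 / 2 - a = 1 - a - 1 / 2 by ring]
  refine le_of_eq_of_le (eLpNorm_congr_ae ?_)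
    (eLpNorm_lintegral_mul_hardyKernel_le (by linarith) (by fun_prop))
  filter_upwards [self_mem_ae_restrict measurableSet_Ioi] with R (hR : 0 < R)
  rw [lintegral_mul_hardyKernel hR, ← lintegral_const_mul' _ _ ENNReal.ofReal_ne_top]
  refine setLIntegral_congr_fun measurableSet_Ioi fun s hs ↦ ?_
  have hs₀ : 0 < s := hR.trans hs
  have cancel : s ^ (-(1 - a)) * R ^ (1 - a - 1) * s ^ (1 - a) = R ^ (-a) := by
    rw [mul_right_comm, ← rpow_add hs₀]; simp
  rw [← mul_assoc, ← ENNReal.ofReal_mul (by positivity), cancel]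

end Hardy

section AngularMoment

/-- The radial function `R ↦ ∫₀^{π/2} Ω(R, β) sin(2β) dβ`, the only feature of `Ω` on which
`L₁₂(Ω)` depends. -/
def angularMoment (Ω : ℝ → ℝ → ℝ) (R : ℝ) : ℝ := ∫ β in Ioo 0 (π / 2), Ω R β * sin (2 * β)

lemma L12_eq_integral_angularMoment (Ω : ℝ → ℝ → ℝ) (R : ℝ) :
    L12 Ω R = ∫ s in Ioi R, angularMoment Ω s / s := by
  simp_rw [L12, angularMoment, integral_div]

lemma angularMoment_mul (v : ℝ → ℝ) (Ω : ℝ → ℝ → ℝ) (R : ℝ) :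
    angularMoment (fun R β ↦ v R * Ω R β) R = v R * angularMoment Ω R := by
  simp_rw [angularMoment, mul_assoc, integral_const_mul]

lemma volume_restrict_Qdom :
    volume.restrict Qdom = (volume.restrict (Ioi 0)).prod (volume.restrict (Ioo 0 (π / 2))) := by
  rw [Qdom, Measure.volume_eq_prod, Measure.prod_restrict]

lemma eLpNorm_sin_two_mul_le_one :
    eLpNorm (fun β ↦ sin (2 * β)) 2 (volume.restrict (Ioo 0 (π / 2))) ≤ 1 := by
  have integral_sq : ∫ β in Ioo 0 (π / 2), sin (2 * β) ^ 2 = π / 4 := by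
    rw [← integral_Ioc_eq_integral_Ioo, ← intervalIntegral.integral_of_le (by positivity),
      intervalIntegral.integral_comp_mul_left (fun x ↦ sin x ^ 2) two_ne_zero, integral_sin_sq]
    rw [mul_zero, mul_div_cancel₀ _ two_ne_zero, sin_zero, sin_pi, smul_eq_mul]
    ring
  have integrable_sq : IntegrableOn (fun β ↦ sin (2 * β) ^ 2) (Ioo 0 (π / 2)) :=
    (by fun_prop : Continuous fun β ↦ sin (2 * β) ^ 2).integrableOn_Icc.mono_set Ioo_subset_Icc_self
  rw [eLpNorm_two_eq_ofReal_sqrt integrable_sq, integral_sq, ENNReal.ofReal_le_one, sqrt_le_one]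
  linarith [pi_le_four]

lemma enorm_angularMoment_sq_le {Ω : ℝ → ℝ → ℝ} {R : ℝ}
    (hΩ : AEStronglyMeasurable (Ω R) (volume.restrict (Ioo 0 (π / 2)))) :
    ‖angularMoment Ω R‖ₑ ^ 2 ≤ ∫⁻ β in Ioo 0 (π / 2), ‖Ω R β‖ₑ ^ 2 := by
  rw [← eLpNorm_two_sq]
  gcongr
  calc ‖angularMoment Ω R‖ₑ ≤ ∫⁻ β in Ioo 0 (π / 2), ‖Ω R β‖ₑ * ‖sin (2 * β)‖ₑ := by
        simp_rw [← enorm_mul]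
        exact enorm_integral_le_lintegral_enorm _
    _ ≤ eLpNorm (Ω R) 2 (volume.restrict (Ioo 0 (π / 2))) *
          eLpNorm (fun β ↦ sin (2 * β)) 2 (volume.restrict (Ioo 0 (π / 2))) := by
        rw [← eLpNorm_enorm (Ω R), ← eLpNorm_enorm fun β ↦ sin (2 * β)]
        exact lintegral_mul_le_eLpNorm_two_mul_eLpNorm_two hΩ.enorm (by fun_prop)
    _ ≤ eLpNorm (Ω R) 2 (volume.restrict (Ioo 0 (π / 2))) :=
        mul_le_of_le_one_right' eLpNorm_sin_two_mul_le_one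

variable {Ω : ℝ → ℝ → ℝ}

lemma aestronglyMeasurable_angularMoment
    (hΩ : AEStronglyMeasurable (Function.uncurry Ω) (volume.restrict Qdom)) :
    AEStronglyMeasurable (angularMoment Ω) (volume.restrict (Ioi 0)) := by
  rw [volume_restrict_Qdom] at hΩ
  have hsin : Continuous fun p : ℝ × ℝ ↦ sin (2 * p.2) := by fun_prop
  exact (hΩ.mul hsin.aestronglyMeasurable).integral_prod_right'

lemma eLpNorm_angularMoment_le
    (hΩ : AEStronglyMeasurable (Function.uncurry Ω) (volume.restrict Qdom)) :
    eLpNorm (angularMoment Ω) 2 (volume.restrict (Ioi 0)) ≤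
      eLpNorm (Function.uncurry Ω) 2 (volume.restrict Qdom) := by
  rw [volume_restrict_Qdom] at hΩ ⊢
  rw [← ENNReal.pow_le_pow_left_iff two_ne_zero, eLpNorm_two_sq, eLpNorm_two_sq,
    lintegral_prod _ (hΩ.enorm.pow_const 2)]
  exact lintegral_mono_ae (hΩ.prodMk_left.mono fun R hR ↦ enorm_angularMoment_sq_le hR)

lemma eLpNorm_uncurry_eq_ofReal_norm2 {f : ℝ → ℝ → ℝ} (hf : Integrable2 fun R β ↦ f R β ^ 2) :
    eLpNorm (Function.uncurry f) 2 (volume.restrict Qdom) = ENNReal.ofReal (norm2 f) := by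
  have inner2_eq : inner2 f f = ∫ p in Qdom, Function.uncurry f p ^ 2 := by
    simp_rw [inner2, ← sq]
    exact (setIntegral_prod _ hf).symm
  rw [norm2, inner2_eq]
  exact eLpNorm_two_eq_ofReal_sqrt hf

end AngularMoment

section Radial

lemma aestronglyMeasurable_integral_Ioi {f : ℝ → ℝ}
    (hf : AEStronglyMeasurable f (volume.restrict (Ioi 0))) :
    AEStronglyMeasurable (fun R ↦ ∫ s in Ioi R, f s) (volume.restrict (Ioi 0)) := by
  have hind : AEStronglyMeasurable ({p : ℝ × ℝ | p.1 < p.2}.indicator fun p ↦ f p.2)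
      ((volume.restrict (Ioi 0)).prod (volume.restrict (Ioi 0))) :=
    hf.comp_snd.indicator (measurableSet_lt measurable_fst measurable_snd)
  refine hind.integral_prod_right'.congr ?_
  filter_upwards [self_mem_ae_restrict measurableSet_Ioi] with R (hR : 0 < R)
  calc ∫ s in Ioi 0, {p : ℝ × ℝ | p.1 < p.2}.indicator (fun p ↦ f p.2) (R, s)
      = ∫ s in Ioi 0, (Ioi R).indicator f s := rfl
    _ = ∫ s in Ioi R, f s := by
      rw [setIntegral_indicator measurableSet_Ioi, inter_eq_right.2 (Ioi_subset_Ioi hR.le)]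

lemma eLpNorm_inv_one_add_Ioi :
    eLpNorm (fun s : ℝ ↦ ENNReal.ofReal (1 + s)⁻¹) 2 (volume.restrict (Ioi 0)) = 1 := by
  refine (ENNReal.pow_right_strictMono two_ne_zero).injective ?_
  have translate : ∫⁻ s in Ioi 0, ENNReal.ofReal ((1 + s) ^ (-2 : ℝ)) =
      ∫⁻ s in Ioi (1 : ℝ), ENNReal.ofReal (s ^ (-2 : ℝ)) := by
    rw [← (measurePreserving_add_left volume 1).setLIntegral_comp_preimage_emb
      (measurableEmbedding_addLeft 1) (fun s ↦ ENNReal.ofReal (s ^ (-2 : ℝ))),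
      preimage_const_add_Ioi, sub_self]
  calc eLpNorm (fun s : ℝ ↦ ENNReal.ofReal (1 + s)⁻¹) 2 (volume.restrict (Ioi 0)) ^ 2
      = ∫⁻ s in Ioi 0, ENNReal.ofReal ((1 + s) ^ (-2 : ℝ)) := by
        rw [eLpNorm_two_sq]
        refine setLIntegral_congr_fun measurableSet_Ioi fun s (hs : 0 < s) ↦ ?_
        rw [enorm_eq_self, ← ENNReal.ofReal_pow (by positivity), rpow_neg (by positivity), inv_pow]
        norm_cast
    _ = 1 ^ 2 := by
        rw [translate, lintegral_Ioi_ofReal_rpow (by norm_num) one_pos]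
        norm_num

lemma one_le_one_add_div_self {s : ℝ} (hs : 0 < s) : 1 ≤ (1 + s) / s := by
  rw [one_le_div hs]; linarith

lemma rpow_neg_le_one_add_div_self_pow {a s : ℝ} {k : ℕ} (ha₀ : 0 ≤ a) (hak : a ≤ k)
    (hs : 0 < s) : s ^ (-a) ≤ ((1 + s) / s) ^ k := by
  calc s ^ (-a) = s⁻¹ ^ a := by rw [rpow_neg hs.le, inv_rpow hs.le]
    _ ≤ ((1 + s) / s) ^ a := by
        refine rpow_le_rpow (by positivity) ?_ ha₀
        rw [inv_eq_one_div]; gcongr; linarith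
    _ ≤ ((1 + s) / s) ^ k := by
        rw [← rpow_natCast]
        exact rpow_le_rpow_of_exponent_le (one_le_one_add_div_self hs) hak

variable {Ω : ℝ → ℝ → ℝ}

lemma aemeasurable_angularMoment_div
    (hΩ : AEStronglyMeasurable (Function.uncurry Ω) (volume.restrict Qdom)) :
    AEMeasurable (fun s ↦ angularMoment Ω s / s) (volume.restrict (Ioi 0)) :=
  (aestronglyMeasurable_angularMoment hΩ).aemeasurable.div aemeasurable_id

lemma eLpNorm_mul_angularMoment_le {v : ℝ → ℝ} (hv : Measurable v)
    (hΩ : AEStronglyMeasurable (Function.uncurry Ω) (volume.restrict Qdom))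
    (hI : Integrable2 fun R β ↦ (v R * Ω R β) ^ 2) :
    eLpNorm (fun R ↦ v R * angularMoment Ω R) 2 (volume.restrict (Ioi 0)) ≤
      ENNReal.ofReal (norm2 fun R β ↦ v R * Ω R β) := by
  have hvΩ : AEStronglyMeasurable (Function.uncurry fun R β ↦ v R * Ω R β)
      (volume.restrict Qdom) := (hv.comp measurable_fst).aestronglyMeasurable.mul hΩ
  rw [← eLpNorm_uncurry_eq_ofReal_norm2 hI, ← funext (angularMoment_mul v Ω)]
  exact eLpNorm_angularMoment_le hvΩ

lemma eLpNorm_rpow_mul_angularMoment_div_le {a : ℝ} {k : ℕ} (ha₀ : 0 ≤ a) (hak : a ≤ k)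
    (hΩ : AEStronglyMeasurable (Function.uncurry Ω) (volume.restrict Qdom))
    (hI : Integrable2 fun R β ↦ (((1 + R) / R) ^ k * Ω R β) ^ 2) :
    eLpNorm (fun s ↦ ENNReal.ofReal (s ^ (1 - a)) * ‖angularMoment Ω s / s‖ₑ) 2
        (volume.restrict (Ioi 0)) ≤
      ENNReal.ofReal (norm2 fun R β ↦ ((1 + R) / R) ^ k * Ω R β) := by
  refine (eLpNorm_mono_enorm_ae ?_).trans (eLpNorm_mul_angularMoment_le (by fun_prop) hΩ hI)
  filter_upwards [self_mem_ae_restrict measurableSet_Ioi] with s (hs : 0 < s)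
  have cancel : s ^ (1 - a) * (angularMoment Ω s / s) = s ^ (-a) * angularMoment Ω s := by
    rw [mul_div_left_comm, ← rpow_sub_one hs.ne', mul_comm]; ring_nf
  rw [enorm_eq_self, ← Real.enorm_of_nonneg (by positivity), ← enorm_mul, cancel, enorm_mul,
    enorm_mul]
  gcongr
  rw [enorm_le_iff_norm_le, Real.norm_of_nonneg (by positivity),
    Real.norm_of_nonneg (by positivity)]
  exact rpow_neg_le_one_add_div_self_pow ha₀ hak hs

lemma lintegral_enorm_angularMoment_div_le {k : ℕ} (hk : 1 ≤ k)
    (hΩ : AEStronglyMeasurable (Function.uncurry Ω) (volume.restrict Qdom))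
    (hI : Integrable2 fun R β ↦ (((1 + R) / R) ^ k * Ω R β) ^ 2) :
    ∫⁻ s in Ioi 0, ‖angularMoment Ω s / s‖ₑ ≤
      ENNReal.ofReal (norm2 fun R β ↦ ((1 + R) / R) ^ k * Ω R β) := by
  set f : ℝ → ℝ := fun s ↦ ((1 + s) / s) ^ k * angularMoment Ω s
  have hf : AEMeasurable f (volume.restrict (Ioi 0)) :=
    (by fun_prop : Measurable fun s : ℝ ↦ ((1 + s) / s) ^ k).aemeasurable.mul
      (aestronglyMeasurable_angularMoment hΩ).aemeasurable
  calc ∫⁻ s in Ioi 0, ‖angularMoment Ω s / s‖ₑ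
      ≤ ∫⁻ s in Ioi 0, ‖f s‖ₑ * ENNReal.ofReal (1 + s)⁻¹ := by
        refine setLIntegral_mono' measurableSet_Ioi fun s (hs : 0 < s) ↦ ?_
        have cancel : angularMoment Ω s / s = (1 + s) / s * angularMoment Ω s * (1 + s)⁻¹ := by
          field_simp
        rw [← Real.enorm_of_nonneg (by positivity), cancel, enorm_mul, enorm_mul, enorm_mul]
        gcongr
        rw [enorm_le_iff_norm_le, norm_pow, Real.norm_of_nonneg (by positivity)]
        exact le_self_pow₀ (one_le_one_add_div_self hs) (by omega)
    _ ≤ eLpNorm f 2 (volume.restrict (Ioi 0)) *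
          eLpNorm (fun s : ℝ ↦ ENNReal.ofReal (1 + s)⁻¹) 2 (volume.restrict (Ioi 0)) := by
        rw [← eLpNorm_enorm f]
        exact lintegral_mul_le_eLpNorm_two_mul_eLpNorm_two hf.enorm (by fun_prop)
    _ ≤ ENNReal.ofReal (norm2 fun R β ↦ ((1 + R) / R) ^ k * Ω R β) := by
        rw [eLpNorm_inv_one_add_Ioi, mul_one]
        exact eLpNorm_mul_angularMoment_le (by fun_prop) hΩ hI

lemma aestronglyMeasurable_L12
    (hΩ : AEStronglyMeasurable (Function.uncurry Ω) (volume.restrict Qdom)) :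
    AEStronglyMeasurable (L12 Ω) (volume.restrict (Ioi 0)) := by
  rw [funext (L12_eq_integral_angularMoment Ω)]
  exact aestronglyMeasurable_integral_Ioi (aemeasurable_angularMoment_div hΩ).aestronglyMeasurable

lemma enorm_L12_le (Ω : ℝ → ℝ → ℝ) (R : ℝ) :
    ‖L12 Ω R‖ₑ ≤ ∫⁻ s in Ioi R, ‖angularMoment Ω s / s‖ₑ := by
  rw [L12_eq_integral_angularMoment]
  exact enorm_integral_le_lintegral_enorm _

lemma enorm_tL12_le {R : ℝ} (hint : IntegrableOn (fun s ↦ angularMoment Ω s / s) (Ioi 0))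
    (hR : 0 ≤ R) : ‖tL12 Ω R‖ₑ ≤ ∫⁻ s in Ioc 0 R, ‖angularMoment Ω s / s‖ₑ := by
  rw [tL12, ← enorm_neg, neg_sub, L12_eq_integral_angularMoment, L12_eq_integral_angularMoment,
    intervalIntegral.integral_Ioi_sub_Ioi hint hR, intervalIntegral.integral_of_le hR]
  exact enorm_integral_le_lintegral_enorm _

lemma integrableOn_angularMoment_div {k : ℕ} (hk : 1 ≤ k)
    (hΩ : AEStronglyMeasurable (Function.uncurry Ω) (volume.restrict Qdom))
    (hI : Integrable2 fun R β ↦ (((1 + R) / R) ^ k * Ω R β) ^ 2) :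
    IntegrableOn (fun s ↦ angularMoment Ω s / s) (Ioi 0) :=
  ⟨(aemeasurable_angularMoment_div hΩ).aestronglyMeasurable,
    (lintegral_enorm_angularMoment_div_le hk hΩ hI).trans_lt ENNReal.ofReal_lt_top⟩

lemma eLpNorm_L12_le {k : ℕ}
    (hΩ : AEStronglyMeasurable (Function.uncurry Ω) (volume.restrict Qdom))
    (hI : Integrable2 fun R β ↦ (((1 + R) / R) ^ k * Ω R β) ^ 2) :
    eLpNorm (L12 Ω) 2 (volume.restrict (Ioi 0)) ≤
      ENNReal.ofReal (2 * norm2 fun R β ↦ ((1 + R) / R) ^ k * Ω R β) := by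
  have hardy := dual_hardy_inequality one_half_pos (aemeasurable_angularMoment_div hΩ).enorm
  simp only [neg_zero, rpow_zero, ENNReal.ofReal_one, one_mul, sub_zero, inv_div, div_one]
    at hardy
  rw [ENNReal.ofReal_mul zero_le_two]
  refine (eLpNorm_mono_enorm fun R ↦ enorm_L12_le Ω R).trans (hardy.trans ?_)
  gcongr
  simpa using eLpNorm_rpow_mul_angularMoment_div_le le_rfl k.cast_nonneg hΩ hI

lemma eLpNorm_rpow_mul_tL12_le {a : ℝ} {k : ℕ} (ha : 1 / 2 < a) (hak : a ≤ k)
    (hΩ : AEStronglyMeasurable (Function.uncurry Ω) (volume.restrict Qdom))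
    (hI : Integrable2 fun R β ↦ (((1 + R) / R) ^ k * Ω R β) ^ 2) :
    eLpNorm (fun R ↦ R ^ (-a) * tL12 Ω R) 2 (volume.restrict (Ioi 0)) ≤
      ENNReal.ofReal ((a - 1 / 2)⁻¹ * norm2 fun R β ↦ ((1 + R) / R) ^ k * Ω R β) := by
  have hk : 1 ≤ k := Nat.cast_pos (α := ℝ).1 (by linarith)
  have hint := integrableOn_angularMoment_div hk hΩ hI
  rw [ENNReal.ofReal_mul (inv_nonneg.2 (by linarith))]
  refine (eLpNorm_mono_enorm_ae ?_).trans
    ((hardy_inequality ha (aemeasurable_angularMoment_div hΩ).enorm).trans ?_)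
  · filter_upwards [self_mem_ae_restrict measurableSet_Ioi] with R (hR : 0 < R)
    rw [enorm_mul, Real.enorm_of_nonneg (by positivity), enorm_eq_self]
    gcongr
    exact enorm_tL12_le hint hR.le
  · gcongr
    exact eLpNorm_rpow_mul_angularMoment_div_le (by linarith) hak hΩ hI

end Radial

section Estimates

variable {Ω : ℝ → ℝ → ℝ}

lemma norm2_nonneg (f : ℝ → ℝ → ℝ) : 0 ≤ norm2 f := sqrt_nonneg _

lemma normR_le_of_eLpNorm_le {h : ℝ → ℝ} {c : ℝ} (hc : 0 ≤ c)
    (hh : eLpNorm h 2 (volume.restrict (Ioi 0)) ≤ ENNReal.ofReal c) : normR h ≤ c :=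
  (ENNReal.ofReal_le_ofReal_iff hc).1 ((ofReal_sqrt_integral_sq_le_eLpNorm h).trans hh)

lemma abs_L12_le {R : ℝ} {k : ℕ} (hk : 1 ≤ k) (hR : 0 ≤ R)
    (hΩ : AEStronglyMeasurable (Function.uncurry Ω) (volume.restrict Qdom))
    (hI : Integrable2 fun R β ↦ (((1 + R) / R) ^ k * Ω R β) ^ 2) :
    |L12 Ω R| ≤ norm2 fun R β ↦ ((1 + R) / R) ^ k * Ω R β := by
  rw [← ENNReal.ofReal_le_ofReal_iff (norm2_nonneg _), ← Real.enorm_eq_ofReal_abs]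
  exact (enorm_L12_le Ω R).trans ((lintegral_mono_set (Ioi_subset_Ioi hR)).trans
    (lintegral_enorm_angularMoment_div_le hk hΩ hI))

lemma normR_L12_le {k : ℕ} (hΩ : AEStronglyMeasurable (Function.uncurry Ω) (volume.restrict Qdom))
    (hI : Integrable2 fun R β ↦ (((1 + R) / R) ^ k * Ω R β) ^ 2) :
    normR (L12 Ω) ≤ 2 * norm2 fun R β ↦ ((1 + R) / R) ^ k * Ω R β :=
  normR_le_of_eLpNorm_le (mul_nonneg zero_le_two (norm2_nonneg _)) (eLpNorm_L12_le hΩ hI)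

lemma sq_mul_inv_sq_add_inv_cube {R : ℝ} (hR : 0 < R) (x : ℝ) :
    x ^ 2 * ((R ^ 2)⁻¹ + (R ^ 3)⁻¹) = (R ^ (-1 : ℝ) * x) ^ 2 + (R ^ (-(3 / 2) : ℝ) * x) ^ 2 := by
  have sq_three_halves : (R ^ (-(3 / 2) : ℝ)) ^ 2 = (R ^ 3)⁻¹ := by
    rw [← rpow_mul_natCast hR.le, ← rpow_natCast, ← rpow_neg hR.le]
    norm_num
  rw [mul_pow, mul_pow, sq_three_halves, rpow_neg_one, inv_pow]
  ring

lemma integral_tL12_sq_mul_le {k : ℕ} (hk : 2 ≤ k)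
    (hΩ : AEStronglyMeasurable (Function.uncurry Ω) (volume.restrict Qdom))
    (hI : Integrable2 fun R β ↦ (((1 + R) / R) ^ k * Ω R β) ^ 2) :
    ∫ R in Ioi 0, tL12 Ω R ^ 2 * ((R ^ 2)⁻¹ + (R ^ 3)⁻¹) ≤
      5 * (norm2 fun R β ↦ ((1 + R) / R) ^ k * Ω R β) ^ 2 := by
  have hk' : (2 : ℝ) ≤ k := mod_cast hk
  have bound_one := eLpNorm_rpow_mul_tL12_le (a := 1) (by norm_num) (by linarith) hΩ hI
  have bound_three_halves :=
    eLpNorm_rpow_mul_tL12_le (a := 3 / 2) (by norm_num) (by linarith) hΩ hI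
  set N := norm2 fun R β ↦ ((1 + R) / R) ^ k * Ω R β
  have hN : 0 ≤ N := norm2_nonneg _
  have htL : AEStronglyMeasurable (tL12 Ω) (volume.restrict (Ioi 0)) :=
    (aestronglyMeasurable_L12 hΩ).sub aestronglyMeasurable_const
  have hmeas : AEStronglyMeasurable (fun R ↦ R ^ (-1 : ℝ) * tL12 Ω R) (volume.restrict (Ioi 0)) :=
    (by fun_prop : Measurable fun R : ℝ ↦ R ^ (-1 : ℝ)).aestronglyMeasurable.mul htL
  rw [← ENNReal.ofReal_le_ofReal_iff (by positivity), ← Real.enorm_of_nonneg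
    (setIntegral_nonneg measurableSet_Ioi fun R (hR : 0 < R) ↦ by positivity)]
  calc ‖∫ R in Ioi 0, tL12 Ω R ^ 2 * ((R ^ 2)⁻¹ + (R ^ 3)⁻¹)‖ₑ
      ≤ ∫⁻ R in Ioi 0, ‖tL12 Ω R ^ 2 * ((R ^ 2)⁻¹ + (R ^ 3)⁻¹)‖ₑ :=
        enorm_integral_le_lintegral_enorm _
    _ = ∫⁻ R in Ioi 0, (‖R ^ (-1 : ℝ) * tL12 Ω R‖ₑ ^ 2 +
          ‖R ^ (-(3 / 2) : ℝ) * tL12 Ω R‖ₑ ^ 2) := by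
        refine setLIntegral_congr_fun measurableSet_Ioi fun R (hR : 0 < R) ↦ ?_
        rw [sq_mul_inv_sq_add_inv_cube hR, ← enorm_pow, ← enorm_pow,
          Real.enorm_of_nonneg (by positivity), Real.enorm_of_nonneg (by positivity),
          Real.enorm_of_nonneg (by positivity),
          ENNReal.ofReal_add (by positivity) (by positivity)]
    _ = eLpNorm (fun R ↦ R ^ (-1 : ℝ) * tL12 Ω R) 2 (volume.restrict (Ioi 0)) ^ 2 +
          eLpNorm (fun R ↦ R ^ (-(3 / 2) : ℝ) * tL12 Ω R) 2 (volume.restrict (Ioi 0)) ^ 2 := by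
        rw [lintegral_add_left' (hmeas.enorm.pow_const 2), eLpNorm_two_sq, eLpNorm_two_sq]
    _ ≤ ENNReal.ofReal ((1 - 1 / 2)⁻¹ * N) ^ 2 + ENNReal.ofReal ((3 / 2 - 1 / 2)⁻¹ * N) ^ 2 := by
        gcongr
    _ = ENNReal.ofReal (5 * N ^ 2) := by
        rw [← ENNReal.ofReal_pow (by positivity), ← ENNReal.ofReal_pow (by positivity),
          ← ENNReal.ofReal_add (by positivity) (by positivity)]
        ring_nf

lemma one_add_div_self_pow_mul_le_three_pow_mul {c R : ℝ} (k : ℕ) (hc : c ∈ Icc 0 1)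
    (h : 2 ≤ R → c = 0) (hR : 0 < R) :
    ((1 + R) / R) ^ k * c ≤ 3 ^ k * R ^ (-k : ℝ) := by
  obtain hR₂ | hR₂ := le_total 2 R
  · rw [h hR₂, mul_zero]; positivity
  calc ((1 + R) / R) ^ k * c ≤ ((1 + R) / R) ^ k := mul_le_of_le_one_right (by positivity) hc.2
    _ ≤ (3 / R) ^ k := by gcongr; linarith
    _ = 3 ^ k * R ^ (-k : ℝ) := by rw [div_pow, rpow_neg hR.le, rpow_natCast, div_eq_mul_inv]

lemma one_add_div_self_pow_mul_one_sub_le_two_pow {c R : ℝ} (k : ℕ) (hc : c ∈ Icc 0 1)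
    (h : R ≤ 1 → c = 1) (hR : 0 < R) :
    ((1 + R) / R) ^ k * (1 - c) ≤ 2 ^ k := by
  obtain hR₁ | hR₁ := le_total R 1
  · rw [h hR₁, sub_self, mul_zero]; positivity
  calc ((1 + R) / R) ^ k * (1 - c) ≤ ((1 + R) / R) ^ k :=
        mul_le_of_le_one_right (by positivity) (by linarith [hc.1])
    _ ≤ 2 ^ k := by
        gcongr
        rw [div_le_iff₀ hR]; linarith

lemma norm_mul_L12_sub_mul_le {c R : ℝ} (k : ℕ) (hc : c ∈ Icc 0 1)
    (hc₁ : R ≤ 1 → c = 1) (hc₂ : 2 ≤ R → c = 0) (hR : 0 < R) :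
    ‖((1 + R) / R) ^ k * (L12 Ω R - L12 Ω 0 * c)‖ ≤
      3 ^ k * ‖R ^ (-k : ℝ) * tL12 Ω R‖ + 2 ^ k * ‖L12 Ω R‖ := by
  have convex_comb : ((1 + R) / R) ^ k * (L12 Ω R - L12 Ω 0 * c) =
      ((1 + R) / R) ^ k * c * tL12 Ω R + ((1 + R) / R) ^ k * (1 - c) * L12 Ω R := by
    rw [tL12]; ring
  have hw : 0 ≤ ((1 + R) / R) ^ k := by positivity
  rw [convex_comb, norm_mul (R ^ _), ← mul_assoc, Real.norm_of_nonneg (rpow_nonneg hR.le _)]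
  refine (norm_add_le _ _).trans ?_
  rw [norm_mul _ (tL12 Ω R), norm_mul _ (L12 Ω R), Real.norm_of_nonneg (mul_nonneg hw hc.1),
    Real.norm_of_nonneg (mul_nonneg hw (sub_nonneg.2 hc.2))]
  exact add_le_add
    (mul_le_mul_of_nonneg_right (one_add_div_self_pow_mul_le_three_pow_mul k hc hc₂ hR)
      (norm_nonneg _))
    (mul_le_mul_of_nonneg_right (one_add_div_self_pow_mul_one_sub_le_two_pow k hc hc₁ hR)
      (norm_nonneg _))

lemma normR_mul_L12_sub_mul_le {χ : ℝ → ℝ} (hχ : ∀ R, χ R ∈ Icc 0 1) (hχ₁ : ∀ R ≤ 1, χ R = 1)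
    (hχ₂ : ∀ R, 2 ≤ R → χ R = 0) {k : ℕ} (hk : 1 ≤ k)
    (hΩ : AEStronglyMeasurable (Function.uncurry Ω) (volume.restrict Qdom))
    (hI : Integrable2 fun R β ↦ (((1 + R) / R) ^ k * Ω R β) ^ 2) :
    normR (fun R ↦ ((1 + R) / R) ^ k * (L12 Ω R - L12 Ω 0 * χ R)) ≤
      2 * (3 ^ k + 2 ^ k) * norm2 fun R β ↦ ((1 + R) / R) ^ k * Ω R β := by
  have hk' : (1 : ℝ) ≤ k := mod_cast hk
  have hN : 0 ≤ norm2 fun R β ↦ ((1 + R) / R) ^ k * Ω R β := norm2_nonneg _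
  have inv_le_two : ((k : ℝ) - 1 / 2)⁻¹ ≤ 2 := inv_le_of_inv_le₀ two_pos (by linarith)
  have near := (eLpNorm_rpow_mul_tL12_le (by linarith) le_rfl hΩ hI).trans
    (ENNReal.ofReal_le_ofReal (mul_le_mul_of_nonneg_right inv_le_two hN))
  have far := eLpNorm_L12_le hΩ hI
  set N := norm2 fun R β ↦ ((1 + R) / R) ^ k * Ω R β
  have hL := aestronglyMeasurable_L12 hΩ
  have hnear : AEStronglyMeasurable (fun R ↦ R ^ (-k : ℝ) * tL12 Ω R) (volume.restrict (Ioi 0)) :=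
    (by fun_prop : Measurable fun R : ℝ ↦ R ^ (-k : ℝ)).aestronglyMeasurable.mul
      (hL.sub aestronglyMeasurable_const)
  refine normR_le_of_eLpNorm_le (by positivity) ?_
  calc eLpNorm (fun R ↦ ((1 + R) / R) ^ k * (L12 Ω R - L12 Ω 0 * χ R)) 2
        (volume.restrict (Ioi 0))
      ≤ eLpNorm ((fun R ↦ 3 ^ k * ‖R ^ (-k : ℝ) * tL12 Ω R‖) + fun R ↦ 2 ^ k * ‖L12 Ω R‖) 2
          (volume.restrict (Ioi 0)) := by
        refine eLpNorm_mono_ae_real ?_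
        filter_upwards [self_mem_ae_restrict measurableSet_Ioi] with R hR
        exact norm_mul_L12_sub_mul_le k (hχ R) (hχ₁ R) (hχ₂ R) hR
    _ ≤ eLpNorm (fun R ↦ 3 ^ k * ‖R ^ (-k : ℝ) * tL12 Ω R‖) 2 (volume.restrict (Ioi 0)) +
          eLpNorm (fun R ↦ 2 ^ k * ‖L12 Ω R‖) 2 (volume.restrict (Ioi 0)) :=
        eLpNorm_add_le (hnear.norm.const_mul _) (hL.norm.const_mul _) one_le_two
    _ ≤ ENNReal.ofReal (3 ^ k) * ENNReal.ofReal (2 * N) +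
          ENNReal.ofReal (2 ^ k) * ENNReal.ofReal (2 * N) := by
        refine add_le_add
          ((eLpNorm_le_mul_eLpNorm_of_ae_le_mul (.of_forall fun R ↦ ?_) 2).trans
            (mul_le_mul_right near _))
          ((eLpNorm_le_mul_eLpNorm_of_ae_le_mul (.of_forall fun R ↦ ?_) 2).trans
            (mul_le_mul_right far _))
        all_goals exact (Real.norm_of_nonneg (by positivity)).le
    _ = ENNReal.ofReal (2 * (3 ^ k + 2 ^ k) * N) := by
        rw [← ENNReal.ofReal_mul (by positivity), ← ENNReal.ofReal_mul (by positivity),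
          ← ENNReal.ofReal_add (by positivity) (by positivity)]
        ring_nf

end Estimates

theorem L12_estimates_general (m : ℕ) :
    ∃ C : ℝ, ∀ χ : ℝ → ℝ, (∀ R, χ R ∈ Icc 0 1) → (∀ R ≤ 1, χ R = 1) →
      (∀ R, 2 ≤ R → χ R = 0) → ∀ Ω : ℝ → ℝ → ℝ,
      AEStronglyMeasurable (Function.uncurry Ω) (volume.restrict Qdom) →
      (Integrable2 (fun R β ↦ ((1 + R) / R * Ω R β) ^ 2) →
        ∀ R, 0 ≤ R → |L12 Ω R| ≤ C * norm2 (fun R β ↦ (1 + R) / R * Ω R β)) ∧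
      (Integrable2 (fun R β ↦ ((1 + R) ^ 2 / R ^ 2 * Ω R β) ^ 2) →
        (∫ R in Ioi 0, tL12 Ω R ^ 2 * ((R ^ 2)⁻¹ + (R ^ 3)⁻¹)) ≤
          C * (norm2 fun R β ↦ (1 + R) ^ 2 / R ^ 2 * Ω R β) ^ 2) ∧
      (Integrable2 (fun R β ↦ Ω R β ^ 2) → normR (L12 Ω) ≤ C * norm2 Ω) ∧
      ∀ k, 1 ≤ k → k ≤ m → Integrable2 (fun R β ↦ (((1 + R) / R) ^ k * Ω R β) ^ 2) →
        normR (fun R ↦ ((1 + R) / R) ^ k * (L12 Ω R - L12 Ω 0 * χ R)) ≤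
          C * norm2 fun R β ↦ ((1 + R) / R) ^ k * Ω R β := by
  have enlarge {x c y : ℝ} (h : x ≤ c * y) (hc : c ≤ 2 * (3 ^ m + 2 ^ m) + 5) (hy : 0 ≤ y) :
      x ≤ (2 * (3 ^ m + 2 ^ m) + 5) * y := h.trans (mul_le_mul_of_nonneg_right hc hy)
  have hm : (0 : ℝ) ≤ 2 * (3 ^ m + 2 ^ m) := by positivity
  refine ⟨2 * (3 ^ m + 2 ^ m) + 5, fun χ hχ hχ₁ hχ₂ Ω hΩ ↦
    ⟨fun hI R hR ↦ ?_, fun hI ↦ ?_, fun hI ↦ ?_, fun k hk hkm hI ↦ ?_⟩⟩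
  · exact enlarge (c := 1) (by simpa using abs_L12_le (k := 1) le_rfl hR hΩ (by simpa using hI))
      (by linarith) (norm2_nonneg _)
  · simp only [← div_pow] at hI ⊢
    exact enlarge (integral_tL12_sq_mul_le le_rfl hΩ hI) (by linarith) (sq_nonneg _)
  · exact enlarge (c := 2) (by simpa using normR_L12_le (k := 0) hΩ (by simpa using hI))
      (by linarith) (norm2_nonneg _)
  · refine enlarge (normR_mul_L12_sub_mul_le hχ hχ₁ hχ₂ hk hΩ hI) ?_ (norm2_nonneg _)
    have three_pow_le : (3 : ℝ) ^ k ≤ 3 ^ m := pow_le_pow_right₀ (by norm_num) hkm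
    have two_pow_le : (2 : ℝ) ^ k ≤ 2 ^ m := pow_le_pow_right₀ (by norm_num) hkm
    linarith

/-- basic estimates of `L₁₂(Ω)`. -/
theorem L12_estimates
    (χ : ℝ → ℝ) (hχsm : ContDiff ℝ (⊤ : ℕ∞) χ)
    (hχ01 : ∀ R : ℝ, χ R ∈ Set.Icc (0:ℝ) 1)
    (hχ1 : ∀ R : ℝ, R ≤ 1 → χ R = 1) (hχ2 : ∀ R : ℝ, 2 ≤ R → χ R = 0) :
    ∃ C : ℝ, ∀ Ω : ℝ → ℝ → ℝ, Continuous (Function.uncurry Ω) →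
      (Integrable2 (fun R β => ((1+R)/R * Ω R β)^2) →
        ∀ R : ℝ, 0 ≤ R → |L12 Ω R| ≤ C * norm2 (fun R β => (1+R)/R * Ω R β)) ∧
      (Integrable2 (fun R β => ((1+R)^2/R^2 * Ω R β)^2) →
        (∫ R in Set.Ioi (0:ℝ), (tL12 Ω R)^2 * ((R^2)⁻¹ + (R^3)⁻¹))
          ≤ C * (norm2 (fun R β => (1+R)^2/R^2 * Ω R β))^2) ∧
      (Integrable2 (fun R β => (Ω R β)^2) → normR (L12 Ω) ≤ C * norm2 Ω) ∧
      (∀ k : ℕ, k = 1 ∨ k = 2 →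
        Integrable2 (fun R β => (((1+R)/R)^k * Ω R β)^2) →
        normR (fun R => ((1+R)/R)^k * (L12 Ω R - L12 Ω 0 * χ R))
          ≤ C * norm2 (fun R β => ((1+R)/R)^k * Ω R β)) := by
  obtain ⟨C, hC⟩ := L12_estimates_general 2
  exact ⟨C, fun Ω hΩ ↦ (hC χ hχ01 hχ1 hχ2 Ω hΩ.aestronglyMeasurable).imp_right <|
    .imp_right <| .imp_right fun cutoff_bound k hk ↦ cutoff_bound k (by omega) (by omega)⟩

end Paper
end
end
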